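/- arXiv:1102.4199 — 2 statements merged into one kernel-verified Lean document; each statement's English description precedes it below -/
import Mathlib

section
/- Let (λ_n)_{n∈ℕ} be a strictly increasing enumeration of all eigenvalues of the boundary problem with γ₀ = γ₁ = 2/b for the equation −y'' − λρy = 0 with weight ρ the distributional derivative of the Cantor-type self-similar function P with parameters κ, a, b, and let (μ_n)_{n∈ℕ} be a strictly increasing enumeration of all eigenvalues of the problem with γ₀ = γ₁ = 2a/b for the same equation. Then for every n ∈ ℕ one has λ_{κ(n+1)−1} = (κ/a)·μ_n. -/
open MeasureTheory

/-- A continuous function `f : [0,1] → ℝ` is a *self-similar function of Cantor type*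
with parameters `κ`, `a`, `b` if `f 0 = 0`, `f 1 = 1`, `f` is constant on each interval
`(α_{2k-1}, α_{2k})` for `k ∈ {1, …, κ-1}` (where `α_{2k} = k(a+b)`, `α_{2k+1} = α_{2k} + a`),
and for each `k ∈ {0, …, κ-1}` the function `x ↦ κ·f(α_{2k} + a·x)` differs from `f`
by an additive constant. -/
def CantorType (κ : ℕ) (a b : ℝ) (f : ℝ → ℝ) : Prop :=
  ContinuousOn f (Set.Icc 0 1) ∧ f 0 = 0 ∧ f 1 = 1 ∧
  (∀ k : ℕ, 1 ≤ k → k ≤ κ - 1 →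
    ∃ c : ℝ, ∀ x ∈ Set.Ioo (((k : ℝ) - 1) * (a + b) + a) ((k : ℝ) * (a + b)), f x = c) ∧
  (∀ k : ℕ, k ≤ κ - 1 → ∃ c : ℝ, ∀ x ∈ Set.Icc (0 : ℝ) 1,
    (κ : ℝ) * f ((k : ℝ) * (a + b) + a * x) = f x + c)

/-- `lam` is an eigenvalue of the boundary value problem
`-y'' - λ ρ y = 0`, `y⁽¹⁾(0) - γ₀ y(0) = 0`, `y⁽¹⁾(1) + γ₁ y(1) = 0`, where `ρ` is the
distributional derivative of the function whose Lebesgue–Stieltjes measure is `μ`: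
there are continuous `y, g : [0,1] → ℝ`, `y` not identically zero, with
`y(x) = y(0) + ∫₀ˣ g`, `g(x) = g(0) - λ ∫_{[0,x]} y dμ`, and
`g(0) - γ₀ y(0) = 0`, `g(1) + γ₁ y(1) = 0`. -/
def IsEigen (μ : Measure ℝ) (γ₀ γ₁ lam : ℝ) : Prop :=
  ∃ y g : ℝ → ℝ, ContinuousOn y (Set.Icc 0 1) ∧ ContinuousOn g (Set.Icc 0 1) ∧
    (∃ x ∈ Set.Icc (0 : ℝ) 1, y x ≠ 0) ∧
    (∀ x ∈ Set.Icc (0 : ℝ) 1, y x = y 0 + ∫ t in (0 : ℝ)..x, g t) ∧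
    (∀ x ∈ Set.Icc (0 : ℝ) 1, g x = g 0 - lam * ∫ t in Set.Icc (0 : ℝ) x, y t ∂μ) ∧
    g 0 - γ₀ * y 0 = 0 ∧ g 1 + γ₁ * y 1 = 0

/-!
Put the Cauchy data of a solution in the form `(y, y')` and let `T ν` be the transfer matrix of
`-y'' = ν ρ y` over `[0, 1]`. For `r > 0` the problem with `γ₀ = γ₁ = 1 / r` has eigenvalues the
zeros of the upper right entry of `S r * T ν * S r`, where `S r` is the shear `y ↦ y + r y'`, which
is also the transfer matrix of a massless interval of length `r`.

Over `[0, 1]` a solution with parameter `λ` passes through `κ` copies of `[0, 1]` shrunk by `a`,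
with parameter `ν = a λ / κ`, separated by `κ - 1` gaps, each of which contributes a shear. Sharing
every gap evenly between its two neighbours, and adding the half gaps provided by `γ₀ = γ₁ = 2 / b`
at both ends, makes the total transfer matrix, in the coordinates `(y, a y')`, the power `M ^ κ` of
the matrix `M` which belongs to `ν` and `γ₀ = γ₁ = 2 a / b`. As `det M = 1`, the upper right entry
of `M ^ κ` is that of `M` times the Chebyshev polynomial `S (κ - 1)` at `tr M`, all of whose `κ - 1`
roots lie in `(-2, 2)`.

The Lagrange identity makes `tr M` strictly monotone in `ν` wherever `|tr M| < 2`, with sign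
opposite to that of the upper right entry, while `|tr M| ≥ 2` at the zeros of that entry. Hence
between two consecutive zeros, and below the first, `tr M` crosses `(-2, 2)` exactly once, so that
each `μ_n` is preceded by `κ - 1` further values of `ν` for every `μ_k` with `k ≤ n`.
-/

open Set Filter Topology Matrix

section Counting

theorem injOn_inter_preimage_of_deriv_neg {f : ℝ → ℝ} {s t : Set ℝ} (hf : Differentiable ℝ f)
    (hs : s.OrdConnected) (hneg : ∀ x ∈ s, f x ∈ t → deriv f x < 0) :
    InjOn f (s ∩ f ⁻¹' t) := by
  suffices hne : ∀ x ∈ s ∩ f ⁻¹' t, ∀ y ∈ s ∩ f ⁻¹' t, x < y → f x ≠ f y by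
    intro x hx y hy hfxy
    by_contra hxy
    rcases lt_or_gt_of_ne hxy with hlt | hlt
    · exact hne x hx y hy hlt hfxy
    · exact hne y hy x hx hlt hfxy.symm
  intro x hx y hy hxy hfxy
  have hsub : Icc x y ⊆ s := hs.out hx.1 hy.1
  have hle : ∀ ⦃z⦄, z ∈ Icc x y → f z ≤ f x :=
    image_le_of_deriv_right_lt_deriv_boundary' (f' := deriv f) hf.continuous.continuousOn
      (fun z _ => (hf z).hasDerivAt.hasDerivWithinAt) le_rfl continuousOn_const
      (fun z _ => (hasDerivAt_const z (f x)).hasDerivWithinAt)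
      fun z hz hfz => hneg z (hsub (Ico_subset_Icc_self hz)) (hfz ▸ hx.2)
  have hsign : ∀ᶠ z in 𝓝 y, SignType.sign (f z - f y) = SignType.sign (y - z) :=
    eventually_nhdsWithin_sign_eq_of_deriv_neg (f := fun z => f z - f y)
      (by simpa using hneg y hy.1 hy.2) (sub_self _)
  obtain ⟨z, hz, hzsign⟩ :=
    ((eventually_mem_set.2 (Ioo_mem_nhdsLT hxy)).and (hsign.filter_mono nhdsWithin_le_nhds)).exists
  rw [sign_pos (sub_pos.2 hz.2), sign_eq_one_iff, ← hfxy, sub_pos] at hzsign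
  exact (hle (Ioo_subset_Icc_self hz)).not_gt hzsign

theorem pos_or_neg_on_Ioo {f : ℝ → ℝ} {u v : ℝ} (hf : Continuous f)
    (hne : ∀ x ∈ Ioo u v, f x ≠ 0) :
    (∀ x ∈ Ioo u v, 0 < f x) ∨ ∀ x ∈ Ioo u v, 0 < -f x := by
  by_contra! h
  obtain ⟨⟨x, hx, hfx⟩, y, hy, hfy⟩ := h
  obtain ⟨z, hz, hfz⟩ := isPreconnected_Ioo.intermediate_value hx hy hf.continuousOn
    ⟨hfx, neg_nonpos.1 hfy⟩
  exact hne z hz hfz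

theorem encard_range_inter_Iio {α : Type*} [LinearOrder α] {f : ℕ → α} (hf : StrictMono f)
    (n : ℕ) : (range f ∩ Iio (f n)).encard = n := by
  have himage : range f ∩ Iio (f n) = f '' {i | i < n} := by
    ext x
    constructor
    · rintro ⟨⟨i, rfl⟩, hi⟩
      exact ⟨i, hf.lt_iff_lt.1 hi, rfl⟩
    · rintro ⟨i, hi, rfl⟩
      exact ⟨⟨i, rfl⟩, hf hi⟩
  rw [himage, hf.injective.encard_image, Nat.encard_range]

theorem encard_inter_Iio_of_encard_inter_Ioo {α : Type*} [LinearOrder α] {s : Set α} {f : ℕ → α}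
    {n : ℕ∞} (hf : StrictMono f) (hmem : ∀ m, f m ∈ s) (hzero : (s ∩ Iio (f 0)).encard = n)
    (hsucc : ∀ m, (s ∩ Ioo (f m) (f (m + 1))).encard = n) (m : ℕ) :
    (s ∩ Iio (f m)).encard = (n + 1) * m + n := by
  induction m with
  | zero => simpa using hzero
  | succ m ih =>
    have hsplit : s ∩ Iio (f (m + 1)) =
        (s ∩ Iio (f m)) ∪ ({f m} ∪ (s ∩ Ioo (f m) (f (m + 1)))) := by
      ext x
      have hlt : f m < f (m + 1) := hf m.lt_succ_self
      have hm : f m ∈ s := hmem m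
      simp only [mem_inter_iff, mem_union, mem_Iio, mem_Ioo, mem_singleton_iff]
      grind
    have hdisj : Disjoint (s ∩ Iio (f m)) ({f m} ∪ (s ∩ Ioo (f m) (f (m + 1)))) := by
      rw [Set.disjoint_left]
      rintro x ⟨-, hx⟩ (rfl | hx')
      · exact lt_irrefl _ hx
      · exact lt_asymm hx hx'.2.1
    rw [hsplit, encard_union_eq hdisj, encard_union_eq (by simp), ih, hsucc, encard_singleton]
    push_cast
    ring

/-- The properties of Hill's equation that determine the order of its eigenvalues: `Δ` plays the
role of the discriminant (the trace of a monodromy matrix of determinant one, as a function of the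
spectral parameter) and `q` that of the upper right entry of the monodromy matrix. -/
structure IsHillPair (q Δ : ℝ → ℝ) : Prop where
  differentiable_entry : Differentiable ℝ q
  differentiable_discriminant : Differentiable ℝ Δ
  two_le_abs : ∀ ⦃ν⦄, q ν = 0 → 2 ≤ |Δ ν|
  mul_deriv_pos : ∀ ⦃ν⦄, q ν = 0 → 0 < Δ ν * deriv q ν
  mul_deriv_neg : ∀ ⦃ν⦄, |Δ ν| < 2 → q ν * deriv Δ ν < 0

namespace IsHillPair

variable {q Δ : ℝ → ℝ} {u v : ℝ} {R : Set ℝ}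

protected theorem neg (h : IsHillPair q Δ) : IsHillPair (-q) (-Δ) where
  differentiable_entry := h.differentiable_entry.neg
  differentiable_discriminant := h.differentiable_discriminant.neg
  two_le_abs ν hν := by simpa using h.two_le_abs (neg_eq_zero.1 hν)
  mul_deriv_pos ν hν := by simpa [deriv.neg] using h.mul_deriv_pos (neg_eq_zero.1 hν)
  mul_deriv_neg ν hν := by
    simpa [deriv.neg] using h.mul_deriv_neg (ν := ν) (by simpa using hν)

theorem discriminant_le_of_pos (h : IsHillPair q Δ) (huv : u < v)
    (hpos : ∀ x ∈ Ioo u v, 0 < q x) (hv : q v = 0) : Δ v ≤ -2 := by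
  rcases le_abs'.1 (h.two_le_abs hv) with hle | hge
  · exact hle
  have hderiv : 0 < deriv q v := pos_of_mul_pos_right (h.mul_deriv_pos hv) (by linarith)
  obtain ⟨x, hx, hsign⟩ := ((eventually_mem_set.2 (Ioo_mem_nhdsLT huv)).and
    ((eventually_nhdsWithin_sign_eq_of_deriv_pos hderiv hv).filter_mono nhdsWithin_le_nhds)).exists
  rw [sign_pos (hpos x hx), sign_neg (sub_neg.2 hx.2)] at hsign
  contradiction

theorem le_discriminant_of_pos (h : IsHillPair q Δ) (huv : u < v)
    (hpos : ∀ x ∈ Ioo u v, 0 < q x) (hu : q u = 0) : 2 ≤ Δ u := by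
  rcases le_abs'.1 (h.two_le_abs hu) with hle | hge
  swap
  · exact hge
  have hderiv : deriv q u < 0 := by
    have := h.mul_deriv_pos hu
    by_contra! hnonneg
    nlinarith
  obtain ⟨x, hx, hsign⟩ := ((eventually_mem_set.2 (Ioo_mem_nhdsGT huv)).and
    ((eventually_nhdsWithin_sign_eq_of_deriv_neg hderiv hu).filter_mono nhdsWithin_le_nhds)).exists
  rw [sign_pos (hpos x hx), sign_neg (sub_neg.2 hx.1)] at hsign
  contradiction

theorem bijOn_discriminant_of_pos (h : IsHillPair q Δ) (huv : u < v)
    (hpos : ∀ x ∈ Ioo u v, 0 < q x) (hu : 2 ≤ Δ u) (hv : Δ v ≤ -2) :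
    BijOn Δ (Ioo u v ∩ Δ ⁻¹' Ioo (-2) 2) (Ioo (-2) 2) := by
  refine ⟨fun x hx => hx.2, ?_, fun c hc => ?_⟩
  · refine injOn_inter_preimage_of_deriv_neg h.differentiable_discriminant ordConnected_Ioo
      fun x hx hΔx => ?_
    exact neg_of_mul_neg_right (h.mul_deriv_neg (abs_lt.2 hΔx)) (hpos x hx).le
  · obtain ⟨x, hx, rfl⟩ := intermediate_value_Ioo' huv.le
      h.differentiable_discriminant.continuous.continuousOn ⟨hv.trans_lt hc.1, hc.2.trans_le hu⟩
    exact ⟨x, ⟨hx, hc⟩, rfl⟩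

theorem bijOn_discriminant_of_zeros (h : IsHillPair q Δ) (huv : u < v)
    (hne : ∀ x ∈ Ioo u v, q x ≠ 0) (hu : q u = 0) (hv : q v = 0) :
    BijOn Δ (Ioo u v ∩ Δ ⁻¹' Ioo (-2) 2) (Ioo (-2) 2) := by
  rcases pos_or_neg_on_Ioo h.differentiable_entry.continuous hne with hpos | hneg
  · exact h.bijOn_discriminant_of_pos huv hpos (h.le_discriminant_of_pos huv hpos hu)
      (h.discriminant_le_of_pos huv hpos hv)
  · have hbij := h.neg.bijOn_discriminant_of_pos huv hneg
      (h.neg.le_discriminant_of_pos huv hneg (neg_eq_zero.2 hu))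
      (h.neg.discriminant_le_of_pos huv hneg (neg_eq_zero.2 hv))
    have hcomp : BijOn (fun c : ℝ => -c) (Ioo (-2) 2) (Ioo (-2) 2) :=
      (Equiv.neg ℝ).bijOn' (fun c hc => by simp at hc ⊢; grind) fun c hc => by simp at hc ⊢; grind
    convert! hcomp.comp hbij using 1
    · ext x; simp
    · ext x
      simp only [mem_inter_iff, mem_preimage, mem_Ioo, Pi.neg_apply]
      grind

theorem encard_inter_Ioo_of_bijOn (hR : R ⊆ Ioo (-2) 2) (hne : ∀ x ∈ Ioo u v, q x ≠ 0)
    (hbij : BijOn Δ (Ioo u v ∩ Δ ⁻¹' Ioo (-2) 2) (Ioo (-2) 2)) :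
    ((q ⁻¹' {0} ∪ Δ ⁻¹' R) ∩ Ioo u v).encard = R.encard := by
  have hset : (q ⁻¹' {0} ∪ Δ ⁻¹' R) ∩ Ioo u v = Ioo u v ∩ Δ ⁻¹' Ioo (-2) 2 ∩ Δ ⁻¹' R := by
    ext x
    exact ⟨fun ⟨hx, hxuv⟩ => have hxR := hx.resolve_left (hne x hxuv); ⟨⟨hxuv, hR hxR⟩, hxR⟩,
      fun ⟨⟨hxuv, _⟩, hxR⟩ => ⟨Or.inr hxR, hxuv⟩⟩
  rw [hset, ← (hbij.injOn.mono inter_subset_left).encard_image, image_inter_preimage,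
    hbij.image_eq, inter_eq_right.2 hR]

theorem encard_inter_Iio (h : IsHillPair q Δ) (hR : R ⊆ Ioo (-2) 2) (hq0 : 0 < q 0)
    (hΔ0 : 2 ≤ Δ 0) (hpos : q ⁻¹' {0} ∪ Δ ⁻¹' R ⊆ Ioi 0) {mu : ℕ → ℝ} (hmu : StrictMono mu)
    (hmurange : range mu = q ⁻¹' {0}) (m : ℕ) :
    ((q ⁻¹' {0} ∪ Δ ⁻¹' R) ∩ Iio (mu m)).encard = (R.encard + 1) * m + R.encard := by
  have hzero (i : ℕ) : q (mu i) = 0 := (hmurange ▸ mem_range_self i : mu i ∈ q ⁻¹' {0})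
  have hmem {x : ℝ} (hx : q x = 0) : x ∈ range mu := hmurange ▸ hx
  refine encard_inter_Iio_of_encard_inter_Ioo hmu (fun i => Or.inl (hzero i)) ?_ (fun i => ?_) m
  · have hmu0 : 0 < mu 0 := hpos (Or.inl (hzero 0))
    have hne : ∀ x ∈ Ioo 0 (mu 0), q x ≠ 0 := by
      intro x hx hqx
      obtain ⟨j, rfl⟩ := hmem hqx
      exact (hmu.monotone j.zero_le).not_gt hx.2
    have hqpos : ∀ x ∈ Ioo 0 (mu 0), 0 < q x := by
      intro x hx
      by_contra! hqx
      obtain ⟨z, hz, hqz⟩ := intermediate_value_Ioc' hx.1.le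
        h.differentiable_entry.continuous.continuousOn ⟨hqx, hq0⟩
      exact hne z ⟨hz.1, hz.2.trans_lt hx.2⟩ hqz
    rw [← inter_eq_left.2 hpos, inter_assoc, Ioi_inter_Iio]
    exact encard_inter_Ioo_of_bijOn hR hne (h.bijOn_discriminant_of_pos hmu0 hqpos hΔ0
      (h.discriminant_le_of_pos hmu0 hqpos (hzero 0)))
  · have hne : ∀ x ∈ Ioo (mu i) (mu (i + 1)), q x ≠ 0 := by
      intro x hx hqx
      obtain ⟨j, rfl⟩ := hmem hqx
      have := hmu.lt_iff_lt.1 hx.1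
      have := hmu.lt_iff_lt.1 hx.2
      lia
    exact encard_inter_Ioo_of_bijOn hR hne
      (h.bijOn_discriminant_of_zeros (hmu i.lt_succ_self) hne (hzero i) (hzero (i + 1)))

theorem enumeration_eq (h : IsHillPair q Δ) (hR : R ⊆ Ioo (-2) 2) {n : ℕ} (hn : R.encard = n)
    (hq0 : 0 < q 0) (hΔ0 : 2 ≤ Δ 0) {l mu : ℕ → ℝ} (hl : StrictMono l)
    (hlrange : range l = q ⁻¹' {0} ∪ Δ ⁻¹' R) (hlpos : ∀ i, 0 < l i) (hmu : StrictMono mu)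
    (hmurange : range mu = q ⁻¹' {0}) (m : ℕ) : l ((n + 1) * (m + 1) - 1) = mu m := by
  have hmem : mu m ∈ range l := by
    rw [hlrange, ← hmurange]
    exact Or.inl (mem_range_self m)
  obtain ⟨j, hj⟩ := hmem
  have hcount := h.encard_inter_Iio hR hq0 hΔ0 (hlrange ▸ range_subset_iff.2 hlpos) hmu hmurange m
  rw [← hlrange, ← hj, encard_range_inter_Iio hl, hn] at hcount
  have hindex : j = (n + 1) * m + n := by exact_mod_cast hcount
  rw [← hj, hindex]
  congr 1

end IsHillPair

end Counting

section ChebyshevPowers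

open Polynomial

theorem pow_succ_eq_chebyshev_S {R : Type*} [CommRing R] {A : Matrix (Fin 2) (Fin 2) R}
    (hA : A.det = 1) (n : ℕ) :
    A ^ (n + 1) =
      (Chebyshev.S R n).eval A.trace • A - (Chebyshev.S R (n - 1)).eval A.trace • 1 := by
  have hsq : A * A = A.trace • A - 1 := by
    rw [det_fin_two] at hA
    ext i j
    fin_cases i <;> fin_cases j <;> simp [mul_apply, trace_fin_two, Fin.sum_univ_two] <;> grind
  induction n with
  | zero => simp
  | succ n ih =>
    have hrec : (Chebyshev.S R (n + 1)).eval A.trace =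
        A.trace * (Chebyshev.S R n).eval A.trace - (Chebyshev.S R (n - 1)).eval A.trace := by
      rw [Chebyshev.S_add_one]
      simp
    rw [pow_succ, ih, sub_mul, smul_mul_assoc, smul_mul_assoc, hsq, one_mul]
    push_cast
    rw [hrec, add_sub_cancel_right]
    module

theorem pow_succ_apply_zero_one {R : Type*} [CommRing R] {A : Matrix (Fin 2) (Fin 2) R}
    (hA : A.det = 1) (n : ℕ) :
    (A ^ (n + 1)) 0 1 = (Chebyshev.S R n).eval A.trace * A 0 1 := by
  simp [pow_succ_eq_chebyshev_S hA]

theorem setOf_eval_chebyshev_S_eq_zero (n : ℕ) :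
    {x : ℝ | (Chebyshev.S ℝ n).eval x = 0} =
      (2 * ·) '' ((Chebyshev.U ℝ n).roots.toFinset : Set ℝ) := by
  have hU : Chebyshev.U ℝ n ≠ 0 := by
    rw [← degree_ne_bot, Chebyshev.degree_U_natCast]
    exact WithBot.natCast_ne_bot n
  have hSU (x : ℝ) : (Chebyshev.U ℝ n).eval x = (Chebyshev.S ℝ n).eval (2 * x) := by
    rw [← Chebyshev.S_comp_two_mul_X]
    simp
  ext x
  simp only [mem_ofPred_eq, mem_image, Finset.mem_coe, Multiset.mem_toFinset, mem_roots hU,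
    IsRoot.def, hSU]
  exact ⟨fun hx => ⟨x / 2, by rwa [mul_div_cancel₀ x two_ne_zero], mul_div_cancel₀ x two_ne_zero⟩,
    by rintro ⟨y, hy, rfl⟩; exact hy⟩

theorem encard_setOf_eval_chebyshev_S_eq_zero (n : ℕ) :
    {x : ℝ | (Chebyshev.S ℝ n).eval x = 0}.encard = n := by
  rw [setOf_eval_chebyshev_S_eq_zero, (mul_right_injective₀ two_ne_zero).encard_image,
    encard_coe_eq_coe_finsetCard, Chebyshev.roots_U_real, Finset.val_toFinset,
    Finset.card_image_of_injOn
      ((Finset.range n).nodup_map_iff_injOn.1 (Chebyshev.roots_U_real_nodup n)), Finset.card_range]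

theorem setOf_eval_chebyshev_S_eq_zero_subset (n : ℕ) :
    {x : ℝ | (Chebyshev.S ℝ n).eval x = 0} ⊆ Ioo (-2) 2 := by
  rw [setOf_eval_chebyshev_S_eq_zero, Chebyshev.roots_U_real, Finset.val_toFinset]
  rintro - ⟨x, hx, rfl⟩
  obtain ⟨k, hk, rfl⟩ := Finset.mem_image.1 (Finset.mem_coe.1 hx)
  have hk' : (k : ℝ) + 1 < n + 1 := by exact_mod_cast Nat.succ_lt_succ (Finset.mem_range.1 hk)
  have hπ := Real.pi_pos
  have hlower : 0 < (k + 1) * Real.pi / (n + 1) := by positivity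
  have hupper : (k + 1) * Real.pi / (n + 1) < Real.pi := by
    rw [div_lt_iff₀ (by positivity)]
    nlinarith
  have hlt : Real.cos ((k + 1) * Real.pi / (n + 1)) < Real.cos 0 :=
    Real.cos_lt_cos_of_nonneg_of_le_pi le_rfl hupper.le hlower
  have hgt : Real.cos Real.pi < Real.cos ((k + 1) * Real.pi / (n + 1)) :=
    Real.cos_lt_cos_of_nonneg_of_le_pi hlower.le le_rfl hupper
  rw [Real.cos_zero] at hlt
  rw [Real.cos_pi] at hgt
  constructor <;> linarith

end ChebyshevPowers

section LagrangeFamily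

/-- The Wronskian `y' z - y z'` of two vectors `(y, y')` and `(z, z')` of Cauchy data. -/
def wronskian (v w : Fin 2 → ℝ) : ℝ := v 1 * w 0 - v 0 * w 1

theorem wronskian_mulVec (A : Matrix (Fin 2) (Fin 2) ℝ) (v w : Fin 2 → ℝ) :
    wronskian (A *ᵥ v) (A *ᵥ w) = A.det * wronskian v w := by
  simp only [wronskian, mulVec, dotProduct, Fin.sum_univ_two, det_fin_two]
  ring

theorem apply_zero_one_mul_trace_eq {A B : Matrix (Fin 2) (Fin 2) ℝ} (hA : A.det = 1)
    (hB : B 0 0 * A 1 1 + A 0 0 * B 1 1 - (B 0 1 * A 1 0 + A 0 1 * B 1 0) = 0) :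
    A 0 1 * B.trace =
      -(wronskian (A *ᵥ ![A 0 1, (A 1 1 - A 0 0) / 2]) (B *ᵥ ![A 0 1, (A 1 1 - A 0 0) / 2]) +
        (1 - A.trace ^ 2 / 4) * wronskian (A *ᵥ ![0, 1]) (B *ᵥ ![0, 1])) := by
  rw [det_fin_two] at hA
  simp only [wronskian, trace_fin_two, mulVec, dotProduct, Fin.sum_univ_two, cons_val_zero,
    cons_val_one]
  linear_combination A 0 1 * (A 0 0 + A 1 1) / 2 * hB - (A 1 1 * B 0 1 + A 0 1 * B 0 0) * hA

theorem hasDerivAt_of_eq_add_mul {f h : ℝ → ℝ} {x c : ℝ} (hf : ∀ y, f y = c + (y - x) * h y)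
    (hh : ContinuousAt h x) : HasDerivAt f (h x) x := by
  rw [hasDerivAt_iff_tendsto_slope]
  refine (hh.tendsto.mono_left nhdsWithin_le_nhds).congr' ?_
  filter_upwards [self_mem_nhdsWithin] with y hy
  have hyx : y - x ≠ 0 := sub_ne_zero.2 hy
  rw [slope_def_field, hf y, hf x]
  field_simp
  ring

/-- The entrywise derivative of a matrix-valued function; `Matrix` carries no canonical norm, so
`deriv` itself is not available. -/
noncomputable def entrywiseDeriv {m n : Type*} (M : ℝ → Matrix m n ℝ) (ν : ℝ) : Matrix m n ℝ :=
  Matrix.of fun i j => deriv (fun ν' => M ν' i j) ν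

/-- A family `M ν` of transfer matrices satisfying a Lagrange identity: transporting the Cauchy
data `v`, `w` with spectral parameters `ν`, `ν'` changes their Wronskian by `(ν' - ν) Γ ν ν' v w`,
where `Γ ν ν' v w` stands for the integral of the product of the two solutions and is therefore
positive on the diagonal. -/
structure IsLagrangeFamily (M : ℝ → Matrix (Fin 2) (Fin 2) ℝ)
    (Γ : ℝ → ℝ → (Fin 2 → ℝ) → (Fin 2 → ℝ) → ℝ) : Prop where
  wronskian_eq : ∀ ν ν' v w,
    wronskian (M ν *ᵥ v) (M ν' *ᵥ w) = wronskian v w + (ν' - ν) * Γ ν ν' v w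
  continuousAt : ∀ ν v w, ContinuousAt (fun ν' => Γ ν ν' v w) ν
  pos : ∀ ν v, v ≠ 0 → 0 < Γ ν ν v v

namespace IsLagrangeFamily

variable {M : ℝ → Matrix (Fin 2) (Fin 2) ℝ} {Γ : ℝ → ℝ → (Fin 2 → ℝ) → (Fin 2 → ℝ) → ℝ}

theorem mul_mul (h : IsLagrangeFamily M Γ) {A B : Matrix (Fin 2) (Fin 2) ℝ} (hA : A.det = 1)
    (hB : B.det = 1) :
    IsLagrangeFamily (fun ν => A * M ν * B) fun ν ν' v w => Γ ν ν' (B *ᵥ v) (B *ᵥ w) where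
  wronskian_eq ν ν' v w := by
    simp only [← mulVec_mulVec, wronskian_mulVec A, hA, one_mul, h.wronskian_eq,
      wronskian_mulVec B, hB]
  continuousAt ν v w := h.continuousAt ν _ _
  pos ν v hv := by
    have hunit : IsUnit B := (isUnit_iff_isUnit_det B).2 (hB ▸ isUnit_one)
    refine h.pos ν _ fun hBv => hv (mulVec_injective_of_isUnit hunit ?_)
    rw [hBv, mulVec_zero]

theorem det_eq_one (h : IsLagrangeFamily M Γ) (ν : ℝ) : (M ν).det = 1 := by
  have := h.wronskian_eq ν ν ![0, 1] ![1, 0]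
  rw [wronskian_mulVec] at this
  simpa [wronskian] using this

theorem hasDerivAt_wronskian (h : IsLagrangeFamily M Γ) (ν : ℝ) (v w : Fin 2 → ℝ) :
    HasDerivAt (fun ν' => wronskian (M ν *ᵥ v) (M ν' *ᵥ w)) (Γ ν ν v w) ν :=
  hasDerivAt_of_eq_add_mul (fun ν' => h.wronskian_eq ν ν' v w) (h.continuousAt ν v w)

theorem differentiable_apply (h : IsLagrangeFamily M Γ) (i j : Fin 2) :
    Differentiable ℝ fun ν => M ν i j := by
  intro ν
  have hunit : IsUnit (M ν) := (isUnit_iff_isUnit_det _).2 (h.det_eq_one ν ▸ isUnit_one)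
  have hwronskian (e : Fin 2 → ℝ) :
      DifferentiableAt ℝ (fun ν' => wronskian e (M ν' *ᵥ Pi.single j 1)) ν := by
    obtain ⟨v, rfl⟩ := mulVec_surjective_iff_isUnit.2 hunit e
    exact (h.hasDerivAt_wronskian ν v _).differentiableAt
  fin_cases i
  · simpa [wronskian] using hwronskian ![0, 1]
  · simpa [wronskian] using (hwronskian ![1, 0]).neg

theorem hasDerivAt_apply (h : IsLagrangeFamily M Γ) (i j : Fin 2) (ν : ℝ) :
    HasDerivAt (fun ν' => M ν' i j) (entrywiseDeriv M ν i j) ν :=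
  (h.differentiable_apply i j ν).hasDerivAt

theorem wronskian_entrywiseDeriv_pos (h : IsLagrangeFamily M Γ) (ν : ℝ) {v : Fin 2 → ℝ}
    (hv : v ≠ 0) : 0 < wronskian (M ν *ᵥ v) (entrywiseDeriv M ν *ᵥ v) := by
  have hcomp (i : Fin 2) :
      HasDerivAt (fun ν' => (M ν' *ᵥ v) i) ((entrywiseDeriv M ν *ᵥ v) i) ν := by
    simp only [mulVec, dotProduct]
    exact HasDerivAt.fun_sum fun j _ => (h.hasDerivAt_apply i j ν).mul_const (v j)
  have hderiv : HasDerivAt (fun ν' => wronskian (M ν *ᵥ v) (M ν' *ᵥ v))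
      (wronskian (M ν *ᵥ v) (entrywiseDeriv M ν *ᵥ v)) ν :=
    ((hcomp 0).const_mul _).sub ((hcomp 1).const_mul _)
  rw [hderiv.unique (h.hasDerivAt_wronskian ν v v)]
  exact h.pos ν v hv

theorem det_deriv_eq_zero (h : IsLagrangeFamily M Γ) (ν : ℝ) :
    entrywiseDeriv M ν 0 0 * M ν 1 1 + M ν 0 0 * entrywiseDeriv M ν 1 1 -
      (entrywiseDeriv M ν 0 1 * M ν 1 0 + M ν 0 1 * entrywiseDeriv M ν 1 0) = 0 := by
  have hderiv := ((h.hasDerivAt_apply 0 0 ν).mul (h.hasDerivAt_apply 1 1 ν)).sub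
    ((h.hasDerivAt_apply 0 1 ν).mul (h.hasDerivAt_apply 1 0 ν))
  refine hderiv.unique ((hasDerivAt_const ν 1).congr_of_eventuallyEq (.of_forall fun ν' => ?_))
  simpa [det_fin_two] using h.det_eq_one ν'

theorem hasDerivAt_trace (h : IsLagrangeFamily M Γ) (ν : ℝ) :
    HasDerivAt (fun ν' => (M ν').trace) (entrywiseDeriv M ν).trace ν := by
  simp only [trace_fin_two]
  exact (h.hasDerivAt_apply 0 0 ν).add (h.hasDerivAt_apply 1 1 ν)

theorem isHillPair (h : IsLagrangeFamily M Γ) :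
    IsHillPair (fun ν => M ν 0 1) fun ν => (M ν).trace where
  differentiable_entry := h.differentiable_apply 0 1
  differentiable_discriminant ν := (h.hasDerivAt_trace ν).differentiableAt
  two_le_abs ν hq := by
    have hdet := h.det_eq_one ν
    rw [det_fin_two, hq, zero_mul, sub_zero] at hdet
    rw [trace_fin_two, ← abs_two, ← sq_le_sq]
    nlinarith [sq_nonneg (M ν 0 0 - M ν 1 1)]
  mul_deriv_pos ν hq := by
    have hdet := h.det_eq_one ν
    rw [det_fin_two, hq, zero_mul, sub_zero] at hdet
    have hpos := h.wronskian_entrywiseDeriv_pos ν (v := ![0, 1]) (by simp)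
    simp only [wronskian, mulVec, dotProduct, Fin.sum_univ_two, cons_val_zero, cons_val_one,
      hq] at hpos
    rw [(h.hasDerivAt_apply 0 1 ν).deriv, trace_fin_two]
    have hfactor : 0 < 1 + M ν 0 0 ^ 2 := by positivity
    nlinarith [mul_pos hfactor (by simpa using hpos)]
  mul_deriv_neg ν hΔ := by
    rw [(h.hasDerivAt_trace ν).deriv,
      apply_zero_one_mul_trace_eq (h.det_eq_one ν) (h.det_deriv_eq_zero ν), neg_lt_zero]
    have hnonneg (v : Fin 2 → ℝ) : 0 ≤ wronskian (M ν *ᵥ v) (entrywiseDeriv M ν *ᵥ v) := by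
      rcases eq_or_ne v 0 with rfl | hv
      · simp [wronskian]
      · exact (h.wronskian_entrywiseDeriv_pos ν hv).le
    have hlt : 0 < 1 - (M ν).trace ^ 2 / 4 := by
      have := sq_lt_sq' (abs_lt.1 hΔ).1 (abs_lt.1 hΔ).2
      linarith
    exact add_pos_of_nonneg_of_pos (hnonneg _)
      (mul_pos hlt (h.wronskian_entrywiseDeriv_pos ν (by simp)))

end IsLagrangeFamily

end LagrangeFamily

section IntegrationByParts

theorem integral_mul_integral_add_integral_integral_mul {α β : Measure ℝ} [SFinite α] [SFinite β]
    [NullSingletonClass α] {a b : ℝ} (hab : a ≤ b) {f g : ℝ → ℝ} (hf : IntegrableOn f (Ioc a b) α)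
    (hg : IntegrableOn g (Ioc a b) β) :
    (∫ t in a..b, f t * ∫ s in a..t, g s ∂β ∂α) + (∫ s in a..b, (∫ t in a..s, f t ∂α) * g s ∂β) =
      (∫ t in a..b, f t ∂α) * ∫ s in a..b, g s ∂β := by
  set α' := α.restrict (Ioc a b)
  set β' := β.restrict (Ioc a b)
  let T : Set (ℝ × ℝ) := {p | p.2 ≤ p.1}
  have hT : MeasurableSet T := measurableSet_le measurable_snd measurable_fst
  have hint : Integrable (fun p : ℝ × ℝ => f p.1 * g p.2) (α'.prod β') := hf.mul_prod hg
  have hlower : ∫ t in a..b, f t * ∫ s in a..t, g s ∂β ∂α =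
      ∫ p in T, f p.1 * g p.2 ∂α'.prod β' := by
    rw [← integral_indicator hT, integral_prod _ (hint.indicator hT),
      intervalIntegral.integral_of_le hab]
    refine setIntegral_congr_fun measurableSet_Ioc fun t ht => ?_
    have hsection : Iic t ∩ Ioc a b = Ioc a t := by
      ext s; simp only [mem_inter_iff, mem_Iic, mem_Ioc]; grind
    calc f t * ∫ s in a..t, g s ∂β = f t * ∫ s, (Iic t).indicator g s ∂β' := by
          rw [integral_indicator measurableSet_Iic, Measure.restrict_restrict measurableSet_Iic,
            hsection, intervalIntegral.integral_of_le ht.1.le]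
      _ = ∫ s, T.indicator (fun p => f p.1 * g p.2) (t, s) ∂β' := by
          rw [← integral_const_mul]
          exact integral_congr_ae (.of_forall fun s => by simp [T, indicator_apply])
  have hupper : ∫ s in a..b, (∫ t in a..s, f t ∂α) * g s ∂β =
      ∫ p in Tᶜ, f p.1 * g p.2 ∂α'.prod β' := by
    rw [← integral_indicator hT.compl, integral_prod_symm _ (hint.indicator hT.compl),
      intervalIntegral.integral_of_le hab]
    refine setIntegral_congr_fun measurableSet_Ioc fun s hs => ?_
    have hsection : Iio s ∩ Ioc a b = Ioo a s := by
      ext t; simp only [mem_inter_iff, mem_Iio, mem_Ioc, mem_Ioo]; grind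
    calc (∫ t in a..s, f t ∂α) * g s = (∫ t, (Iio s).indicator f t ∂α') * g s := by
          rw [integral_indicator measurableSet_Iio, Measure.restrict_restrict measurableSet_Iio,
            hsection, intervalIntegral.integral_of_le hs.1.le, integral_Ioc_eq_integral_Ioo]
      _ = ∫ t, Tᶜ.indicator (fun p => f p.1 * g p.2) (t, s) ∂α' := by
          rw [← integral_mul_const]
          exact integral_congr_ae (.of_forall fun t => by simp [T, indicator_apply])
  rw [hlower, hupper, integral_add_compl hT hint, integral_prod_mul,
    intervalIntegral.integral_of_le hab, intervalIntegral.integral_of_le hab]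

theorem mul_sub_mul_eq_integral_add_integral {α β : Measure ℝ} [IsLocallyFiniteMeasure α]
    [IsLocallyFiniteMeasure β] [NullSingletonClass α] {a b : ℝ} (hab : a ≤ b)
    {f g F G : ℝ → ℝ} (hf : ContinuousOn f (Icc a b)) (hg : ContinuousOn g (Icc a b))
    (hFc : ContinuousOn F (Icc a b)) (hGc : ContinuousOn G (Icc a b))
    (hF : ∀ x ∈ Icc a b, F x = F a + ∫ t in a..x, f t ∂α)
    (hG : ∀ x ∈ Icc a b, G x = G a + ∫ t in a..x, g t ∂β) :
    F b * G b - F a * G a = (∫ t in a..b, f t * G t ∂α) + ∫ t in a..b, F t * g t ∂β := by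
  have hfG : ∫ t in a..b, f t * ∫ s in a..t, g s ∂β ∂α =
      (∫ t in a..b, f t * G t ∂α) - (∫ t in a..b, f t ∂α) * G a := by
    rw [← intervalIntegral.integral_mul_const, ← intervalIntegral.integral_sub]
    · refine intervalIntegral.integral_congr fun t ht => ?_
      rw [uIcc_of_le hab] at ht
      simp only [hG t ht]
      ring
    · exact (hf.mul hGc).intervalIntegrable_of_Icc hab
    · exact (hf.intervalIntegrable_of_Icc hab).mul_const _
  have hFg : ∫ s in a..b, (∫ t in a..s, f t ∂α) * g s ∂β =
      (∫ t in a..b, F t * g t ∂β) - F a * ∫ t in a..b, g t ∂β := by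
    rw [← intervalIntegral.integral_const_mul, ← intervalIntegral.integral_sub]
    · refine intervalIntegral.integral_congr fun t ht => ?_
      rw [uIcc_of_le hab] at ht
      simp only [hF t ht]
      ring
    · exact (hFc.mul hg).intervalIntegrable_of_Icc hab
    · exact (hg.intervalIntegrable_of_Icc hab).const_mul _
  have hparts := integral_mul_integral_add_integral_integral_mul (α := α) (β := β) hab
    ((hf.intervalIntegrable_of_Icc hab).1) ((hg.intervalIntegrable_of_Icc hab).1)
  have hFb := hF b (right_mem_Icc.2 hab)
  have hGb := hG b (right_mem_Icc.2 hab)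
  rw [hfG, hFg] at hparts
  rw [hFb, hGb]
  linear_combination -hparts

end IntegrationByParts

section Solutions

/-- `y` and its quasi-derivative `g` solve `-y'' = ν μ y` on `[0, 1]`, the equation being read in
integrated form. -/
structure IsSolution (μ : Measure ℝ) (ν : ℝ) (y g : ℝ → ℝ) : Prop where
  continuousOn_y : ContinuousOn y (Icc 0 1)
  continuousOn_g : ContinuousOn g (Icc 0 1)
  y_eq : ∀ x ∈ Icc (0 : ℝ) 1, y x = y 0 + ∫ t in (0 : ℝ)..x, g t
  g_eq : ∀ x ∈ Icc (0 : ℝ) 1, g x = g 0 - ν * ∫ t in (0 : ℝ)..x, y t ∂μ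

variable {μ : Measure ℝ} {ν ν' : ℝ} {y g z k : ℝ → ℝ}

theorem isEigen_iff_exists_isSolution [NullSingletonClass μ] {γ₀ γ₁ : ℝ} :
    IsEigen μ γ₀ γ₁ ν ↔ ∃ y g, IsSolution μ ν y g ∧ (∃ x ∈ Icc (0 : ℝ) 1, y x ≠ 0) ∧
      g 0 - γ₀ * y 0 = 0 ∧ g 1 + γ₁ * y 1 = 0 := by
  have hinterval (y : ℝ → ℝ) {x : ℝ} (hx : x ∈ Icc (0 : ℝ) 1) :
      ∫ t in Icc 0 x, y t ∂μ = ∫ t in (0 : ℝ)..x, y t ∂μ := by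
    rw [intervalIntegral.integral_of_le hx.1, integral_Icc_eq_integral_Ioc]
  constructor
  · rintro ⟨y, g, hyc, hgc, hne, hy, hg, h0, h1⟩
    exact ⟨y, g, ⟨hyc, hgc, hy, fun x hx => hinterval y hx ▸ hg x hx⟩, hne, h0, h1⟩
  · rintro ⟨y, g, h, hne, h0, h1⟩
    exact ⟨y, g, h.continuousOn_y, h.continuousOn_g, hne, h.y_eq,
      fun x hx => (hinterval y hx).symm ▸ h.g_eq x hx, h0, h1⟩

namespace IsSolution

variable [IsLocallyFiniteMeasure μ]

theorem eq_affine_of_integral_sq_eq_zero (h : IsSolution μ ν y g)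
    (hint : ∫ t in (0 : ℝ)..1, y t * y t ∂μ = 0) :
    y =ᵐ[μ.restrict (Ioc 0 1)] 0 ∧ ∀ x ∈ Icc (0 : ℝ) 1, y x = y 0 + g 0 * x := by
  have hzero : y =ᵐ[μ.restrict (Ioc 0 1)] 0 := by
    have hsq : (fun t => y t * y t) =ᵐ[μ.restrict (Ioc 0 1)] 0 := by
      rw [← integral_eq_zero_iff_of_nonneg (fun t => mul_self_nonneg (y t)),
        ← intervalIntegral.integral_of_le zero_le_one, hint]
      exact ((h.continuousOn_y.mul h.continuousOn_y).intervalIntegrable_of_Icc zero_le_one).1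
    filter_upwards [hsq] with t ht using mul_self_eq_zero.1 ht
  refine ⟨hzero, fun x hx => ?_⟩
  have hg : ∀ t ∈ Icc (0 : ℝ) 1, g t = g 0 := by
    intro t ht
    have hsub : Ioc 0 t ⊆ Ioc 0 1 := Ioc_subset_Ioc_right ht.2
    rw [h.g_eq t ht, intervalIntegral.integral_of_le ht.1,
      integral_eq_zero_of_ae (ae_restrict_of_ae_restrict_of_subset hsub hzero), mul_zero, sub_zero]
  rw [h.y_eq x hx, intervalIntegral.integral_congr (g := fun _ => g 0) fun t ht => ?_]
  · simp [mul_comm]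
  · rw [uIcc_of_le hx.1] at ht
    exact hg t ⟨ht.1, ht.2.trans hx.2⟩

variable [NullSingletonClass μ]

theorem mul_sub_mul_eq (h : IsSolution μ ν y g) (h' : IsSolution μ ν' z k) :
    g 1 * z 1 - g 0 * z 0 =
      -ν * (∫ t in (0 : ℝ)..1, y t * z t ∂μ) + ∫ t in (0 : ℝ)..1, g t * k t := by
  rw [mul_sub_mul_eq_integral_add_integral (α := μ) (β := volume) zero_le_one
    (continuousOn_const.mul h.continuousOn_y) h'.continuousOn_g h.continuousOn_g h'.continuousOn_y
    (f := fun t => -ν * y t) (fun x hx => ?_) h'.y_eq]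
  · simp only [mul_assoc, intervalIntegral.integral_const_mul]
  · rw [intervalIntegral.integral_const_mul, h.g_eq x hx]
    ring

theorem wronskian_eq (h : IsSolution μ ν y g) (h' : IsSolution μ ν' z k) :
    wronskian ![y 1, g 1] ![z 1, k 1] =
      wronskian ![y 0, g 0] ![z 0, k 0] + (ν' - ν) * ∫ t in (0 : ℝ)..1, y t * z t ∂μ := by
  have hparts := h.mul_sub_mul_eq h'
  have hparts' := h'.mul_sub_mul_eq h
  simp only [mul_comm (k _), mul_comm (z _)] at hparts'
  simp only [wronskian, cons_val_zero, cons_val_one]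
  linear_combination hparts - hparts'

theorem integral_sq_pos (h : IsSolution μ ν y g) (hμ : μ (Ioc 0 1) ≠ 0)
    (h0 : ![y 0, g 0] ≠ 0) : 0 < ∫ t in (0 : ℝ)..1, y t * y t ∂μ := by
  refine (intervalIntegral.integral_nonneg zero_le_one fun t _ => mul_self_nonneg (y t)).lt_of_ne'
    fun hint => hμ ?_
  obtain ⟨hzero, haffine⟩ := h.eq_affine_of_integral_sq_eq_zero hint
  have hroots : {x : ℝ | y 0 + g 0 * x = 0}.Subsingleton := by
    intro x hx x' hx'
    by_contra hne
    have hg0 : g 0 = 0 := by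
      have : g 0 * (x - x') = 0 := by simp only [mem_ofPred_eq] at hx hx'; linarith
      exact (mul_eq_zero.1 this).resolve_right (sub_ne_zero.2 hne)
    have hy0 : y 0 = 0 := by simpa [hg0] using hx
    exact h0 (by simp [hy0, hg0])
  rw [← Measure.restrict_eq_zero, ← ae_eq_bot, ← empty_mem_iff_bot]
  filter_upwards [hzero, ae_restrict_mem measurableSet_Ioc,
    measure_eq_zero_iff_ae_notMem.1 (hroots.measure_zero (μ.restrict (Ioc 0 1)))]
    with x hx hxI hxroot
  exact hxroot ((haffine x (Ioc_subset_Icc_self hxI)).symm.trans hx)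

end IsSolution

end Solutions

section CauchyProblem

theorem isUnit_one_add_smul_of_norm_pow_le {A : Type*} [NormedRing A] [NormedAlgebra ℝ A]
    [CompleteSpace A] {K : A} {C : ℝ} (hK : ∀ n : ℕ, ‖K ^ n‖ ≤ C ^ n / n.factorial) (ν : ℝ) :
    IsUnit (1 + ν • K) := by
  obtain ⟨n, hn⟩ := ((FloorSemiring.tendsto_pow_div_factorial_atTop (|ν| * C)).eventually
    (gt_mem_nhds zero_lt_one)).exists
  have hsmall : ‖(-(ν • K)) ^ n‖ < 1 := by
    refine lt_of_le_of_lt ?_ hn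
    rw [← neg_smul, smul_pow, norm_smul, norm_pow, norm_neg, Real.norm_eq_abs, mul_pow,
      mul_div_assoc]
    gcongr
    exact hK n
  have hunit : IsUnit (1 - (-(ν • K)) ^ n) := isUnit_one_sub_of_norm_lt_one hsmall
  have hcomm : Commute (1 - -(ν • K)) (∑ i ∈ Finset.range n, (-(ν • K)) ^ i) :=
    Commute.sum_right _ _ _ fun i _ => (Commute.one_left _).sub_left ((Commute.refl _).pow_right i)
  rw [← mul_neg_geom_sum, hcomm.isUnit_mul_iff, sub_neg_eq_add] at hunit
  exact hunit.1

theorem continuous_inverse_one_add_smul {A : Type*} [NormedRing A] [NormedAlgebra ℝ A]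
    [CompleteSpace A] {K : A} (hK : ∀ ν : ℝ, IsUnit (1 + ν • K)) :
    Continuous fun ν : ℝ => Ring.inverse (1 + ν • K) := by
  refine continuous_iff_continuousAt.2 fun ν => ?_
  obtain ⟨u, hu⟩ := hK ν
  exact ContinuousAt.comp (hu ▸ NormedRing.inverse_continuousAt u)
    (by fun_prop : Continuous fun ν : ℝ => 1 + ν • K).continuousAt

variable (μ : Measure ℝ) [IsLocallyFiniteMeasure μ]

theorem norm_integral_integral_le {f : ℝ → ℝ} {C : ℝ} (hC : 0 ≤ C) {n : ℕ}
    (hf : ∀ s ∈ Icc (0 : ℝ) 1, |f s| ≤ C * s ^ n / n.factorial) {x : ℝ} (hx : x ∈ Icc (0 : ℝ) 1) :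
    |∫ t in (0 : ℝ)..x, ∫ s in (0 : ℝ)..t, f s ∂μ| ≤
      μ.real (Ioc 0 1) * C * x ^ (n + 1) / (n + 1).factorial := by
  have hinner {t : ℝ} (ht : t ∈ Ioc 0 x) :
      |∫ s in (0 : ℝ)..t, f s ∂μ| ≤ μ.real (Ioc 0 1) * C / n.factorial * t ^ n := by
    have ht0 : 0 < t := ht.1
    calc |∫ s in (0 : ℝ)..t, f s ∂μ| ≤ C * t ^ n / n.factorial * μ.real (Ioc 0 t) := by
          rw [intervalIntegral.integral_of_le ht0.le]
          refine norm_setIntegral_le_of_norm_le_const (f := f) (measure_Ioc_lt_top (μ := μ))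
            fun s hs => ?_
          refine (hf s ⟨hs.1.le, hs.2.trans (ht.2.trans hx.2)⟩).trans ?_
          have := hs.1.le
          gcongr
          exact hs.2
      _ ≤ C * t ^ n / n.factorial * μ.real (Ioc 0 1) := by
          gcongr
          · exact measure_Ioc_lt_top.ne
          · exact ht.2.trans hx.2
      _ = μ.real (Ioc 0 1) * C / n.factorial * t ^ n := by ring
  calc |∫ t in (0 : ℝ)..x, ∫ s in (0 : ℝ)..t, f s ∂μ|
      ≤ ∫ t in (0 : ℝ)..x, μ.real (Ioc 0 1) * C / n.factorial * t ^ n := by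
        refine intervalIntegral.norm_integral_le_of_norm_le (μ := volume)
          (f := fun t => ∫ s in (0 : ℝ)..t, f s ∂μ) hx.1 (.of_forall fun t ht => hinner ht) ?_
        exact Continuous.intervalIntegrable (by fun_prop) _ _
    _ = μ.real (Ioc 0 1) * C * x ^ (n + 1) / (n + 1).factorial := by
        rw [intervalIntegral.integral_const_mul, integral_pow, Nat.factorial_succ]
        push_cast
        field_simp
        ring

variable [NullSingletonClass μ]

/-- The Volterra operator `(K f)(x) = ∫₀ˣ ∫₀ᵗ f dμ dt`, through which the Cauchy problem for
`-y'' = ν μ y` reads `(1 + ν K) y = y(0) + y'(0) x`. -/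
noncomputable def volterra : C(Icc (0 : ℝ) 1, ℝ) →L[ℝ] C(Icc (0 : ℝ) 1, ℝ) :=
  LinearMap.mkContinuous
    { toFun f :=
        { toFun x := ∫ t in (0 : ℝ)..x, ∫ s in (0 : ℝ)..t, f.IccExtend zero_le_one s ∂μ
          continuous_toFun := by fun_prop }
      map_add' f f' := by
        ext x
        simp only [ContinuousMap.coe_mk, ContinuousMap.add_apply]
        rw [← intervalIntegral.integral_add]
        · refine intervalIntegral.integral_congr fun t _ => ?_
          exact intervalIntegral.integral_add (μ := μ)
            (Continuous.intervalIntegrable (by fun_prop) _ _)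
            (Continuous.intervalIntegrable (by fun_prop) _ _)
        all_goals exact Continuous.intervalIntegrable (by fun_prop) _ _
      map_smul' c f := by
        ext x
        simp [IccExtend_apply, intervalIntegral.integral_const_mul] }
    (μ.real (Ioc 0 1)) fun f => by
      refine (ContinuousMap.norm_le _ (by positivity)).2 fun x => ?_
      refine (norm_integral_integral_le μ (norm_nonneg f) (n := 0) (fun s hs => ?_) x.2).trans ?_
      · simpa [IccExtend_of_mem zero_le_one _ hs] using f.norm_coe_le_norm ⟨s, hs⟩
      · simpa using mul_le_of_le_one_right (by positivity) x.2.2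

theorem volterra_apply (f : C(Icc (0 : ℝ) 1, ℝ)) (x : Icc (0 : ℝ) 1) :
    volterra μ f x = ∫ t in (0 : ℝ)..x, ∫ s in (0 : ℝ)..t, f.IccExtend zero_le_one s ∂μ :=
  rfl

theorem abs_volterra_pow_apply_le (n : ℕ) (f : C(Icc (0 : ℝ) 1, ℝ)) (x : Icc (0 : ℝ) 1) :
    |(volterra μ ^ n) f x| ≤ μ.real (Ioc 0 1) ^ n * ‖f‖ * (x : ℝ) ^ n / n.factorial := by
  induction n generalizing x with
  | zero => simpa using f.norm_coe_le_norm x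
  | succ n ih =>
    rw [pow_succ' (volterra μ), mul_apply_eq_comp, volterra_apply]
    refine (norm_integral_integral_le μ (C := μ.real (Ioc 0 1) ^ n * ‖f‖) (n := n) (by positivity)
      (fun s hs => ?_) x.2).trans_eq (by ring)
    rw [ContinuousMap.coe_IccExtend, IccExtend_of_mem zero_le_one _ hs]
    exact ih ⟨s, hs⟩

theorem norm_volterra_pow_le (n : ℕ) : ‖volterra μ ^ n‖ ≤ μ.real (Ioc 0 1) ^ n / n.factorial := by
  refine ContinuousLinearMap.opNorm_le_bound _ (by positivity) fun f => ?_
  refine (ContinuousMap.norm_le _ (by positivity)).2 fun x => ?_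
  calc |(volterra μ ^ n) f x| ≤ μ.real (Ioc 0 1) ^ n * ‖f‖ * (x : ℝ) ^ n / n.factorial :=
        abs_volterra_pow_apply_le μ n f x
    _ ≤ μ.real (Ioc 0 1) ^ n * ‖f‖ * 1 / n.factorial := by
        gcongr
        exact pow_le_one₀ x.2.1 x.2.2
    _ = μ.real (Ioc 0 1) ^ n / n.factorial * ‖f‖ := by ring

theorem isUnit_one_add_smul_volterra (ν : ℝ) : IsUnit (1 + ν • volterra μ) :=
  isUnit_one_add_smul_of_norm_pow_le (A := C(Icc (0 : ℝ) 1, ℝ) →L[ℝ] C(Icc (0 : ℝ) 1, ℝ))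
    (norm_volterra_pow_le μ) ν

/-- The function `x ↦ v 0 + v 1 * x` on `[0, 1]`, which solves the Cauchy problem for `ν = 0`. -/
def affineOnUnit : (Fin 2 → ℝ) →ₗ[ℝ] C(Icc (0 : ℝ) 1, ℝ) where
  toFun v := ⟨fun x => v 0 + v 1 * x, by fun_prop⟩
  map_add' v w := by
    ext x
    simp only [Pi.add_apply, ContinuousMap.coe_mk, ContinuousMap.add_apply]
    ring
  map_smul' c v := by
    ext x
    simp only [Pi.smul_apply, smul_eq_mul, ContinuousMap.coe_mk, Real.ringHom_apply,
      ContinuousMap.coe_smul]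
    ring

/-- The solution `y` of `-y'' = ν μ y` with Cauchy data `(y(0), y'(0)) = v`. -/
noncomputable def cauchySolution (ν : ℝ) : (Fin 2 → ℝ) →ₗ[ℝ] C(Icc (0 : ℝ) 1, ℝ) :=
  (Ring.inverse (1 + ν • volterra μ)).toLinearMap ∘ₗ affineOnUnit

theorem eq_cauchySolution_iff {ν : ℝ} {v : Fin 2 → ℝ} {f : C(Icc (0 : ℝ) 1, ℝ)} :
    f = cauchySolution μ ν v ↔ ∀ x : Icc (0 : ℝ) 1, f x = v 0 + v 1 * x - ν * volterra μ f x := by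
  have hsolve : f = cauchySolution μ ν v ↔ (1 + ν • volterra μ) f = affineOnUnit v := by
    have hunit := isUnit_one_add_smul_volterra μ ν
    constructor
    · rintro rfl
      exact DFunLike.congr_fun (Ring.mul_inverse_cancel _ hunit) (affineOnUnit v)
    · intro hf
      have := DFunLike.congr_fun (Ring.inverse_mul_cancel _ hunit) f
      rw [mul_apply_eq_comp, hf] at this
      exact this.symm
  rw [hsolve, ContinuousMap.ext_iff]
  refine forall_congr' fun x => ?_
  simp [affineOnUnit, eq_sub_iff_add_eq]

theorem continuous_cauchySolution (v : Fin 2 → ℝ) :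
    Continuous fun ν => cauchySolution μ ν v := by
  have hinverse : Continuous fun ν : ℝ => Ring.inverse (1 + ν • volterra μ) :=
    continuous_inverse_one_add_smul (A := C(Icc (0 : ℝ) 1, ℝ) →L[ℝ] C(Icc (0 : ℝ) 1, ℝ))
      (isUnit_one_add_smul_volterra μ)
  exact hinverse.clm_apply continuous_const

/-- The quasi-derivative of `cauchySolution μ ν v`. -/
noncomputable def cauchyDeriv (ν : ℝ) (v : Fin 2 → ℝ) (x : ℝ) : ℝ :=
  v 1 - ν * ∫ t in (0 : ℝ)..x, (cauchySolution μ ν v).IccExtend zero_le_one t ∂μ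

theorem cauchySolution_zero (ν : ℝ) (v : Fin 2 → ℝ) :
    (cauchySolution μ ν v).IccExtend zero_le_one 0 = v 0 := by
  rw [ContinuousMap.coe_IccExtend, IccExtend_left, (eq_cauchySolution_iff μ).1 rfl, volterra_apply]
  simp

theorem cauchyDeriv_zero (ν : ℝ) (v : Fin 2 → ℝ) : cauchyDeriv μ ν v 0 = v 1 := by
  simp [cauchyDeriv]

theorem isSolution_cauchySolution (ν : ℝ) (v : Fin 2 → ℝ) :
    IsSolution μ ν ((cauchySolution μ ν v).IccExtend zero_le_one) (cauchyDeriv μ ν v) := by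
  set Y := cauchySolution μ ν v with hY
  have hYc : Continuous (Y.IccExtend zero_le_one) := by fun_prop
  have hprim : Continuous fun t => ∫ s in (0 : ℝ)..t, Y.IccExtend zero_le_one s ∂μ := by fun_prop
  have hG : Continuous (cauchyDeriv μ ν v) := continuous_const.sub (hprim.const_mul ν)
  refine ⟨hYc.continuousOn, hG.continuousOn, fun x hx => ?_, fun x _ => by
    rw [cauchyDeriv_zero, cauchyDeriv]⟩
  calc Y.IccExtend zero_le_one x = v 0 + v 1 * x - ν * volterra μ Y ⟨x, hx⟩ := by
        rw [ContinuousMap.coe_IccExtend, IccExtend_of_mem _ _ hx, (eq_cauchySolution_iff μ).1 hY]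
    _ = Y.IccExtend zero_le_one 0 + ∫ t in (0 : ℝ)..x, cauchyDeriv μ ν v t := by
        simp only [cauchyDeriv, ← hY]
        rw [intervalIntegral.integral_sub (by simp) ((hprim.const_mul ν).intervalIntegrable _ _),
          intervalIntegral.integral_const_mul, cauchySolution_zero, volterra_apply]
        simp only [ContinuousMap.coe_IccExtend, intervalIntegral.integral_const, sub_zero,
          smul_eq_mul]
        ring

variable {μ} in
theorem IsSolution.eq_cauchySolution {ν : ℝ} {y g : ℝ → ℝ} (h : IsSolution μ ν y g) :
    EqOn y ((cauchySolution μ ν ![y 0, g 0]).IccExtend zero_le_one) (Icc 0 1) := by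
  let f : C(Icc (0 : ℝ) 1, ℝ) := ⟨(Icc 0 1).domRestrict y, h.continuousOn_y.domRestrict⟩
  have hfy : EqOn y (f.IccExtend zero_le_one) (Icc 0 1) := fun x hx => by
    rw [ContinuousMap.coe_IccExtend, IccExtend_of_mem _ _ hx]
    rfl
  have hf : f = cauchySolution μ ν ![y 0, g 0] := by
    refine (eq_cauchySolution_iff μ).2 fun ⟨x, hx⟩ => ?_
    have hg : ∀ t ∈ uIcc 0 x, g t = g 0 - ν * ∫ s in (0 : ℝ)..t, f.IccExtend zero_le_one s ∂μ := by
      intro t ht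
      rw [uIcc_of_le hx.1] at ht
      rw [h.g_eq t ⟨ht.1, ht.2.trans hx.2⟩, intervalIntegral.integral_congr]
      rw [uIcc_of_le ht.1]
      exact hfy.mono (Icc_subset_Icc_right (ht.2.trans hx.2))
    have hprim : Continuous fun t => ∫ s in (0 : ℝ)..t, f.IccExtend zero_le_one s ∂μ := by fun_prop
    calc y x
        = y 0 + ∫ t in (0 : ℝ)..x, g 0 - ν * ∫ s in (0 : ℝ)..t, f.IccExtend zero_le_one s ∂μ := by
          rw [h.y_eq x hx, intervalIntegral.integral_congr hg]
      _ = y 0 + g 0 * x - ν * volterra μ f ⟨x, hx⟩ := by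
          rw [intervalIntegral.integral_sub (by simp) ((hprim.const_mul ν).intervalIntegrable _ _),
            intervalIntegral.integral_const_mul, volterra_apply]
          simp only [ContinuousMap.coe_IccExtend, intervalIntegral.integral_const, sub_zero,
            smul_eq_mul]
          ring
  exact hf ▸ hfy

variable {μ} in
theorem IsSolution.eq_cauchyDeriv {ν : ℝ} {y g : ℝ → ℝ} (h : IsSolution μ ν y g) :
    EqOn g (cauchyDeriv μ ν ![y 0, g 0]) (Icc 0 1) := by
  intro x hx
  rw [h.g_eq x hx, cauchyDeriv, intervalIntegral.integral_congr]
  · rfl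
  · rw [uIcc_of_le hx.1]
    exact h.eq_cauchySolution.mono (Icc_subset_Icc_right hx.2)

variable {μ} in
theorem IsSolution.ne_zero {ν : ℝ} {y g : ℝ → ℝ} (h : IsSolution μ ν y g)
    (hy : ∃ x ∈ Icc (0 : ℝ) 1, y x ≠ 0) : ![y 0, g 0] ≠ 0 := by
  obtain ⟨x, hx, hyx⟩ := hy
  intro h0
  refine hyx ?_
  rw [h.eq_cauchySolution hx, h0, map_zero, ContinuousMap.coe_IccExtend, IccExtend_of_mem _ _ hx,
    ContinuousMap.zero_apply]

end CauchyProblem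

section TransferMatrix

/-- The matrix carrying the Cauchy data `(y(0), y'(0))` of a solution of `-y'' = ν μ y` to
`(y(1), y'(1))`. -/
noncomputable def transferMatrix (μ : Measure ℝ) [IsLocallyFiniteMeasure μ] [NullSingletonClass μ]
    (ν : ℝ) : Matrix (Fin 2) (Fin 2) ℝ :=
  !![(cauchySolution μ ν ![1, 0]).IccExtend zero_le_one 1,
      (cauchySolution μ ν ![0, 1]).IccExtend zero_le_one 1;
    cauchyDeriv μ ν ![1, 0] 1, cauchyDeriv μ ν ![0, 1] 1]

/-- The unipotent matrix of the substitution `y ↦ y + r y'`; it is the transfer matrix of an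
interval of length `r` which carries no mass. -/
def shear (r : ℝ) : Matrix (Fin 2) (Fin 2) ℝ := !![1, r; 0, 1]

theorem det_shear (r : ℝ) : (shear r).det = 1 := by simp [shear]

theorem shear_mul_shear (r s : ℝ) : shear r * shear s = shear (r + s) := by
  simp [shear, add_comm]

theorem shear_zero : shear 0 = 1 := by
  simp [shear, one_fin_two]

theorem shear_mulVec (r x y : ℝ) : shear r *ᵥ ![x, y] = ![x + r * y, y] := by
  ext i
  fin_cases i <;> simp [shear, mulVec, dotProduct, Fin.sum_univ_two]

variable (μ : Measure ℝ) [IsLocallyFiniteMeasure μ] [NullSingletonClass μ]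

theorem transferMatrix_mulVec (ν : ℝ) (v : Fin 2 → ℝ) :
    transferMatrix μ ν *ᵥ v =
      ![(cauchySolution μ ν v).IccExtend zero_le_one 1, cauchyDeriv μ ν v 1] := by
  set C := cauchySolution μ ν ![1, 0] with hC
  set S := cauchySolution μ ν ![0, 1] with hS
  have hsplit : cauchySolution μ ν v = v 0 • C + v 1 • S := by
    rw [hC, hS, ← map_smul, ← map_smul, ← map_add]
    congr
    ext i
    fin_cases i <;> simp
  have hext (x : ℝ) : (cauchySolution μ ν v).IccExtend zero_le_one x =
      v 0 * C.IccExtend zero_le_one x + v 1 * S.IccExtend zero_le_one x := by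
    simp [hsplit, IccExtend_apply]
  have hint : ∫ t in (0 : ℝ)..1, (cauchySolution μ ν v).IccExtend zero_le_one t ∂μ =
      v 0 * (∫ t in (0 : ℝ)..1, C.IccExtend zero_le_one t ∂μ) +
        v 1 * ∫ t in (0 : ℝ)..1, S.IccExtend zero_le_one t ∂μ := by
    simp only [hext]
    rw [intervalIntegral.integral_add, intervalIntegral.integral_const_mul,
      intervalIntegral.integral_const_mul]
    all_goals exact Continuous.intervalIntegrable (by fun_prop) _ _
  ext i
  fin_cases i
  · simp [transferMatrix, mulVec, dotProduct, Fin.sum_univ_two, hext, ← hC, ← hS, mul_comm]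
  · simp only [transferMatrix, mulVec, dotProduct, Fin.sum_univ_two, cauchyDeriv, hint, ← hC, ← hS,
      Fin.mk_one, of_apply, cons_val_zero, cons_val_one]
    ring

theorem transferMatrix_zero : transferMatrix μ 0 = shear 1 := by
  have hsolution (v : Fin 2 → ℝ) :
      (cauchySolution μ 0 v).IccExtend zero_le_one 1 = v 0 + v 1 := by
    rw [ContinuousMap.coe_IccExtend, IccExtend_right, (eq_cauchySolution_iff μ).1 rfl]
    simp
  simp [transferMatrix, hsolution, cauchyDeriv, shear]

variable {μ}

theorem IsSolution.transferMatrix_mulVec {ν : ℝ} {y g : ℝ → ℝ} (h : IsSolution μ ν y g) :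
    transferMatrix μ ν *ᵥ ![y 0, g 0] = ![y 1, g 1] := by
  rw [_root_.transferMatrix_mulVec, ← h.eq_cauchySolution (right_mem_Icc.2 zero_le_one),
    ← h.eq_cauchyDeriv (right_mem_Icc.2 zero_le_one)]

theorem isLagrangeFamily_transferMatrix (hμ : μ (Ioc 0 1) ≠ 0) :
    IsLagrangeFamily (transferMatrix μ) fun ν ν' v w => ∫ t in (0 : ℝ)..1,
      (cauchySolution μ ν v).IccExtend zero_le_one t *
        (cauchySolution μ ν' w).IccExtend zero_le_one t ∂μ where
  wronskian_eq ν ν' v w := by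
    have hwronskian := (isSolution_cauchySolution μ ν v).wronskian_eq
      (isSolution_cauchySolution μ ν' w)
    simp only [cauchySolution_zero, cauchyDeriv_zero] at hwronskian
    rw [transferMatrix_mulVec, transferMatrix_mulVec, hwronskian]
    simp [wronskian]
  continuousAt ν v w := by
    have hcont := continuous_cauchySolution μ w
    refine Continuous.continuousAt <|
      intervalIntegral.continuous_parametric_intervalIntegral_of_continuous' ?_ 0 1
    have heval : Continuous fun p : ℝ × ℝ => (cauchySolution μ p.1 w).IccExtend zero_le_one p.2 :=
      (hcont.comp continuous_fst).eval (continuous_projIcc.comp continuous_snd)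
    have hfixed : Continuous ((cauchySolution μ ν v).IccExtend zero_le_one) := by fun_prop
    exact (hfixed.comp continuous_snd).mul heval
  pos ν v hv := by
    refine (isSolution_cauchySolution μ ν v).integral_sq_pos hμ fun h0 => hv ?_
    rw [cauchySolution_zero, cauchyDeriv_zero] at h0
    ext i
    fin_cases i
    · exact congr_fun h0 0
    · exact congr_fun h0 1

end TransferMatrix

section RobinProblem

variable {μ : Measure ℝ} [IsLocallyFiniteMeasure μ] [NullSingletonClass μ]

theorem IsEigen.pos {γ ν : ℝ} (hγ : 0 < γ) (h : IsEigen μ γ γ ν) : 0 < ν := by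
  obtain ⟨y, g, hsol, hne, h0, h1⟩ := isEigen_iff_exists_isSolution.1 h
  by_contra! hν
  have henergy := hsol.mul_sub_mul_eq hsol
  have hpotential : 0 ≤ ∫ t in (0 : ℝ)..1, y t * y t ∂μ :=
    intervalIntegral.integral_nonneg zero_le_one fun t _ => mul_self_nonneg (y t)
  have hkinetic : 0 ≤ ∫ t in (0 : ℝ)..1, g t * g t :=
    intervalIntegral.integral_nonneg zero_le_one fun t _ => mul_self_nonneg (g t)
  have hboundary : γ * (y 0 ^ 2 + y 1 ^ 2) ≤ 0 := by
    have : 0 ≤ -ν * ∫ t in (0 : ℝ)..1, y t * y t ∂μ := mul_nonneg (neg_nonneg.2 hν) hpotential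
    rw [sub_eq_zero.1 h0, eq_neg_of_add_eq_zero_left h1] at henergy
    linarith
  have hy0 : y 0 = 0 := by
    have := nonpos_of_mul_nonpos_right hboundary hγ
    nlinarith [sq_nonneg (y 0), sq_nonneg (y 1)]
  have hg0 : g 0 = 0 := by simpa [hy0] using h0
  exact hsol.ne_zero hne (by simp [hy0, hg0])

variable (μ) in
/-- The matrix carrying `(y(0) - r y'(0), y'(0))` to `(y(1) + r y'(1), y'(1))`: its upper right
entry vanishes exactly at the eigenvalues of the problem with `γ₀ = γ₁ = r⁻¹`. -/
noncomputable def robinMatrix (r ν : ℝ) : Matrix (Fin 2) (Fin 2) ℝ :=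
  shear r * transferMatrix μ ν * shear r

theorem IsSolution.robinMatrix_mulVec {r ν : ℝ} {y g : ℝ → ℝ} (h : IsSolution μ ν y g) :
    robinMatrix μ r ν *ᵥ ![y 0 - r * g 0, g 0] = ![y 1 + r * g 1, g 1] := by
  have hunshear : shear r *ᵥ ![y 0 - r * g 0, g 0] = ![y 0, g 0] := by
    rw [shear_mulVec, sub_add_cancel]
  rw [robinMatrix, ← mulVec_mulVec, ← mulVec_mulVec, hunshear, h.transferMatrix_mulVec,
    shear_mulVec]

theorem isEigen_inv_iff {r : ℝ} (hr : r ≠ 0) (ν : ℝ) :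
    IsEigen μ r⁻¹ r⁻¹ ν ↔ robinMatrix μ r ν 0 1 = 0 := by
  have hleft (x z : ℝ) : z - r⁻¹ * x = 0 ↔ x - r * z = 0 := by
    field_simp
    constructor <;> intro h <;> linarith
  have hright (x z : ℝ) : z + r⁻¹ * x = 0 ↔ x + r * z = 0 := by
    field_simp
    constructor <;> intro h <;> linarith
  simp only [isEigen_iff_exists_isSolution, hleft, hright]
  constructor
  · rintro ⟨y, g, hsol, hne, h0, h1⟩
    have hg0 : g 0 ≠ 0 := fun hg0 => hsol.ne_zero hne (by simpa [hg0] using h0)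
    have hentry := congr_fun (hsol.robinMatrix_mulVec (r := r)) 0
    simpa [mulVec, dotProduct, Fin.sum_univ_two, h0, h1, hg0] using hentry
  · intro hentry
    have hsol := isSolution_cauchySolution μ ν ![r, 1]
    have h0 := cauchySolution_zero μ ν ![r, 1]
    refine ⟨_, _, hsol, ⟨0, left_mem_Icc.2 zero_le_one, ?_⟩, ?_, ?_⟩
    · simpa [h0] using hr
    · simp [h0, cauchyDeriv_zero]
    · have := congr_fun (hsol.robinMatrix_mulVec (r := r)) 0
      simpa [mulVec, dotProduct, Fin.sum_univ_two, h0, cauchyDeriv_zero, hentry, eq_comm] using this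

theorem robinMatrix_zero (r : ℝ) : robinMatrix μ r 0 = shear (1 + 2 * r) := by
  rw [robinMatrix, transferMatrix_zero, shear_mul_shear, shear_mul_shear]
  ring_nf

theorem isHillPair_robinMatrix (hμ : μ (Ioc 0 1) ≠ 0) (r : ℝ) :
    IsHillPair (fun ν => robinMatrix μ r ν 0 1) fun ν => (robinMatrix μ r ν).trace :=
  ((isLagrangeFamily_transferMatrix hμ).mul_mul (det_shear r) (det_shear r)).isHillPair

theorem det_robinMatrix (hμ : μ (Ioc 0 1) ≠ 0) (r ν : ℝ) : (robinMatrix μ r ν).det = 1 :=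
  ((isLagrangeFamily_transferMatrix hμ).mul_mul (det_shear r) (det_shear r)).det_eq_one ν

end RobinProblem

section SelfSimilarity

variable {μ : Measure ℝ} {ν : ℝ} {y g : ℝ → ℝ}

theorem smul_restrict_eq_map_restrict [IsFiniteMeasure μ] {a c : ℝ} (ha : 0 < a) {m : NNReal}
    (hm : ∀ x ∈ Icc (0 : ℝ) 1, m * μ.real (Ioc c (c + a * x)) = μ.real (Ioc 0 x)) :
    m • μ.restrict (Ioc c (c + a)) = (μ.restrict (Ioc 0 1)).map fun x => c + a * x := by
  have hmeas : Measurable fun x : ℝ => c + a * x := by fun_prop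
  refine Measure.ext_of_Iic _ _ fun t => ?_
  obtain ⟨x, rfl⟩ : ∃ x, t = c + a * x := ⟨(t - c) / a, by field_simp; ring⟩
  have hpreimage : (fun x => c + a * x) ⁻¹' Iic (c + a * x) = Iic x := by
    ext z
    simp [mul_le_mul_iff_right₀ ha]
  have hcell : Iic (c + a * x) ∩ Ioc c (c + a) = Ioc c (c + a * min x 1) := by
    rw [inter_comm, Ioc_inter_Iic, mul_min_of_nonneg _ _ ha.le, ← min_add_add_left, mul_one,
      min_comm]
  have hunit : Iic x ∩ Ioc 0 1 = Ioc 0 (min x 1) := by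
    rw [inter_comm, Ioc_inter_Iic, min_comm]
  have hmass : m * μ.real (Ioc c (c + a * min x 1)) = μ.real (Ioc 0 (min x 1)) := by
    rcases le_total 0 x with hx | hx
    · exact hm _ ⟨le_min hx zero_le_one, min_le_right _ _⟩
    · have hmin : min x 1 ≤ 0 := min_le_of_left_le hx
      rw [Ioc_eq_empty_of_le hmin, Ioc_eq_empty_of_le (by nlinarith)]
      simp
  rw [Measure.map_apply hmeas measurableSet_Iic, hpreimage, Measure.smul_apply,
    Measure.restrict_apply measurableSet_Iic, Measure.restrict_apply measurableSet_Iic, hcell,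
    hunit, ← ENNReal.toReal_eq_toReal_iff' (ENNReal.nnreal_smul_ne_top (by finiteness))
      (by finiteness), ENNReal.toReal_smul]
  exact hmass

theorem mul_integral_eq_integral_comp_add_mul {a c : ℝ} (ha : 0 < a) {m : NNReal}
    (hm : m • μ.restrict (Ioc c (c + a)) = (μ.restrict (Ioc 0 1)).map fun x => c + a * x)
    (f : ℝ → ℝ) {x : ℝ} (hx : x ∈ Icc (0 : ℝ) 1) :
    m * ∫ t in c..c + a * x, f t ∂μ = ∫ t in (0 : ℝ)..x, f (c + a * t) ∂μ := by
  have hax : 0 ≤ a * x := mul_nonneg ha.le hx.1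
  have hax' : a * x ≤ a := mul_le_of_le_one_right ha.le hx.2
  have hembedding : MeasurableEmbedding fun x : ℝ => c + a * x :=
    (Homeomorph.addLeft c).measurableEmbedding.comp
      (Homeomorph.mulLeft₀ a ha.ne').measurableEmbedding
  have hpreimage : (fun t => c + a * t) ⁻¹' Ioc c (c + a * x) = Ioc 0 x := by
    ext z
    simp [mul_le_mul_iff_right₀ ha, mul_pos_iff_of_pos_left ha]
  have hmap := hembedding.setIntegral_map (μ := μ.restrict (Ioc 0 1)) f (Ioc c (c + a * x))
  rw [hpreimage, ← hm, Measure.restrict_smul, integral_smul_nnreal_measure,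
    Measure.restrict_restrict measurableSet_Ioc, Measure.restrict_restrict measurableSet_Ioc,
    inter_eq_left.2 (Ioc_subset_Ioc_right (by linarith)),
    inter_eq_left.2 (Ioc_subset_Ioc_right hx.2)] at hmap
  rw [intervalIntegral.integral_of_le (by linarith), intervalIntegral.integral_of_le hx.1, ← hmap,
    NNReal.smul_def, smul_eq_mul]

namespace IsSolution

theorem y_sub_eq_integral (h : IsSolution μ ν y g) {u v : ℝ} (hu : u ∈ Icc (0 : ℝ) 1)
    (hv : v ∈ Icc (0 : ℝ) 1) : y v - y u = ∫ t in u..v, g t := by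
  have hint {x : ℝ} (hx : x ∈ Icc (0 : ℝ) 1) : IntervalIntegrable g volume 0 x :=
    (h.continuousOn_g.mono (Icc_subset_Icc_right hx.2)).intervalIntegrable_of_Icc hx.1
  rw [h.y_eq v hv, h.y_eq u hu, add_sub_add_left_eq_sub,
    intervalIntegral.integral_interval_sub_left (hint hv) (hint hu)]

variable [IsLocallyFiniteMeasure μ]

theorem g_sub_eq_integral (h : IsSolution μ ν y g) {u v : ℝ} (hu : u ∈ Icc (0 : ℝ) 1)
    (hv : v ∈ Icc (0 : ℝ) 1) : g v - g u = -ν * ∫ t in u..v, y t ∂μ := by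
  have hint {x : ℝ} (hx : x ∈ Icc (0 : ℝ) 1) : IntervalIntegrable y μ 0 x :=
    (h.continuousOn_y.mono (Icc_subset_Icc_right hx.2)).intervalIntegrable_of_Icc hx.1
  rw [h.g_eq v hv, h.g_eq u hu,
    ← intervalIntegral.integral_interval_sub_left (hint hv) (hint hu)]
  ring

theorem comp_add_mul (h : IsSolution μ ν y g) {a c : ℝ} (ha : 0 < a) (hc : 0 ≤ c)
    (hca : c + a ≤ 1) {m : NNReal} (hm0 : m ≠ 0)
    (hm : m • μ.restrict (Ioc c (c + a)) = (μ.restrict (Ioc 0 1)).map fun x => c + a * x) :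
    IsSolution μ (a * ν / m) (fun x => y (c + a * x)) fun x => a * g (c + a * x) := by
  have hmaps : MapsTo (fun x => c + a * x) (Icc 0 1) (Icc 0 1) := fun x hx =>
    ⟨add_nonneg hc (mul_nonneg ha.le hx.1),
      (add_le_add_right (mul_le_of_le_one_right ha.le hx.2) c).trans hca⟩
  have hc' : c ∈ Icc (0 : ℝ) 1 := ⟨hc, by linarith⟩
  have hcont : ContinuousOn (fun x => c + a * x) (Icc 0 1) := by fun_prop
  refine ⟨h.continuousOn_y.comp hcont hmaps,
    continuousOn_const.mul (h.continuousOn_g.comp hcont hmaps), fun x hx => ?_, fun x hx => ?_⟩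
  · have hy := h.y_sub_eq_integral hc' (hmaps hx)
    rw [intervalIntegral.integral_const_mul, intervalIntegral.mul_integral_comp_add_mul, mul_zero,
      add_zero, ← hy]
    ring
  · have hg := h.g_sub_eq_integral hc' (hmaps hx)
    have hm0' : (m : ℝ) ≠ 0 := NNReal.coe_ne_zero.2 hm0
    rw [← mul_integral_eq_integral_comp_add_mul ha hm y hx, mul_zero, add_zero]
    field_simp
    linear_combination hg

theorem eq_affine_of_measure_Ioc_eq_zero (h : IsSolution μ ν y g) {u v : ℝ} (hu : 0 ≤ u)
    (huv : u ≤ v) (hv : v ≤ 1) (hμ : μ (Ioc u v) = 0) : y v = y u + (v - u) * g u ∧ g v = g u := by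
  have hu' : u ∈ Icc (0 : ℝ) 1 := ⟨hu, huv.trans hv⟩
  have hg : ∀ x ∈ Icc u v, g x = g u := by
    intro x hx
    have hnull : μ (Ioc u x) = 0 := measure_mono_null (Ioc_subset_Ioc_right hx.2) hμ
    have hsub := h.g_sub_eq_integral hu' ⟨hu.trans hx.1, hx.2.trans hv⟩
    rwa [intervalIntegral.integral_of_le hx.1, setIntegral_measure_zero y hnull, mul_zero,
      sub_eq_zero] at hsub
  have hy : y v - y u = (v - u) * g u := by
    rw [h.y_sub_eq_integral hu' ⟨hu.trans huv, hv⟩,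
      intervalIntegral.integral_congr (g := fun _ => g u) (uIcc_of_le huv ▸ hg)]
    simp
  exact ⟨sub_eq_iff_eq_add'.1 hy, hg v (right_mem_Icc.2 huv)⟩

end IsSolution

end SelfSimilarity

section CantorMeasure

/-- The mass distribution of a Cantor-type self-similar measure: `[0, 1]` is cut into `n + 1` cells
of length `a`, each carrying a copy of `μ` scaled by `1 / (n + 1)`, and `n` gaps of length `b`
carrying no mass. The number of cells is the paper's `κ`. -/
structure IsCantorMeasure (n : ℕ) (a b : ℝ) (μ : Measure ℝ) : Prop where
  a_pos : 0 < a
  b_pos : 0 < b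
  total_length : (n + 1) * a + n * b = 1
  measure_ne_zero : μ (Ioc 0 1) ≠ 0
  cell : ∀ k ≤ n, ∀ x ∈ Icc (0 : ℝ) 1,
    (n + 1) * μ.real (Ioc (k * (a + b)) (k * (a + b) + a * x)) = μ.real (Ioc 0 x)
  gap : ∀ k < n, μ (Ioc (k * (a + b) + a) ((k + 1 : ℕ) * (a + b))) = 0

namespace IsCantorMeasure

variable {μ : Measure ℝ} {n : ℕ} {a b ν : ℝ} {y g : ℝ → ℝ}

theorem cell_nonneg (h : IsCantorMeasure n a b μ) (k : ℕ) : 0 ≤ k * (a + b) :=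
  mul_nonneg k.cast_nonneg (add_pos h.a_pos h.b_pos).le

theorem cell_le_one (h : IsCantorMeasure n a b μ) {k : ℕ} (hk : k ≤ n) : k * (a + b) + a ≤ 1 := by
  have hab : 0 < a + b := add_pos h.a_pos h.b_pos
  have hkn : (k : ℝ) ≤ n := Nat.cast_le.2 hk
  nlinarith [h.total_length]

variable [IsFiniteMeasure μ]

theorem shear_mulVec_gap (h : IsCantorMeasure n a b μ) (hsol : IsSolution μ ν y g) {k : ℕ}
    (hk : k < n) :
    shear (b / a) *ᵥ ![y (k * (a + b) + a), a * g (k * (a + b) + a)] =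
      ![y ((k + 1 : ℕ) * (a + b)), a * g ((k + 1 : ℕ) * (a + b))] := by
  have ha := h.a_pos
  have hb := h.b_pos
  have hlength : ((k + 1 : ℕ) : ℝ) * (a + b) - (k * (a + b) + a) = b := by push_cast; ring
  obtain ⟨hy, hg⟩ := hsol.eq_affine_of_measure_Ioc_eq_zero (by linarith [h.cell_nonneg k])
    (by linarith) (by linarith [h.cell_le_one (Nat.succ_le_of_lt hk)]) (h.gap k hk)
  rw [shear_mulVec, hy, hg, hlength, ← mul_assoc, div_mul_cancel₀ b ha.ne']

variable [NullSingletonClass μ]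

theorem transferMatrix_mulVec_cell (h : IsCantorMeasure n a b μ) (hsol : IsSolution μ ν y g)
    {k : ℕ} (hk : k ≤ n) :
    transferMatrix μ (a * ν / (n + 1)) *ᵥ ![y (k * (a + b)), a * g (k * (a + b))] =
      ![y (k * (a + b) + a), a * g (k * (a + b) + a)] := by
  have hm := smul_restrict_eq_map_restrict (m := n + 1) h.a_pos (by simpa using h.cell k hk)
  have hrescaled := hsol.comp_add_mul h.a_pos (h.cell_nonneg k) (h.cell_le_one hk)
    (by positivity) hm
  simpa using hrescaled.transferMatrix_mulVec

theorem robinMatrix_pow_mulVec (h : IsCantorMeasure n a b μ) (hsol : IsSolution μ ν y g) {k : ℕ}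
    (hk : k ≤ n) :
    robinMatrix μ (b / (2 * a)) (a * ν / (n + 1)) ^ (k + 1) *ᵥ
        shear (-(b / (2 * a))) *ᵥ ![y 0, a * g 0] =
      shear (b / (2 * a)) *ᵥ ![y (k * (a + b) + a), a * g (k * (a + b) + a)] := by
  set r := b / (2 * a) with hr
  set M := robinMatrix μ r (a * ν / (n + 1)) with hM
  have hcell {k : ℕ} (hk : k ≤ n) :
      M *ᵥ shear (-r) *ᵥ ![y (k * (a + b)), a * g (k * (a + b))] =
        shear r *ᵥ ![y (k * (a + b) + a), a * g (k * (a + b) + a)] := by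
    rw [hM, robinMatrix, mulVec_mulVec, Matrix.mul_assoc, shear_mul_shear, add_neg_cancel,
      shear_zero, Matrix.mul_one, ← mulVec_mulVec, h.transferMatrix_mulVec_cell hsol hk]
  induction k with
  | zero => simpa using hcell hk
  | succ k ih =>
    have hgap : shear (-r) *ᵥ ![y ((k + 1 : ℕ) * (a + b)), a * g ((k + 1 : ℕ) * (a + b))] =
        shear r *ᵥ ![y (k * (a + b) + a), a * g (k * (a + b) + a)] := by
      have ha := h.a_pos
      rw [← h.shear_mulVec_gap hsol hk, mulVec_mulVec, shear_mul_shear]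
      congr 2
      rw [hr]
      field_simp
      ring
    rw [pow_succ', ← mulVec_mulVec, ih (by lia), ← hgap, hcell hk]

theorem robinMatrix_apply_zero_one (h : IsCantorMeasure n a b μ) (ν : ℝ) :
    robinMatrix μ (b / 2) ν 0 1 =
      (robinMatrix μ (b / (2 * a)) (a * ν / (n + 1)) ^ (n + 1)) 0 1 * a := by
  set r := b / (2 * a) with hr
  have hra : r * a = b / 2 := by
    have ha := h.a_pos
    rw [hr]
    field_simp
  have hend : n * (a + b) + a = 1 := by linarith [h.total_length]
  have hsol := isSolution_cauchySolution μ ν ![b / 2, 1]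
  have hrobin := congr_fun (hsol.robinMatrix_mulVec (r := b / 2)) 0
  have hpow := congr_fun (h.robinMatrix_pow_mulVec hsol le_rfl) 0
  rw [shear_mulVec, shear_mulVec, ← mul_assoc, ← mul_assoc, neg_mul, ← hr, hra, hend] at hpow
  simp only [cauchySolution_zero, cauchyDeriv_zero, mulVec, dotProduct, Fin.sum_univ_two,
    cons_val_zero, cons_val_one] at hrobin hpow
  linarith

theorem isEigen_two_mul_div_iff (h : IsCantorMeasure n a b μ) :
    IsEigen μ (2 * a / b) (2 * a / b) ν ↔ robinMatrix μ (b / (2 * a)) ν 0 1 = 0 := by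
  have ha := h.a_pos
  have hb := h.b_pos
  rw [← isEigen_inv_iff (by positivity), inv_div]

theorem isEigen_two_div_iff (h : IsCantorMeasure n a b μ) :
    IsEigen μ (2 / b) (2 / b) ν ↔
      robinMatrix μ (b / (2 * a)) (a * ν / (n + 1)) 0 1 = 0 ∨
        (Polynomial.Chebyshev.S ℝ n).eval
          (robinMatrix μ (b / (2 * a)) (a * ν / (n + 1))).trace = 0 := by
  have hb := h.b_pos
  rw [← inv_div, isEigen_inv_iff (by positivity), h.robinMatrix_apply_zero_one,
    mul_eq_zero_iff_right h.a_pos.ne',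
    pow_succ_apply_zero_one (det_robinMatrix h.measure_ne_zero _ _), mul_eq_zero, or_comm]

theorem enumeration_eq (h : IsCantorMeasure n a b μ) {lam mu : ℕ → ℝ} (hlam : StrictMono lam)
    (hlamrange : range lam = {l | IsEigen μ (2 / b) (2 / b) l}) (hmu : StrictMono mu)
    (hmurange : range mu = {l | IsEigen μ (2 * a / b) (2 * a / b) l}) (m : ℕ) :
    lam ((n + 1) * (m + 1) - 1) = (n + 1) / a * mu m := by
  have ha := h.a_pos
  have hb := h.b_pos
  have hscale : 0 < a / (n + 1) := by positivity
  have hlampos (i : ℕ) : 0 < lam i :=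
    IsEigen.pos (μ := μ) (γ := 2 / b) (by positivity) (hlamrange.subset (mem_range_self i))
  have hrange : range (fun i => a / (n + 1) * lam i) =
      (fun ν => robinMatrix μ (b / (2 * a)) ν 0 1) ⁻¹' {0} ∪
        (fun ν => (robinMatrix μ (b / (2 * a)) ν).trace) ⁻¹'
          {x | (Polynomial.Chebyshev.S ℝ n).eval x = 0} := by
    ext ν
    obtain ⟨l, rfl⟩ : ∃ l, ν = a / (n + 1) * l := ⟨(n + 1) / a * ν, by field_simp⟩
    have heigen : IsEigen μ (2 / b) (2 / b) l ↔ l ∈ range lam := by rw [hlamrange]; rfl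
    rw [h.isEigen_two_div_iff, mul_div_right_comm] at heigen
    simpa [mul_right_inj' hscale.ne'] using heigen.symm
  have hperiod := (isHillPair_robinMatrix h.measure_ne_zero (b / (2 * a))).enumeration_eq
    (setOf_eval_chebyshev_S_eq_zero_subset n) (encard_setOf_eval_chebyshev_S_eq_zero n)
    (by simp only [robinMatrix_zero, shear, of_apply, cons_val_zero, cons_val_one]; positivity)
    (by simp [robinMatrix_zero, shear, trace_fin_two, one_add_one_eq_two])
    (hlam.const_mul hscale) hrange
    (fun i => mul_pos hscale (hlampos i)) hmu
    (hmurange.trans (ext fun ν => h.isEigen_two_mul_div_iff)) m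
  rw [← hperiod]
  field_simp

end IsCantorMeasure

end CantorMeasure

section DistributionFunction

variable {P : ℝ → ℝ} {μ : Measure ℝ}

theorem isFiniteMeasure_of_distribution
    (hμ : ∀ x ∈ Icc (0 : ℝ) 1, μ (Icc 0 x) = ENNReal.ofReal (P x))
    (hμc : μ (Icc (0 : ℝ) 1)ᶜ = 0) : IsFiniteMeasure μ := by
  refine ⟨?_⟩
  rw [← measure_add_measure_compl (measurableSet_Icc (a := (0 : ℝ)) (b := 1)), hμc,
    hμ 1 (right_mem_Icc.2 zero_le_one), add_zero]
  exact ENNReal.ofReal_lt_top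

variable [IsFiniteMeasure μ]

theorem measureReal_Ioc_of_distribution (hP0 : P 0 = 0) (hPmono : MonotoneOn P (Icc 0 1))
    (hμ : ∀ x ∈ Icc (0 : ℝ) 1, μ (Icc 0 x) = ENNReal.ofReal (P x)) {u v : ℝ} (hu : 0 ≤ u)
    (huv : u ≤ v) (hv : v ≤ 1) : μ.real (Ioc u v) = P v - P u := by
  have hIcc {x : ℝ} (hx : x ∈ Icc (0 : ℝ) 1) : μ.real (Icc 0 x) = P x := by
    rw [Measure.real, hμ x hx, ENNReal.toReal_ofReal]
    exact hP0 ▸ hPmono (left_mem_Icc.2 zero_le_one) hx hx.1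
  have hdiff : Ioc u v = Icc 0 v \ Icc 0 u := by
    ext x
    simp only [mem_Ioc, Set.mem_sdiff, mem_Icc]
    grind
  rw [hdiff, measureReal_sdiff (Icc_subset_Icc_right huv) measurableSet_Icc,
    hIcc ⟨hu.trans huv, hv⟩, hIcc ⟨hu, huv.trans hv⟩]

theorem nullSingletonClass_of_distribution (hP0 : P 0 = 0) (hPc : ContinuousOn P (Icc 0 1))
    (hPmono : MonotoneOn P (Icc 0 1))
    (hμ : ∀ x ∈ Icc (0 : ℝ) 1, μ (Icc 0 x) = ENNReal.ofReal (P x))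
    (hμc : μ (Icc (0 : ℝ) 1)ᶜ = 0) : NullSingletonClass μ := by
  refine ⟨fun x => ?_⟩
  by_cases hx : x ∈ Icc (0 : ℝ) 1
  swap
  · exact measure_mono_null (singleton_subset_iff.2 hx) hμc
  rcases hx.1.eq_or_lt with rfl | hx0
  · simpa [hP0] using hμ 0 hx
  have hbound : ∀ᶠ z in 𝓝[<] x, μ.real {x} ≤ P x - P z := by
    filter_upwards [Ioo_mem_nhdsLT hx0] with z hz
    rw [← measureReal_Ioc_of_distribution hP0 hPmono hμ hz.1.le hz.2.le hx.2]
    exact measureReal_mono (singleton_subset_iff.2 ⟨hz.2, le_rfl⟩)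
  have hlim : Tendsto (fun z => P x - P z) (𝓝[<] x) (𝓝 (P x - P x)) := by
    refine tendsto_const_nhds.sub ((hPc x hx).mono_left (nhdsWithin_le_of_mem ?_))
    filter_upwards [Ioo_mem_nhdsLT hx0] with z hz
    exact ⟨hz.1.le, hz.2.le.trans hx.2⟩
  have hle := ge_of_tendsto hlim hbound
  rw [sub_self] at hle
  exact (measureReal_eq_zero_iff).1 (le_antisymm hle measureReal_nonneg)

theorem eq_of_eqOn_Ioo_const {f : ℝ → ℝ} {u v c : ℝ} (huv : u < v)
    (hf : ContinuousOn f (Icc u v)) (hc : ∀ x ∈ Ioo u v, f x = c) : f u = f v := by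
  have hconst : EqOn f (fun _ => c) (Icc u v) :=
    EqOn.of_subset_closure hc hf continuousOn_const Ioo_subset_Icc_self (closure_Ioo huv.ne).ge
  rw [hconst (left_mem_Icc.2 huv.le), hconst (right_mem_Icc.2 huv.le)]

theorem CantorType.isCantorMeasure {n : ℕ} {a b : ℝ} (ha : 0 < a) (hb : 0 < b)
    (hlength : (n + 1) * a + n * b = 1) (hP : CantorType (n + 1) a b P)
    (hPmono : MonotoneOn P (Icc 0 1))
    (hμ : ∀ x ∈ Icc (0 : ℝ) 1, μ (Icc 0 x) = ENNReal.ofReal (P x)) :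
    IsCantorMeasure n a b μ := by
  obtain ⟨hPc, hP0, hP1, hPgap, hPcell⟩ := hP
  have hmass {u v : ℝ} (hu : 0 ≤ u) (huv : u ≤ v) (hv : v ≤ 1) : μ.real (Ioc u v) = P v - P u :=
    measureReal_Ioc_of_distribution hP0 hPmono hμ hu huv hv
  have hleft (k : ℕ) : 0 ≤ k * (a + b) := by positivity
  have hright {k : ℕ} (hk : k ≤ n) : k * (a + b) + a ≤ 1 := by
    have : (k : ℝ) ≤ n := Nat.cast_le.2 hk
    nlinarith
  refine ⟨ha, hb, hlength, fun hzero => ?_, fun k hk x hx => ?_, fun k hk => ?_⟩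
  · simpa [Measure.real, hzero, hP0, hP1] using hmass le_rfl zero_le_one le_rfl
  · obtain ⟨d, hd⟩ := hPcell k hk
    have hax : 0 ≤ a * x := mul_nonneg ha.le hx.1
    have hax' : a * x ≤ a := mul_le_of_le_one_right ha.le hx.2
    have hd0 := hd 0 (left_mem_Icc.2 zero_le_one)
    have hdx := hd x hx
    rw [hmass (hleft k) (by linarith) (by linarith [hright hk]), hmass le_rfl hx.1 hx.2]
    push_cast at hd0 hdx
    rw [mul_zero, add_zero] at hd0
    linarith
  · obtain ⟨c, hc⟩ := hPgap (k + 1) (Nat.le_add_left 1 k) hk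
    rw [Nat.cast_succ, add_sub_cancel_right, ← Nat.cast_succ] at hc
    have hlt : k * (a + b) + a < (k + 1 : ℕ) * (a + b) := by push_cast; linarith
    have hle : (k + 1 : ℕ) * (a + b) ≤ 1 := by linarith [hright (Nat.succ_le_of_lt hk)]
    have hnonneg : 0 ≤ k * (a + b) + a := add_nonneg (hleft k) ha.le
    have hends := eq_of_eqOn_Ioo_const hlt (hPc.mono (Icc_subset_Icc hnonneg hle)) hc
    rw [← measureReal_eq_zero_iff, hmass hnonneg hlt.le hle, hends, sub_self]

end DistributionFunction

theorem third_problem_spectral_periodicity (κ : ℕ) (a b : ℝ) (hκ : 2 ≤ κ)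
    (ha : 0 < a) (ha' : a < 1 / κ) (hb : b = (1 - κ * a) / (κ - 1))
    (P : ℝ → ℝ) (hP : CantorType κ a b P) (hPmono : MonotoneOn P (Set.Icc 0 1))
    (μ : Measure ℝ)
    (hμ : ∀ x ∈ Set.Icc (0 : ℝ) 1, μ (Set.Icc 0 x) = ENNReal.ofReal (P x))
    (hμc : μ (Set.Icc (0 : ℝ) 1)ᶜ = 0)
    (lam : ℕ → ℝ) (hlam : StrictMono lam)
    (hlamrange : Set.range lam = {l : ℝ | IsEigen μ (2 / b) (2 / b) l})
    (mu : ℕ → ℝ) (hmu : StrictMono mu)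
    (hmurange : Set.range mu = {l : ℝ | IsEigen μ (2 * a / b) (2 * a / b) l}) :
    ∀ n : ℕ, lam (κ * (n + 1) - 1) = (κ / a) * mu n := by
  obtain ⟨n, rfl⟩ : ∃ n, κ = n + 1 := ⟨κ - 1, by lia⟩
  have hn : (0 : ℝ) < n := Nat.cast_pos.2 (by lia)
  push_cast at ha' hb
  rw [add_sub_cancel_right] at hb
  have hb0 : 0 < b := by
    rw [lt_div_iff₀' (by positivity)] at ha'
    rw [hb]
    exact div_pos (sub_pos.2 ha') hn
  have hlength : (n + 1) * a + n * b = 1 := by rw [hb]; field_simp; ring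
  have := isFiniteMeasure_of_distribution hμ hμc
  have := nullSingletonClass_of_distribution hP.2.1 hP.1 hPmono hμ hμc
  intro m
  rw [Nat.cast_succ]
  exact (hP.isCantorMeasure ha hb0 hlength hPmono hμ).enumeration_eq hlam hlamrange hmu hmurange m
end

section
/- Suppose κ is even. Let (λ_n)_{n∈ℕ} be a strictly increasing enumeration of all eigenvalues of the Neumann problem (γ₀ = γ₁ = 0) for the equation −y'' − λρy = 0 with weight ρ the distributional derivative of the Cantor-type self-similar function P with parameters κ, a, b, and let (μ_n)_{n∈ℕ} be a strictly increasing enumeration of all eigenvalues of the problem with γ₀ = 0, γ₁ = 2a/b for the same equation. Then for every n ∈ ℕ one has λ_{κn + κ/2} = (κ/a)·μ_n. -/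
open MeasureTheory

/-!
Write `M ν` for the matrix taking the initial data of a solution at parameter `ν` to its final data,
with entries `A, B, C, D`. The Neumann eigenvalues are the zeros of `C`. Since `μ` is symmetric,
`A = D`, so the eigenvalues of the mixed problem are the zeros of the Hill discriminant
`θ = (A + D + (b / a) C) / 2`. By self-similarity, the matrix at parameter `(κ / a) ν` is, up to
rescaling, a product of `κ` copies of `M ν` separated by the gap matrix, whence
`a C ((κ / a) ν) = U_{κ - 1} (θ ν) C ν` with `U` the Chebyshev polynomials of the second kind.

On the bands `|θ| ≤ 1` the function `θ` is strictly monotone, and its bands are separated by the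
zeros of `C`. So the spectrum is parametrized by the phase `φ` with `θ = cos φ`: the `n`-th Neumann
eigenvalue has phase `n π` and the `n`-th mixed eigenvalue phase `(n + 1 / 2) π`. The zeros of
`U_{κ - 1} (θ ν) C ν` have phases `m π / κ`, so multiplication by `κ / a` takes the point of phase
`m π / κ` to the `m`-th Neumann eigenvalue; take `m = κ n + κ / 2`.
-/

namespace KreinString

open Set Filter Topology unitInterval

theorem isUnit_one_sub_of_norm_pow_lt_one {R : Type*} [NormedRing R] [CompleteSpace R]
    {x : R} {n : ℕ} (h : ‖x ^ n‖ < 1) : IsUnit (1 - x) := by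
  have hfactor : IsUnit ((1 - x) * ∑ i ∈ Finset.range n, x ^ i) := by
    rw [mul_neg_geom_sum]
    exact isUnit_one_sub_of_norm_lt_one h
  have hcomm : Commute (1 - x) (∑ i ∈ Finset.range n, x ^ i) :=
    Commute.sum_right _ _ _ fun i _ =>
      ((Commute.one_left x).sub_left (Commute.refl x)).pow_right i
  exact (hcomm.isUnit_mul_iff.1 hfactor).1

theorem isUnit_one_add_smul_of_norm_pow_le {R : Type*} [NormedRing R] [NormedAlgebra ℝ R]
    [CompleteSpace R] {x : R} {m : ℝ} (h : ∀ k : ℕ, ‖x ^ k‖ ≤ m ^ k / k.factorial) (ν : ℝ) :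
    IsUnit (1 + ν • x) := by
  obtain ⟨n, hn⟩ := ((FloorSemiring.tendsto_pow_div_factorial_atTop
    (|ν| * m)).eventually_lt_const zero_lt_one).exists
  have hpow : ‖(-(ν • x)) ^ n‖ < 1 := by
    calc ‖(-(ν • x)) ^ n‖ = |ν| ^ n * ‖x ^ n‖ := by
          rw [← neg_smul, smul_pow, norm_smul, norm_pow, norm_neg, Real.norm_eq_abs]
      _ ≤ |ν| ^ n * (m ^ n / n.factorial) := by
          gcongr
          exact h n
      _ = (|ν| * m) ^ n / n.factorial := by ring
      _ < 1 := hn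
  simpa only [sub_neg_eq_add] using isUnit_one_sub_of_norm_pow_lt_one hpow

theorem continuous_inverse_one_add_smul {R : Type*} [NormedRing R] [NormedAlgebra ℝ R]
    [CompleteSpace R] {x : R} (h : ∀ ν : ℝ, IsUnit (1 + ν • x)) :
    Continuous fun ν : ℝ => Ring.inverse (1 + ν • x) :=
  continuous_iff_continuousAt.2 fun ν => by
    have hinv := NormedRing.inverse_continuousAt (h ν).unit
    rw [IsUnit.unit_spec] at hinv
    exact hinv.comp (f := fun ν : ℝ => 1 + ν • x) (by fun_prop)

section Volterra

variable (μ : Measure ℝ) [IsLocallyFiniteMeasure μ]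

theorem norm_integral_IccExtend_le {f : C(I, ℝ)} {M : ℝ} (x : I) (hf : ∀ t ≤ x, ‖f t‖ ≤ M) :
    ‖∫ t in (0 : ℝ)..x, IccExtend zero_le_one f t ∂μ‖ ≤ μ.real (Ioc 0 1) * M := by
  have hM : 0 ≤ M := (norm_nonneg _).trans (hf x le_rfl)
  rw [intervalIntegral.integral_of_le x.2.1, mul_comm]
  calc ‖∫ t in Ioc (0 : ℝ) x, IccExtend zero_le_one f t ∂μ‖
      ≤ M * μ.real (Ioc 0 (x : ℝ)) :=
        norm_setIntegral_le_of_norm_le_const measure_Ioc_lt_top fun t ht =>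
          hf _ <| (projIcc_of_mem zero_le_one ⟨ht.1.le, ht.2.trans x.2.2⟩).trans_le ht.2
    _ ≤ M * μ.real (Ioc 0 1) := by
        gcongr
        · exact measure_Ioc_lt_top.ne
        · exact x.2.2

variable [NullSingletonClass μ]

/-- The indefinite integral `x ↦ ∫₀ˣ f dμ` as a bounded operator on the continuous functions on
`[0, 1]`; the integrand is extended to the real line by constants. -/
noncomputable def primitive : C(I, ℝ) →L[ℝ] C(I, ℝ) :=
  LinearMap.mkContinuous
    { toFun f :=
        { toFun x := ∫ t in (0 : ℝ)..x, IccExtend zero_le_one f t ∂μ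
          continuous_toFun := (intervalIntegral.continuous_primitive
            (fun _ _ => (f.continuous.Icc_extend' (h := zero_le_one)).intervalIntegrable _ _)
            0).comp continuous_subtype_val }
      map_add' f g := by
        ext x
        exact intervalIntegral.integral_add
          ((f.continuous.Icc_extend' (h := zero_le_one)).intervalIntegrable _ _)
          ((g.continuous.Icc_extend' (h := zero_le_one)).intervalIntegrable _ _)
      map_smul' c f := by
        ext x
        exact intervalIntegral.integral_const_mul c _ }
    (μ.real (Ioc 0 1)) fun f => (ContinuousMap.norm_le _ (by positivity)).2 fun x =>
      norm_integral_IccExtend_le μ x fun _ _ => f.norm_coe_le_norm _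

theorem primitive_apply_eq_integral {f : C(I, ℝ)} {h : ℝ → ℝ} (hf : ∀ t : I, f t = h t) (x : I) :
    primitive μ f x = ∫ t in (0 : ℝ)..x, h t ∂μ := by
  refine intervalIntegral.integral_congr fun t ht => ?_
  rw [uIcc_of_le x.2.1] at ht
  have htI : t ∈ I := ⟨ht.1, ht.2.trans x.2.2⟩
  rw [IccExtend_of_mem zero_le_one f htI, hf]

/-- The Volterra operator `f ↦ (x ↦ ∫₀ˣ ∫₀ᵗ f dμ dt)`: the equation `y'' = -ν μ y` with initial
data `y 0 = c`, `y' 0 = d` reads `(1 + ν • volterra μ) y = c + d x`. -/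
noncomputable def volterra : C(I, ℝ) →L[ℝ] C(I, ℝ) := primitive volume ∘L primitive μ

theorem volterra_apply_eq_integral {f : C(I, ℝ)} {h : ℝ → ℝ} (hf : ∀ t : I, f t = h t) (x : I) :
    volterra μ f x = ∫ t in (0 : ℝ)..x, ∫ s in (0 : ℝ)..t, h s ∂μ :=
  primitive_apply_eq_integral volume (primitive_apply_eq_integral μ hf) x

theorem norm_volterra_pow_apply_le (f : C(I, ℝ)) (k : ℕ) (x : I) :
    ‖(volterra μ ^ k) f x‖ ≤ μ.real (Ioc 0 1) ^ k * ‖f‖ * ((x : ℝ) ^ k / k.factorial) := by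
  induction k generalizing x with
  | zero => simpa using f.norm_coe_le_norm x
  | succ k ih =>
    set m := μ.real (Ioc 0 1)
    have hinner (t : ℝ) (ht : t ∈ I) : ‖primitive μ ((volterra μ ^ k) f) ⟨t, ht⟩‖ ≤
        m ^ (k + 1) * ‖f‖ * (t ^ k / k.factorial) := by
      calc _ ≤ m * (m ^ k * ‖f‖ * (t ^ k / k.factorial)) :=
            norm_integral_IccExtend_le μ _ fun s hs => (ih s).trans <| by
              have hst : (s : ℝ) ≤ t := hs
              have := s.2.1
              gcongr
        _ = _ := by ring
    rw [pow_succ']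
    calc ‖primitive volume (primitive μ ((volterra μ ^ k) f)) x‖
        ≤ ∫ t in (0 : ℝ)..x, m ^ (k + 1) * ‖f‖ * (t ^ k / k.factorial) := by
          have hint : Continuous fun t : ℝ => m ^ (k + 1) * ‖f‖ * (t ^ k / k.factorial) := by
            fun_prop
          refine intervalIntegral.norm_integral_le_of_norm_le x.2.1
            (.of_forall fun t ht => ?_) (hint.intervalIntegrable 0 x)
          have htI : t ∈ I := ⟨ht.1.le, ht.2.trans x.2.2⟩
          rw [IccExtend_of_mem zero_le_one _ htI]
          exact hinner t htI
      _ = m ^ (k + 1) * ‖f‖ * ((x : ℝ) ^ (k + 1) / (k + 1).factorial) := by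
          rw [intervalIntegral.integral_const_mul, intervalIntegral.integral_div, integral_pow,
            zero_pow k.succ_ne_zero, sub_zero, div_div, Nat.factorial_succ]
          push_cast
          rfl

theorem norm_volterra_pow_le (k : ℕ) :
    ‖volterra μ ^ k‖ ≤ μ.real (Ioc 0 1) ^ k / k.factorial := by
  refine ContinuousLinearMap.opNorm_le_bound _ (by positivity) fun f =>
    (ContinuousMap.norm_le _ (by positivity)).2 fun x => ?_
  calc ‖(volterra μ ^ k) f x‖
      ≤ μ.real (Ioc 0 1) ^ k * ‖f‖ * ((x : ℝ) ^ k / k.factorial) :=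
        norm_volterra_pow_apply_le μ f k x
    _ ≤ μ.real (Ioc 0 1) ^ k * ‖f‖ * (1 / k.factorial) := by
        gcongr
        exact pow_le_one₀ x.2.1 x.2.2
    _ = μ.real (Ioc 0 1) ^ k / k.factorial * ‖f‖ := by ring

theorem isUnit_one_add_smul_volterra (ν : ℝ) : IsUnit (1 + ν • volterra μ) :=
  isUnit_one_add_smul_of_norm_pow_le (R := C(I, ℝ) →L[ℝ] C(I, ℝ)) (norm_volterra_pow_le μ) ν

end Volterra

/-- `y` solves the string equation `-y'' = ν μ y` on `[0, 1]` with quasi-derivative `g`, written as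
the first-order integral system `y = y 0 + ∫ g`, `g = g 0 - ν ∫ y dμ`. -/
structure IsSolution (μ : Measure ℝ) (ν : ℝ) (y g : ℝ → ℝ) : Prop where
  continuousOn_fst : ContinuousOn y I
  continuousOn_snd : ContinuousOn g I
  fst_eq : ∀ x ∈ I, y x = y 0 + ∫ t in (0 : ℝ)..x, g t
  snd_eq : ∀ x ∈ I, g x = g 0 - ν * ∫ t in (0 : ℝ)..x, y t ∂μ

theorem intervalIntegrable_of_continuousOn_unitInterval {μ : Measure ℝ} [IsLocallyFiniteMeasure μ]
    {f : ℝ → ℝ} (hf : ContinuousOn f I) {x z : ℝ} (hx : x ∈ I) (hz : z ∈ I) :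
    IntervalIntegrable f μ x z :=
  (hf.mono (uIcc_subset_Icc hx hz)).intervalIntegrable

section Solution

/-- The function `x ↦ c + d x` on `[0, 1]`. -/
def affine (c d : ℝ) : C(I, ℝ) where
  toFun x := c + d * x

variable (μ : Measure ℝ) [IsLocallyFiniteMeasure μ] [NullSingletonClass μ]

/-- The solution of the string equation `-y'' = ν μ y` with initial data `y 0 = c`, `y' 0 = d`,
extended to the real line by constants. -/
noncomputable def solution (c d ν : ℝ) : ℝ → ℝ :=
  IccExtend zero_le_one (Ring.inverse (1 + ν • volterra μ) (affine c d))

/-- The quasi-derivative of `solution μ c d ν`. -/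
noncomputable def quasiDeriv (c d ν x : ℝ) : ℝ :=
  d - ν * ∫ t in (0 : ℝ)..x, solution μ c d ν t ∂μ

variable {μ} {ν : ℝ}

theorem continuous_solution (c d : ℝ) : Continuous (solution μ c d ν) :=
  (ContinuousMap.continuous _).Icc_extend'

theorem solution_of_mem (c d : ℝ) {x : ℝ} (hx : x ∈ I) :
    solution μ c d ν x = Ring.inverse (1 + ν • volterra μ) (affine c d) ⟨x, hx⟩ :=
  IccExtend_of_mem _ _ hx

theorem solution_eq (c d : ℝ) {x : ℝ} (hx : x ∈ I) :
    solution μ c d ν x =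
      c + d * x - ν * ∫ t in (0 : ℝ)..x, ∫ s in (0 : ℝ)..t, solution μ c d ν s ∂μ := by
  set f := Ring.inverse (1 + ν • volterra μ) (affine c d)
  have hres : f + ν • volterra μ f = affine c d := by
    simpa using congr($(Ring.mul_inverse_cancel _ (isUnit_one_add_smul_volterra μ ν)) (affine c d))
  have hval : f ⟨x, hx⟩ + ν * volterra μ f ⟨x, hx⟩ = c + d * x := congr($hres ⟨x, hx⟩)
  rw [volterra_apply_eq_integral μ fun t => (solution_of_mem c d t.2).symm] at hval
  rw [solution_of_mem c d hx, ← hval, add_sub_cancel_right]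

theorem solution_zero_right (c d : ℝ) : solution μ c d ν 0 = c := by
  simpa using solution_eq (μ := μ) (ν := ν) c d unitInterval.zero_mem

theorem quasiDeriv_zero_right (c d : ℝ) : quasiDeriv μ c d ν 0 = d := by
  simp [quasiDeriv]

theorem isSolution_solution (c d ν : ℝ) :
    IsSolution μ ν (solution μ c d ν) (quasiDeriv μ c d ν) := by
  have hprim : Continuous fun x => ∫ t in (0 : ℝ)..x, solution μ c d ν t ∂μ :=
    intervalIntegral.continuous_primitive
      (fun _ _ => (continuous_solution c d).intervalIntegrable _ _) 0
  refine ⟨(continuous_solution c d).continuousOn, (by unfold quasiDeriv; fun_prop),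
    fun x hx => ?_, fun x _ => by rw [quasiDeriv_zero_right, quasiDeriv]⟩
  unfold quasiDeriv
  rw [solution_zero_right, solution_eq c d hx,
    intervalIntegral.integral_sub intervalIntegrable_const
      ((hprim.intervalIntegrable _ _).const_mul ν),
    intervalIntegral.integral_const_mul, intervalIntegral.integral_const, smul_eq_mul]
  ring

namespace IsSolution

variable {y g : ℝ → ℝ}

theorem eqOn_solution (h : IsSolution μ ν y g) : EqOn y (solution μ (y 0) (g 0) ν) I := by
  set f : C(I, ℝ) := ⟨domRestrict I y, h.continuousOn_fst.domRestrict⟩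
  have hf : (1 + ν • volterra μ) f = affine (y 0) (g 0) := by
    ext x
    have hint : ∫ t in (0 : ℝ)..x, g t =
        g 0 * x - ν * ∫ t in (0 : ℝ)..x, ∫ s in (0 : ℝ)..t, y s ∂μ := by
      have hprim : ContinuousOn (fun t => ∫ s in (0 : ℝ)..t, y s ∂μ) I := by
        have hy := intervalIntegrable_of_continuousOn_unitInterval (μ := μ) h.continuousOn_fst
          unitInterval.zero_mem unitInterval.one_mem
        rw [unitInterval, ← uIcc_of_le zero_le_one]
        exact intervalIntegral.continuousOn_primitive_interval' hy left_mem_uIcc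
      rw [intervalIntegral.integral_congr fun t ht =>
          h.snd_eq t (uIcc_subset_Icc unitInterval.zero_mem x.2 ht),
        intervalIntegral.integral_sub intervalIntegrable_const
          ((intervalIntegrable_of_continuousOn_unitInterval hprim
            unitInterval.zero_mem x.2).const_mul ν),
        intervalIntegral.integral_const_mul, intervalIntegral.integral_const, smul_eq_mul]
      ring
    change y x + ν * volterra μ f x = y 0 + g 0 * x
    rw [volterra_apply_eq_integral μ (h := y) fun _ => rfl, h.fst_eq x x.2, hint]
    ring
  intro x hx
  rw [solution_of_mem _ _ hx, ← hf]
  exact congr($(Ring.inverse_mul_cancel _ (isUnit_one_add_smul_volterra μ ν)) f ⟨x, hx⟩).symm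

theorem eqOn_quasiDeriv (h : IsSolution μ ν y g) : EqOn g (quasiDeriv μ (y 0) (g 0) ν) I := by
  intro x hx
  rw [h.snd_eq x hx, quasiDeriv, intervalIntegral.integral_congr]
  exact h.eqOn_solution.mono (uIcc_subset_Icc unitInterval.zero_mem hx)

end IsSolution

theorem solution_eq_linear_combination (c d : ℝ) {x : ℝ} (hx : x ∈ I) :
    solution μ c d ν x = c * solution μ 1 0 ν x + d * solution μ 0 1 ν x := by
  have haffine : affine c d = c • affine 1 0 + d • affine 0 1 := by
    ext x
    simp [affine]
  simp only [solution_of_mem _ _ hx, haffine, map_add, map_smul]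
  rfl

theorem quasiDeriv_eq_linear_combination (c d : ℝ) {x : ℝ} (hx : x ∈ I) :
    quasiDeriv μ c d ν x = c * quasiDeriv μ 1 0 ν x + d * quasiDeriv μ 0 1 ν x := by
  have hint (c d : ℝ) : IntervalIntegrable (solution μ c d ν) μ 0 x :=
    (continuous_solution c d).intervalIntegrable _ _
  unfold quasiDeriv
  rw [intervalIntegral.integral_congr fun t ht => solution_eq_linear_combination c d
      (uIcc_subset_Icc unitInterval.zero_mem hx ht),
    intervalIntegral.integral_add ((hint 1 0).const_mul c) ((hint 0 1).const_mul d),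
    intervalIntegral.integral_const_mul, intervalIntegral.integral_const_mul]
  ring

theorem continuous_integral_mul_solution {h : ℝ → ℝ} (hh : ContinuousOn h I) (c d : ℝ) :
    Continuous fun ν => ∫ x in (0 : ℝ)..1, h x * solution μ c d ν x ∂μ := by
  let H : C(I, ℝ) := ⟨domRestrict I h, hh.domRestrict⟩
  have hinv := continuous_inverse_one_add_smul (R := C(I, ℝ) →L[ℝ] C(I, ℝ))
    (isUnit_one_add_smul_volterra μ)
  have hcont : Continuous fun ν : ℝ => primitive μ
      (H * Ring.inverse (1 + ν • volterra μ) (affine c d)) 1 := by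
    fun_prop
  refine hcont.congr fun ν => primitive_apply_eq_integral μ
    (h := fun x => h x * solution μ c d ν x) (fun t => ?_) 1
  rw [solution_of_mem c d t.2]
  rfl

end Solution

section Lagrange

theorem integral_mul_integral_swap {ρ μ : Measure ℝ} [IsLocallyFiniteMeasure ρ]
    [IsLocallyFiniteMeasure μ] [NullSingletonClass ρ] {a b : ℝ} (hab : a ≤ b) {f v : ℝ → ℝ}
    (hf : IntervalIntegrable f ρ a b) (hv : IntervalIntegrable v μ a b) :
    ∫ x in a..b, f x * (∫ t in a..x, v t ∂μ) ∂ρ = ∫ t in a..b, (∫ x in t..b, f x ∂ρ) * v t ∂μ := by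
  set F : ℝ → ℝ → ℝ := fun x t => {p : ℝ × ℝ | p.2 ≤ p.1}.indicator (fun p => f p.1 * v p.2) (x, t)
  have hF : Integrable F.uncurry ((ρ.restrict (Ioc a b)).prod (μ.restrict (Ioc a b))) :=
    (hf.1.mul_prod hv.1).indicator (measurableSet_le measurable_snd measurable_fst)
  have hFx (x t : ℝ) : F x t = (Iic x).indicator (fun t => f x * v t) t := by
    simp only [F, indicator, mem_ofPred_eq, mem_Iic]
  have hFt (x t : ℝ) : F x t = (Ici t).indicator (fun x => f x * v t) x := by
    simp only [F, indicator, mem_ofPred_eq, mem_Ici]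
  rw [intervalIntegral.integral_of_le hab, intervalIntegral.integral_of_le hab]
  calc ∫ x in Ioc a b, f x * (∫ t in a..x, v t ∂μ) ∂ρ
      = ∫ x in Ioc a b, ∫ t in Ioc a b, F x t ∂μ ∂ρ := by
        refine setIntegral_congr_fun measurableSet_Ioc fun x hx => ?_
        simp only [hFx]
        rw [setIntegral_indicator measurableSet_Iic, Ioc_inter_Iic, min_eq_right hx.2,
          integral_const_mul, intervalIntegral.integral_of_le hx.1.le]
    _ = ∫ t in Ioc a b, ∫ x in Ioc a b, F x t ∂ρ ∂μ := integral_integral_swap hF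
    _ = ∫ t in Ioc a b, (∫ x in t..b, f x ∂ρ) * v t ∂μ := by
        refine setIntegral_congr_fun measurableSet_Ioc fun t ht => ?_
        have hset : Ioc a b ∩ Ici t = Icc t b := by
          rw [← Ioi_inter_Iic, inter_right_comm,
            inter_eq_right.2 (Ici_subset_Ioi.2 ht.1), Ici_inter_Iic]
        simp only [hFt]
        rw [setIntegral_indicator measurableSet_Ici, hset, integral_mul_const,
          integral_Icc_eq_integral_Ioc, intervalIntegral.integral_of_le ht.2]

variable {μ : Measure ℝ} [IsLocallyFiniteMeasure μ] {ν ν' : ℝ} {y g u w : ℝ → ℝ}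

theorem IsSolution.green (h : IsSolution μ ν y g) (h' : IsSolution μ ν' u w) :
    y 1 * w 1 - y 0 * w 0 =
      (∫ x in (0 : ℝ)..1, g x * w x) - ν' * ∫ x in (0 : ℝ)..1, y x * u x ∂μ := by
  have zero_mem := unitInterval.zero_mem
  have one_mem := unitInterval.one_mem
  have hint {ρ : Measure ℝ} [IsLocallyFiniteMeasure ρ] {f : ℝ → ℝ} (hf : ContinuousOn f I) :
      IntervalIntegrable f ρ 0 1 :=
    intervalIntegrable_of_continuousOn_unitInterval hf zero_mem one_mem
  have hgw : ∫ x in (0 : ℝ)..1, g x * (ν' * ∫ t in (0 : ℝ)..x, u t ∂μ) =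
      w 0 * (y 1 - y 0) - ∫ x in (0 : ℝ)..1, g x * w x := by
    rw [h.fst_eq 1 one_mem, add_sub_cancel_left, ← intervalIntegral.integral_const_mul,
      ← intervalIntegral.integral_sub ((hint h.continuousOn_snd).const_mul _)
        (hint (f := fun x => g x * w x) (h.continuousOn_snd.mul h'.continuousOn_snd))]
    refine intervalIntegral.integral_congr fun x hx => ?_
    rw [uIcc_of_le zero_le_one] at hx
    linear_combination g x * h'.snd_eq x hx
  have hyu : ∫ t in (0 : ℝ)..1, (∫ x in t..1, g x) * u t ∂μ =
      y 1 * (∫ t in (0 : ℝ)..1, u t ∂μ) - ∫ t in (0 : ℝ)..1, y t * u t ∂μ := by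
    rw [← intervalIntegral.integral_const_mul,
      ← intervalIntegral.integral_sub ((hint h'.continuousOn_fst).const_mul _)
        (hint (f := fun t => y t * u t) (h.continuousOn_fst.mul h'.continuousOn_fst))]
    refine intervalIntegral.integral_congr fun t ht => ?_
    rw [uIcc_of_le zero_le_one] at ht
    have hadd := intervalIntegral.integral_add_adjacent_intervals (μ := volume)
      (intervalIntegrable_of_continuousOn_unitInterval h.continuousOn_snd zero_mem ht)
      (intervalIntegrable_of_continuousOn_unitInterval h.continuousOn_snd ht one_mem)
    linear_combination u t * (hadd - h.fst_eq 1 one_mem + h.fst_eq t ht)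
  have hswap := integral_mul_integral_swap (ρ := volume) (μ := μ) zero_le_one
    (hint h.continuousOn_snd) (hint h'.continuousOn_fst)
  simp only [mul_left_comm _ ν', intervalIntegral.integral_const_mul] at hgw
  linear_combination y 1 * h'.snd_eq 1 one_mem - hgw + ν' * hswap + ν' * hyu

theorem IsSolution.lagrange (h : IsSolution μ ν y g) (h' : IsSolution μ ν' u w) :
    (y 1 * w 1 - g 1 * u 1) - (y 0 * w 0 - g 0 * u 0) =
      (ν - ν') * ∫ x in (0 : ℝ)..1, y x * u x ∂μ := by
  have hgreen := h.green h'
  have hgreen' := h'.green h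
  simp only [mul_comm (w _) (g _), mul_comm (u _) (y _)] at hgreen'
  linear_combination hgreen - hgreen'

theorem IsSolution.integral_sq_pos (h : IsSolution μ ν y g) (hy : y 0 ≠ 0) (hg : g 0 = 0)
    (hμ : μ (Ioc 0 1) ≠ 0) : 0 < ∫ x in (0 : ℝ)..1, y x ^ 2 ∂μ := by
  have hnonneg : 0 ≤ ∫ x in (0 : ℝ)..1, y x ^ 2 ∂μ :=
    intervalIntegral.integral_nonneg zero_le_one fun x _ => sq_nonneg _
  refine hnonneg.lt_of_ne' fun hzero => hμ ?_
  have hae : ∀ᵐ x ∂μ.restrict (Ioc 0 1), y x = 0 := by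
    rw [intervalIntegral.integral_of_le zero_le_one,
      integral_eq_zero_iff_of_nonneg (fun _ => sq_nonneg _)
        (intervalIntegrable_of_continuousOn_unitInterval (h.continuousOn_fst.pow 2)
          unitInterval.zero_mem unitInterval.one_mem).1] at hzero
    filter_upwards [hzero] with x hx using by simpa using hx
  have hg_zero (x : ℝ) (hx : x ∈ I) : g x = 0 := by
    rw [h.snd_eq x hx, hg, intervalIntegral.integral_of_le hx.1,
      integral_eq_zero_of_ae
        (ae_mono (Measure.restrict_mono (Ioc_subset_Ioc_right hx.2) le_rfl) hae)]
    simp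
  have hy_const (x : ℝ) (hx : x ∈ I) : y x = y 0 := by
    rw [h.fst_eq x hx, intervalIntegral.integral_congr (g := 0) fun t ht =>
      hg_zero t (uIcc_subset_Icc unitInterval.zero_mem hx ht)]
    simp
  have hfalse : ∀ᵐ _ ∂μ.restrict (Ioc 0 1), False := by
    filter_upwards [hae, ae_restrict_mem measurableSet_Ioc] with x hx hmem
    exact hy ((hy_const x ⟨hmem.1.le, hmem.2⟩).symm.trans hx)
  rwa [eventually_false_iff_eq_bot, ae_eq_bot, Measure.restrict_eq_zero] at hfalse

end Lagrange

section TransferMatrix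

variable (μ : Measure ℝ) [IsLocallyFiniteMeasure μ] [NullSingletonClass μ]

/-- The matrix taking the initial data `(y 0, y' 0)` of a solution of `-y'' = ν μ y` to its final
data `(y 1, y' 1)`. -/
noncomputable def transferMatrix (ν : ℝ) : Matrix (Fin 2) (Fin 2) ℝ :=
  !![solution μ 1 0 ν 1, solution μ 0 1 ν 1; quasiDeriv μ 1 0 ν 1, quasiDeriv μ 0 1 ν 1]

/-- The matrix of `μ`-inner products of the fundamental solutions at the parameters `ν` and `s`,
arranged so that `M s = M ν * (1 + (s - ν) • crossGram μ ν s)` for the transfer matrix `M`. -/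
noncomputable def crossGram (ν s : ℝ) : Matrix (Fin 2) (Fin 2) ℝ :=
  !![∫ x in (0 : ℝ)..1, solution μ 0 1 ν x * solution μ 1 0 s x ∂μ,
      ∫ x in (0 : ℝ)..1, solution μ 0 1 ν x * solution μ 0 1 s x ∂μ;
    -∫ x in (0 : ℝ)..1, solution μ 1 0 ν x * solution μ 1 0 s x ∂μ,
      -∫ x in (0 : ℝ)..1, solution μ 1 0 ν x * solution μ 0 1 s x ∂μ]

variable {μ} {ν : ℝ}

theorem IsSolution.transferMatrix_mulVec {y g : ℝ → ℝ} (h : IsSolution μ ν y g) :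
    (transferMatrix μ ν).mulVec ![y 0, g 0] = ![y 1, g 1] := by
  rw [h.eqOn_solution unitInterval.one_mem, h.eqOn_quasiDeriv unitInterval.one_mem,
    solution_eq_linear_combination _ _ unitInterval.one_mem,
    quasiDeriv_eq_linear_combination _ _ unitInterval.one_mem]
  ext i
  fin_cases i <;> simp [transferMatrix, Matrix.mulVec, dotProduct] <;> ring

theorem adjugate_transferMatrix_mul (ν s : ℝ) :
    (transferMatrix μ ν).adjugate * transferMatrix μ s = 1 + (s - ν) • crossGram μ ν s := by
  have hlagrange (c d c' d' : ℝ) :=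
    (isSolution_solution (μ := μ) c d ν).lagrange (isSolution_solution c' d' s)
  simp only [solution_zero_right, quasiDeriv_zero_right] at hlagrange
  ext i j
  fin_cases i <;> fin_cases j <;>
    simp only [transferMatrix, crossGram, Matrix.adjugate_fin_two_of, Matrix.mul_apply,
      Matrix.add_apply, Matrix.smul_apply, Matrix.one_apply, Fin.sum_univ_two, Matrix.of_apply,
      Matrix.cons_val', Matrix.cons_val_zero, Matrix.cons_val_one, Matrix.cons_val_fin_one,
      smul_eq_mul, Fin.zero_eta, Fin.mk_one, Fin.isValue, zero_ne_one, one_ne_zero,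
      if_true, if_false]
  · linear_combination -hlagrange 0 1 1 0
  · linear_combination -hlagrange 0 1 0 1
  · linear_combination hlagrange 1 0 1 0
  · linear_combination hlagrange 1 0 0 1

theorem det_transferMatrix (ν : ℝ) : (transferMatrix μ ν).det = 1 := by
  have h := adjugate_transferMatrix_mul (μ := μ) ν ν
  rw [Matrix.adjugate_mul, sub_self, zero_smul, add_zero] at h
  simpa using congr($h 0 0)

theorem transferMatrix_eq_add (ν s : ℝ) :
    transferMatrix μ s =
      transferMatrix μ ν + (s - ν) • (transferMatrix μ ν * crossGram μ ν s) := by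
  have h := congr(transferMatrix μ ν * $(adjugate_transferMatrix_mul (μ := μ) ν s))
  rwa [← mul_assoc, Matrix.mul_adjugate, det_transferMatrix, one_smul, one_mul, mul_add, mul_one,
    mul_smul_comm] at h

theorem continuous_crossGram (ν : ℝ) : Continuous (crossGram μ ν) := by
  have hcont (c d c' d' : ℝ) :=
    continuous_integral_mul_solution (μ := μ)
      (continuous_solution (μ := μ) (ν := ν) c d).continuousOn c' d'
  refine continuous_matrix fun i j => ?_
  fin_cases i <;> fin_cases j
  exacts [hcont 0 1 1 0, hcont 0 1 0 1, (hcont 1 0 1 0).neg, (hcont 1 0 0 1).neg]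

theorem hasDerivAt_of_eq_add_mul {f q : ℝ → ℝ} {x : ℝ} (h : ∀ s, f s = f x + (s - x) * q s)
    (hq : ContinuousAt q x) : HasDerivAt f (q x) x := by
  rw [hasDerivAt_iff_tendsto_slope]
  refine (hq.tendsto.mono_left nhdsWithin_le_nhds).congr' ?_
  filter_upwards [self_mem_nhdsWithin] with s hs
  rw [slope_def_field, h s, add_sub_cancel_left, mul_div_cancel_left₀ _ (sub_ne_zero.2 hs)]

theorem hasDerivAt_transferMatrix (i j : Fin 2) (ν : ℝ) :
    HasDerivAt (fun s => transferMatrix μ s i j) ((transferMatrix μ ν * crossGram μ ν ν) i j) ν :=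
  hasDerivAt_of_eq_add_mul (q := fun s => (transferMatrix μ ν * crossGram μ ν s) i j)
    (fun s => congr($(transferMatrix_eq_add ν s) i j))
    ((continuous_const.matrix_mul (continuous_crossGram ν)).matrix_elem i j).continuousAt

theorem transferMatrix_zero : transferMatrix μ 0 = !![1, 1; 0, 1] := by
  have hsol (c d : ℝ) : solution μ c d 0 1 = c + d := by
    simpa using solution_eq (μ := μ) (ν := 0) c d unitInterval.one_mem
  simp [transferMatrix, hsol, quasiDeriv]

theorem nonneg_of_transferMatrix_one_zero_eq_zero (hμ : μ (Ioc 0 1) ≠ 0)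
    (h : transferMatrix μ ν 1 0 = 0) : 0 ≤ ν := by
  have hsol := isSolution_solution (μ := μ) 1 0 ν
  have hpos := hsol.integral_sq_pos (by simp [solution_zero_right]) (quasiDeriv_zero_right 1 0) hμ
  have hnonneg : 0 ≤ ∫ x in (0 : ℝ)..1, quasiDeriv μ 1 0 ν x * quasiDeriv μ 1 0 ν x :=
    intervalIntegral.integral_nonneg zero_le_one fun x _ => mul_self_nonneg _
  have hgreen := hsol.green hsol
  rw [show quasiDeriv μ 1 0 ν 1 = 0 from h, quasiDeriv_zero_right] at hgreen
  simp only [← sq] at hgreen hnonneg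
  exact nonneg_of_mul_nonneg_left (by linarith) hpos

end TransferMatrix

section Discriminant

variable (μ : Measure ℝ) [IsLocallyFiniteMeasure μ] [NullSingletonClass μ]

/-- The transfer matrix over one period of the periodic string whose period is `μ` on `[0, 1]`
followed by a massless gap of length `τ`. -/
noncomputable def monodromy (τ ν : ℝ) : Matrix (Fin 2) (Fin 2) ℝ :=
  !![1, τ; 0, 1] * transferMatrix μ ν

/-- The Hill discriminant of the periodic string with period `μ` and gaps `τ`, normalized so that
its spectral bands are `|discriminant μ τ ν| ≤ 1`. -/
noncomputable def discriminant (τ ν : ℝ) : ℝ :=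
  (monodromy μ τ ν).trace / 2

variable {μ}

theorem det_monodromy (τ ν : ℝ) : (monodromy μ τ ν).det = 1 := by
  rw [monodromy, Matrix.det_mul, det_transferMatrix, Matrix.det_fin_two_of]
  ring

theorem monodromy_one_zero (τ ν : ℝ) : monodromy μ τ ν 1 0 = transferMatrix μ ν 1 0 := by
  simp [monodromy, Matrix.mul_apply]

theorem discriminant_eq (τ ν : ℝ) :
    discriminant μ τ ν =
      (transferMatrix μ ν 0 0 + transferMatrix μ ν 1 1 + τ * transferMatrix μ ν 1 0) / 2 := by
  simp only [discriminant, monodromy, Matrix.trace_fin_two, Matrix.mul_apply, Fin.sum_univ_two,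
    Matrix.of_apply, Matrix.cons_val', Matrix.cons_val_zero, Matrix.cons_val_one,
    Matrix.cons_val_fin_one]
  ring

theorem hasDerivAt_discriminant (τ ν : ℝ) :
    HasDerivAt (discriminant μ τ)
      (((transferMatrix μ ν * crossGram μ ν ν) 0 0 + (transferMatrix μ ν * crossGram μ ν ν) 1 1 +
        τ * (transferMatrix μ ν * crossGram μ ν ν) 1 0) / 2) ν := by
  rw [funext (discriminant_eq τ)]
  exact (((hasDerivAt_transferMatrix 0 0 ν).add (hasDerivAt_transferMatrix 1 1 ν)).add
    ((hasDerivAt_transferMatrix 1 0 ν).const_mul τ)).div_const 2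

theorem integral_linear_combination_sq (r s ν : ℝ) :
    ∫ x in (0 : ℝ)..1, (r * solution μ 0 1 ν x + s * solution μ 1 0 ν x) ^ 2 ∂μ =
      r ^ 2 * crossGram μ ν ν 0 1 + 2 * r * s * crossGram μ ν ν 0 0 -
        s ^ 2 * crossGram μ ν ν 1 0 := by
  have hint (c d c' d' : ℝ) : IntervalIntegrable
      (fun x => solution μ c d ν x * solution μ c' d' ν x) μ 0 1 :=
    ((continuous_solution c d).mul (continuous_solution c' d')).intervalIntegrable 0 1
  have hexpand (x : ℝ) : (r * solution μ 0 1 ν x + s * solution μ 1 0 ν x) ^ 2 =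
      r ^ 2 * (solution μ 0 1 ν x * solution μ 0 1 ν x) +
        2 * r * s * (solution μ 0 1 ν x * solution μ 1 0 ν x) +
        s ^ 2 * (solution μ 1 0 ν x * solution μ 1 0 ν x) := by ring
  simp only [hexpand]
  rw [intervalIntegral.integral_add
      (((hint 0 1 0 1).const_mul _).add ((hint 0 1 1 0).const_mul _)) ((hint 1 0 1 0).const_mul _),
    intervalIntegral.integral_add ((hint 0 1 0 1).const_mul _) ((hint 0 1 1 0).const_mul _)]
  simp [intervalIntegral.integral_const_mul, crossGram]

theorem crossGram_self_one_one (ν : ℝ) : crossGram μ ν ν 1 1 = -crossGram μ ν ν 0 0 := by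
  simp [crossGram, mul_comm]

theorem crossGram_self_one_zero_neg (hμ : μ (Ioc 0 1) ≠ 0) (ν : ℝ) :
    crossGram μ ν ν 1 0 < 0 := by
  have hpos := (isSolution_solution (μ := μ) 1 0 ν).integral_sq_pos
    (by simp [solution_zero_right]) (quasiDeriv_zero_right 1 0) hμ
  simpa [crossGram, sq] using hpos

-- Completing the square in the quadratic form `crossGram`, with `det (transferMatrix μ ν) = 1`.
theorem two_mul_transferMatrix_mul_deriv_discriminant (τ ν : ℝ) :
    2 * (transferMatrix μ ν 1 0 * deriv (discriminant μ τ) ν) =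
      (∫ x in (0 : ℝ)..1, (transferMatrix μ ν 1 0 * solution μ 0 1 ν x +
        (transferMatrix μ ν 0 0 + τ * transferMatrix μ ν 1 0 - transferMatrix μ ν 1 1) / 2 *
          solution μ 1 0 ν x) ^ 2 ∂μ) -
      (1 - discriminant μ τ ν ^ 2) * crossGram μ ν ν 1 0 := by
  have hdet := det_transferMatrix (μ := μ) ν
  rw [Matrix.det_fin_two] at hdet
  rw [(hasDerivAt_discriminant τ ν).deriv, integral_linear_combination_sq, discriminant_eq]
  simp only [Matrix.mul_apply, Fin.sum_univ_two, crossGram_self_one_one]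
  linear_combination -crossGram μ ν ν 1 0 * hdet

theorem transferMatrix_mul_deriv_discriminant_pos (hμ : μ (Ioc 0 1) ≠ 0) {τ ν : ℝ}
    (h : |discriminant μ τ ν| < 1) :
    0 < transferMatrix μ ν 1 0 * deriv (discriminant μ τ) ν := by
  have hsq : 0 < 1 - discriminant μ τ ν ^ 2 := by rwa [sub_pos, sq_lt_one_iff_abs_lt_one]
  have hidentity := two_mul_transferMatrix_mul_deriv_discriminant (μ := μ) τ ν
  have hgram := mul_neg_of_pos_of_neg hsq (crossGram_self_one_zero_neg hμ ν)
  have hint := intervalIntegral.integral_nonneg (μ := μ) zero_le_one fun x _ =>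
    sq_nonneg (transferMatrix μ ν 1 0 * solution μ 0 1 ν x +
      (transferMatrix μ ν 0 0 + τ * transferMatrix μ ν 1 0 - transferMatrix μ ν 1 1) / 2 *
        solution μ 1 0 ν x)
  linarith

end Discriminant

section Oscillation

theorem lt_of_deriv_neg_of_eq {f : ℝ → ℝ} {p q v : ℝ} (hf : Differentiable ℝ f) (hpq : p < q)
    (hp : f p ≤ v) (h : ∀ z ∈ Icc p q, f z = v → deriv f z < 0) : f q < v := by
  have hle : ∀ ⦃x⦄, x ∈ Icc p q → f x ≤ v :=
    image_le_of_deriv_right_lt_deriv_boundary' hf.continuous.continuousOn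
      (fun x _ => (hf x).hasDerivAt.hasDerivWithinAt) hp continuousOn_const
      (fun x _ => hasDerivWithinAt_const x _ v) fun x hx => h x (Ico_subset_Icc_self hx)
  refine (hle (right_mem_Icc.2 hpq.le)).lt_of_ne fun heq => ?_
  have hsign := eventually_nhdsWithin_sign_eq_of_deriv_neg (f := fun x => f x - v)
    (by simpa using h q (right_mem_Icc.2 hpq.le) heq) (sub_eq_zero.2 heq)
  obtain ⟨x, hx, hpx⟩ :=
    ((hsign.filter_mono nhdsWithin_le_nhds).and (Ioo_mem_nhdsLT hpq)).exists
  rw [sign_pos (sub_pos.2 hpx.2), sign_eq_one_iff, sub_pos] at hx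
  exact (hle (Ioo_subset_Icc_self hpx)).not_gt hx

/-- The relations between the lower-left entry `C` of the transfer matrix of a symmetric string and
its Hill discriminant `θ`: the zeros of `C` are edges `θ = ±1` of the spectral bands `|θ| ≤ 1`, and
the sign of `C` inside a band is the direction in which `θ` crosses it. -/
structure IsHillPair (C θ : ℝ → ℝ) : Prop where
  differentiable_fst : Differentiable ℝ C
  differentiable_snd : Differentiable ℝ θ
  sq_eq_one {x : ℝ} : C x = 0 → θ x ^ 2 = 1
  mul_deriv_neg {x : ℝ} : C x = 0 → θ x * deriv C x < 0
  mul_deriv_pos {x : ℝ} : |θ x| < 1 → 0 < C x * deriv θ x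

/-- A maximal interval `(p, q)` on which `C` has no zeros, entered from the edge `θ p = 1`. -/
structure IsBand (C θ : ℝ → ℝ) (p q : ℝ) : Prop where
  lt : p < q
  fst_left : C p = 0
  fst_right : C q = 0
  fst_ne_zero : ∀ x ∈ Ioo p q, C x ≠ 0
  snd_left : θ p = 1

/-- An increasing parametrization `X` of the spectrum by the Floquet phase: `X φ` is the point of
the bands `|θ| ≤ 1` at which `θ = cos φ`, and the zeros `lam n` of `C` have phase `n π`. -/
structure IsPhaseInverse (θ : ℝ → ℝ) (lam : ℕ → ℝ) (X : ℝ → ℝ) : Prop where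
  strictMonoOn : StrictMonoOn X (Ici 0)
  apply_eq_cos {φ : ℝ} : 0 ≤ φ → θ (X φ) = Real.cos φ
  apply_mul_pi (n : ℕ) : X (n * Real.pi) = lam n
  exists_eq {x : ℝ} : lam 0 ≤ x → |θ x| < 1 → ∃ φ, 0 ≤ φ ∧ X φ = x

variable {C θ : ℝ → ℝ} {p q x x' r : ℝ}

theorem abs_cos_lt_one (hr₀ : 0 < r) (hr : r < Real.pi) : |Real.cos r| < 1 := by
  rw [← sq_lt_one_iff_abs_lt_one, Real.cos_sq']
  linarith [pow_pos (Real.sin_pos_of_pos_of_lt_pi hr₀ hr) 2]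

theorem IsHillPair.const_mul (h : IsHillPair C θ) {ε : ℝ} (hε : |ε| = 1) :
    IsHillPair (fun x => ε * C x) (fun x => ε * θ x) where
  differentiable_fst := h.differentiable_fst.const_mul ε
  differentiable_snd := h.differentiable_snd.const_mul ε
  sq_eq_one {x} hx := by
    rw [← sq_abs, abs_mul, hε, one_mul, sq_abs]
    exact h.sq_eq_one ((mul_eq_zero_iff_left (abs_pos.1 (hε ▸ one_pos))).1 hx)
  mul_deriv_neg {x} hx := by
    rw [deriv_const_mul_field, mul_mul_mul_comm, ← abs_mul_abs_self, hε, one_mul, one_mul]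
    exact h.mul_deriv_neg ((mul_eq_zero_iff_left (abs_pos.1 (hε ▸ one_pos))).1 hx)
  mul_deriv_pos {x} hx := by
    rw [abs_mul, hε, one_mul] at hx
    rw [deriv_const_mul_field, mul_mul_mul_comm, ← abs_mul_abs_self, hε, one_mul, one_mul]
    exact h.mul_deriv_pos hx

namespace IsBand

variable (hband : IsBand C θ p q) (h : IsHillPair C θ)

include hband h

theorem fst_neg (hx : x ∈ Ioo p q) : C x < 0 := by
  refine lt_of_deriv_neg_of_eq h.differentiable_fst hx.1 hband.fst_left.le fun z hz hCz => ?_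
  obtain rfl : p = z := by
    by_contra hne
    exact hband.fst_ne_zero z ⟨hz.1.lt_of_ne hne, hz.2.trans_lt hx.2⟩ hCz
  simpa [hband.snd_left] using h.mul_deriv_neg hCz

-- If `θ q = 1` too, then `C` would have negative slope at each of its zeros in `[p, q]`.
theorem snd_right : θ q = -1 := by
  refine (sq_eq_one_iff.1 (h.sq_eq_one hband.fst_right)).resolve_left fun hq => ?_
  refine (lt_of_deriv_neg_of_eq h.differentiable_fst hband.lt hband.fst_left.le
    fun z hz hCz => ?_).ne hband.fst_right
  suffices hz : θ z = 1 by simpa [hz] using h.mul_deriv_neg hCz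
  rcases eq_endpoints_or_mem_Ioo_of_mem_Icc hz with rfl | rfl | hz
  · exact hband.snd_left
  · exact hq
  · exact absurd hCz (hband.fst_ne_zero z hz)

theorem snd_lt_snd (hx : x ∈ Icc p q) (hx' : x' ∈ Icc p q) (hlt : x < x') (hθ : |θ x| < 1) :
    θ x' < θ x := by
  refine lt_of_deriv_neg_of_eq h.differentiable_snd hlt le_rfl fun z hz hθz => ?_
  rw [← hθz] at hθ
  suffices hz : z ∈ Ioo p q from
    neg_of_mul_pos_right (h.mul_deriv_pos hθ) (hband.fst_neg h hz).le
  rcases eq_endpoints_or_mem_Ioo_of_mem_Icc ⟨hx.1.trans hz.1, hz.2.trans hx'.2⟩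
    with rfl | rfl | hz
  · simp [hband.snd_left] at hθ
  · simp [hband.snd_right h] at hθ
  · exact hz

theorem lt_of_snd_lt_snd (hx : x ∈ Icc p q) (hx' : x' ∈ Icc p q) (hlt : θ x' < θ x)
    (hθ : |θ x'| < 1) : x < x' := by
  rcases lt_trichotomy x x' with hxx' | rfl | hxx'
  · exact hxx'
  · exact absurd hlt (lt_irrefl _)
  · exact absurd hlt (hband.snd_lt_snd h hx' hx hxx' hθ).not_gt

theorem eq_of_snd_eq_snd (hx : x ∈ Icc p q) (hx' : x' ∈ Icc p q) (heq : θ x = θ x')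
    (hθ : |θ x| < 1) : x = x' := by
  rcases lt_trichotomy x x' with hxx' | hxx' | hxx'
  · exact absurd heq (hband.snd_lt_snd h hx hx' hxx' hθ).ne'
  · exact hxx'
  · exact absurd heq (hband.snd_lt_snd h hx' hx hxx' (heq ▸ hθ)).ne

theorem exists_snd_eq_cos (hr : r ∈ Ico 0 Real.pi) :
    ∃ x ∈ Ico p q, θ x = Real.cos r ∧ (r = 0 → x = p) := by
  rcases hr.1.eq_or_lt with rfl | hr₀
  · exact ⟨p, left_mem_Ico.2 hband.lt, by simp [hband.snd_left]⟩
  have hcos : Real.cos r ∈ Ioc (θ q) (θ p) := by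
    rw [hband.snd_left, hband.snd_right h, ← Real.cos_pi]
    exact ⟨Real.cos_lt_cos_of_nonneg_of_le_pi hr.1 le_rfl hr.2, Real.cos_le_one r⟩
  obtain ⟨x, hx, hθx⟩ :=
    intermediate_value_Ico' hband.lt.le h.differentiable_snd.continuous.continuousOn hcos
  exact ⟨x, hx, hθx, fun hr => absurd hr hr₀.ne'⟩

theorem exists_phase_inverse : ∃ Y : ℝ → ℝ, StrictMonoOn Y (Ico 0 Real.pi) ∧
    MapsTo Y (Ico 0 Real.pi) (Ico p q) ∧ (∀ r ∈ Ico 0 Real.pi, θ (Y r) = Real.cos r) ∧ Y 0 = p ∧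
    ∀ x ∈ Ico p q, |θ x| < 1 → ∃ r ∈ Ico 0 Real.pi, Y r = x := by
  choose! Y hY hcos hzero using fun r => hband.exists_snd_eq_cos h (r := r)
  refine ⟨Y, fun r hr s hs hrs => ?_, hY, hcos, hzero 0 ⟨le_rfl, Real.pi_pos⟩ rfl,
    fun x hx hθ => ?_⟩
  · refine hband.lt_of_snd_lt_snd h (Ico_subset_Icc_self (hY r hr))
      (Ico_subset_Icc_self (hY s hs)) ?_ ?_
    · rw [hcos r hr, hcos s hs]
      exact Real.cos_lt_cos_of_nonneg_of_le_pi hr.1 hs.2.le hrs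
    · rw [hcos s hs]
      exact abs_cos_lt_one (hr.1.trans_lt hrs) hs.2
  · have hθ' := abs_lt.1 hθ
    have hr : Real.arccos (θ x) ∈ Ico 0 Real.pi := ⟨Real.arccos_nonneg _,
      (Real.arccos_le_pi _).lt_of_ne fun hpi => hθ'.1.not_ge (Real.arccos_eq_pi.1 hpi)⟩
    refine ⟨_, hr, hband.eq_of_snd_eq_snd h (Ico_subset_Icc_self (hY _ hr))
      (Ico_subset_Icc_self hx) ?_ ?_⟩ <;>
    rw [hcos _ hr, Real.cos_arccos hθ'.1.le hθ'.2.le]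
    exact hθ

end IsBand

theorem not_bddAbove_range {lam : ℕ → ℝ} (hC : Continuous C) (hlam : StrictMono lam)
    (hrange : range lam = {x | C x = 0}) : ¬BddAbove (range lam) := by
  intro hbdd
  have hclosed : IsClosed (range lam) := hrange ▸ isClosed_singleton.preimage hC
  obtain ⟨m, hm⟩ := hclosed.csSup_mem (range_nonempty lam) hbdd
  exact (hlam m.lt_succ_self).not_ge (hm ▸ le_csSup hbdd (mem_range_self _))

theorem exists_mem_Ico {lam : ℕ → ℝ} (hC : Continuous C) (hlam : StrictMono lam)
    (hrange : range lam = {x | C x = 0}) (hx : lam 0 ≤ x) :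
    ∃ n, x ∈ Ico (lam n) (lam (n + 1)) := by
  have hcover := iUnion_Ico_map_succ_eq_Ici (fun n => hlam.monotone bot_le)
    (not_bddAbove_range hC hlam hrange)
  exact mem_iUnion.1 (hcover.symm.subset hx)

theorem abs_lt_one_of_eval_U_eq_zero {n : ℤ} (hn : 0 ≤ n)
    (h : (Polynomial.Chebyshev.U ℝ n).eval x = 0) : |x| < 1 := by
  lift n to ℕ using hn
  have hdeg := Polynomial.Chebyshev.degree_U_natCast ℝ n
  have hroot : x ∈ (Polynomial.Chebyshev.U ℝ n).roots :=
    (Polynomial.mem_roots (Polynomial.degree_ne_bot.1 (by simp [hdeg]))).2 h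
  simp only [Polynomial.Chebyshev.roots_U_real, Finset.mem_val, Finset.mem_image,
    Finset.mem_range] at hroot
  obtain ⟨k, hk, rfl⟩ := hroot
  have hlt : (k + 1 : ℝ) < n + 1 := by exact_mod_cast Nat.succ_lt_succ hk
  refine abs_cos_lt_one (by positivity) ?_
  rw [div_lt_iff₀ (by positivity), mul_comm]
  gcongr

theorem sub_floor_div_pi_mem_Ico {φ : ℝ} (hφ : 0 ≤ φ) :
    φ - ⌊φ / Real.pi⌋₊ * Real.pi ∈ Ico 0 Real.pi := by
  have hle := (le_div_iff₀ Real.pi_pos).1 (Nat.floor_le (div_nonneg hφ Real.pi_pos.le))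
  have hlt := (div_lt_iff₀ Real.pi_pos).1 (Nat.lt_floor_add_one (φ / Real.pi))
  exact ⟨by linarith, by linarith⟩

namespace IsHillPair

variable {lam : ℕ → ℝ} (h : IsHillPair C θ) (hlam : StrictMono lam)
  (hrange : range lam = {x | C x = 0}) (h₀ : θ (lam 0) = 1)

include h hlam hrange h₀

theorem isBand (n : ℕ) :
    IsBand (fun x => (-1) ^ n * C x) (fun x => (-1) ^ n * θ x) (lam n) (lam (n + 1)) := by
  have hzero (m : ℕ) : C (lam m) = 0 := hrange.subset (mem_range_self m)
  have hne : ∀ m, ∀ x ∈ Ioo (lam m) (lam (m + 1)), C x ≠ 0 := by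
    rintro m x hx hC
    obtain ⟨k, rfl⟩ := hrange.symm.subset hC
    exact (Nat.lt_of_lt_of_le (hlam.lt_iff_lt.1 hx.1)
      (Nat.lt_succ_iff.1 (hlam.lt_iff_lt.1 hx.2))).false
  have hmk (m : ℕ) (hm : (-1) ^ m * θ (lam m) = 1) :
      IsBand (fun x => (-1) ^ m * C x) (fun x => (-1) ^ m * θ x) (lam m) (lam (m + 1)) :=
    ⟨hlam m.lt_succ_self, by simp [hzero], by simp [hzero], by simpa using hne m, hm⟩
  induction n with
  | zero => exact hmk 0 (by simpa using h₀)
  | succ n ih =>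
    have hright := ih.snd_right (h.const_mul (abs_neg_one_pow n))
    exact hmk (n + 1) (by rw [pow_succ]; linarith)

theorem exists_isPhaseInverse : ∃ X, IsPhaseInverse θ lam X := by
  choose Y hYmono hYmaps hYcos hYzero hYsurj using fun n =>
    (h.isBand hlam hrange h₀ n).exists_phase_inverse (h.const_mul (abs_neg_one_pow n))
  refine ⟨fun φ => Y ⌊φ / Real.pi⌋₊ (φ - ⌊φ / Real.pi⌋₊ * Real.pi), ?_, ?_, ?_, ?_⟩
  · intro φ hφ ψ hψ hlt
    obtain hnm | hnm := (Nat.floor_mono (div_le_div_of_nonneg_right hlt.le Real.pi_pos.le)).eq_or_lt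
    · simp only [hnm]
      exact hYmono _ (hnm ▸ sub_floor_div_pi_mem_Ico hφ) (sub_floor_div_pi_mem_Ico hψ)
        (sub_lt_sub_right hlt _)
    · exact (hYmaps _ (sub_floor_div_pi_mem_Ico hφ)).2.trans_le ((hlam.monotone hnm).trans
        (hYmaps _ (sub_floor_div_pi_mem_Ico hψ)).1)
  · intro φ hφ
    have hcos := hYcos ⌊φ / Real.pi⌋₊ _ (sub_floor_div_pi_mem_Ico hφ)
    rw [Real.cos_sub_nat_mul_pi] at hcos
    exact mul_left_cancel₀ (pow_ne_zero _ (by norm_num)) hcos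
  · intro n
    simpa [Real.pi_ne_zero] using hYzero n
  · intro x hx hθ
    obtain ⟨n, hn⟩ := exists_mem_Ico h.differentiable_fst.continuous hlam hrange hx
    obtain ⟨r, hr, rfl⟩ := hYsurj n x hn (by rwa [abs_mul, abs_neg_one_pow, one_mul])
    have hfloor : ⌊(r + n * Real.pi) / Real.pi⌋₊ = n := by
      rw [add_div, mul_div_cancel_right₀ _ Real.pi_ne_zero,
        Nat.floor_add_natCast (div_nonneg hr.1 Real.pi_pos.le),
        Nat.floor_eq_zero.2 ((div_lt_one Real.pi_pos).2 hr.2), zero_add]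
    exact ⟨r + n * Real.pi, add_nonneg hr.1 (by positivity), by simp [hfloor]⟩

end IsHillPair

namespace IsPhaseInverse

variable {X : ℝ → ℝ} {lam : ℕ → ℝ} (hX : IsPhaseInverse θ lam X)

include hX

theorem eq_apply_of_range_eq {mu : ℕ → ℝ} (hmu : StrictMono mu) (hrange : range mu = {x | θ x = 0})
    (hnonneg : ∀ x, θ x = 0 → lam 0 ≤ x) (n : ℕ) : mu n = X (n * Real.pi + Real.pi / 2) := by
  have hmono : StrictMono fun n : ℕ => X (n * Real.pi + Real.pi / 2) := fun m n hmn =>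
    hX.strictMonoOn (mem_Ici.2 (by positivity)) (mem_Ici.2 (by positivity)) (by gcongr)
  refine congrFun ((hmu.range_inj hmono).1 ?_) n
  rw [hrange]
  ext x
  constructor
  · intro hx
    obtain ⟨φ, hφ, rfl⟩ := hX.exists_eq (hnonneg x hx) (by rw [show θ x = 0 from hx]; simp)
    obtain ⟨k, hk⟩ := Real.cos_eq_zero_iff.1 ((hX.apply_eq_cos hφ).symm.trans hx)
    have hk₀ : 0 ≤ k := by
      have hpos : 0 ≤ (2 * k + 1 : ℝ) :=
        nonneg_of_mul_nonneg_left (by linarith : 0 ≤ (2 * k + 1) * Real.pi) Real.pi_pos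
      have : 0 ≤ 2 * k + 1 := by exact_mod_cast hpos
      omega
    lift k to ℕ using hk₀
    exact ⟨k, congrArg X (by rw [hk]; push_cast; ring)⟩
  · rintro ⟨m, rfl⟩
    have hcos : Real.cos (m * Real.pi + Real.pi / 2) = 0 := by
      rw [add_comm, Real.cos_add_nat_mul_pi, Real.cos_pi_div_two, mul_zero]
    exact (hX.apply_eq_cos (by positivity)).trans hcos

section Renormalization

variable {κ : ℕ} {a c : ℝ} (hκ : κ ≠ 0) (hlam : StrictMono lam)
  (hrange : range lam = {x | C x = 0}) (h₀ : lam 0 = 0) (ha : a ≠ 0) (hc : 0 < c)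
  (hrenorm : ∀ x, a * C (c * x) = (Polynomial.Chebyshev.U ℝ (κ - 1)).eval (θ x) * C x)

include hκ in
theorem exists_apply_pi_div_eq (hx : lam 0 ≤ x)
    (hU : (Polynomial.Chebyshev.U ℝ (κ - 1)).eval (θ x) = 0) :
    ∃ m : ℕ, X (m * Real.pi / κ) = x := by
  obtain ⟨φ, hφ, rfl⟩ := hX.exists_eq hx (abs_lt_one_of_eval_U_eq_zero (by omega) hU)
  have hsin := Polynomial.Chebyshev.U_real_cos φ (κ - 1)
  rw [← hX.apply_eq_cos hφ, hU, zero_mul] at hsin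
  obtain ⟨m, hm⟩ := Real.sin_eq_zero_iff.1 hsin.symm
  push_cast [sub_add_cancel] at hm
  have hm₀ : (0 : ℝ) ≤ m :=
    nonneg_of_mul_nonneg_left (hm.symm ▸ by positivity) Real.pi_pos
  lift m to ℕ using by exact_mod_cast hm₀
  refine ⟨m, congrArg X ?_⟩
  rw [← Int.cast_natCast, hm]
  field_simp

include hκ hrange ha hrenorm in
theorem apply_mul_apply_pi_div_eq_zero (m : ℕ) : C (c * X (m * Real.pi / κ)) = 0 := by
  set φ := m * Real.pi / κ with hφ
  have hφ₀ : 0 ≤ φ := by positivity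
  have hU := Polynomial.Chebyshev.U_real_cos φ (κ - 1)
  have hκφ : ((κ - 1 : ℤ) + 1 : ℝ) * φ = m * Real.pi := by rw [hφ]; push_cast; field_simp; ring
  rw [hκφ, Real.sin_nat_mul_pi, mul_eq_zero, ← hX.apply_eq_cos hφ₀] at hU
  refine (mul_eq_zero_iff_left ha).1
    ((hrenorm _).trans (mul_eq_zero.2 (hU.imp_right fun hsin => ?_)))
  obtain ⟨k, hk⟩ := Real.sin_eq_zero_iff.1 hsin
  lift k to ℕ using (by exact_mod_cast nonneg_of_mul_nonneg_left (hk ▸ hφ₀) Real.pi_pos)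
  rw [← hk, Int.cast_natCast, hX.apply_mul_pi]
  exact hrange.subset (mem_range_self k)

include hκ hlam hrange h₀ ha hc hrenorm

theorem range_apply_pi_div : range (fun m : ℕ => c * X (m * Real.pi / κ)) = range lam := by
  refine (range_subset_iff.2 fun m => ?_).antisymm ?_
  · rw [hrange]
    exact hX.apply_mul_apply_pi_div_eq_zero hκ hrange ha hrenorm m
  rintro _ ⟨m, rfl⟩
  obtain ⟨x, hx⟩ : ∃ x, lam m = c * x := ⟨lam m / c, by field_simp⟩
  have hx₀ : 0 ≤ x := nonneg_of_mul_nonneg_right (hx ▸ h₀ ▸ hlam.monotone m.zero_le) hc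
  have hprod : (Polynomial.Chebyshev.U ℝ (κ - 1)).eval (θ x) * C x = 0 := by
    rw [← hrenorm, ← hx, show C (lam m) = 0 from hrange.subset (mem_range_self m), mul_zero]
  suffices ∃ k : ℕ, X (k * Real.pi / κ) = x from
    this.imp fun k hk => congrArg (c * ·) hk |>.trans hx.symm
  rcases mul_eq_zero.1 hprod with hU | hC
  · exact hX.exists_apply_pi_div_eq hκ (h₀ ▸ hx₀) hU
  · obtain ⟨k, rfl⟩ := hrange.symm.subset hC
    refine ⟨k * κ, ?_⟩
    rw [← hX.apply_mul_pi k]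
    congr 1
    push_cast
    field_simp

theorem apply_eq_mul_apply_pi_div (m : ℕ) : lam m = c * X (m * Real.pi / κ) := by
  have hmono : StrictMono fun m : ℕ => c * X (m * Real.pi / κ) := fun m n hmn =>
    mul_lt_mul_of_pos_left (hX.strictMonoOn (mem_Ici.2 (by positivity))
      (mem_Ici.2 (by positivity)) (by gcongr)) hc
  exact congrFun ((hlam.range_inj hmono).1
    (hX.range_apply_pi_div hκ hlam hrange h₀ ha hc hrenorm).symm) m

end Renormalization

end IsPhaseInverse

theorem IsHillPair.apply_add_half_eq_mul (h : IsHillPair C θ) {lam mu : ℕ → ℝ} {κ : ℕ} {a c : ℝ}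
    (hlam : StrictMono lam) (hlamrange : range lam = {x | C x = 0}) (h₀ : lam 0 = 0)
    (hθ₀ : θ 0 = 1) (hmu : StrictMono mu) (hmurange : range mu = {x | θ x = 0}) (hκ : κ ≠ 0)
    (hκeven : Even κ) (ha : a ≠ 0) (hc : 0 < c)
    (hrenorm : ∀ x, a * C (c * x) = (Polynomial.Chebyshev.U ℝ (κ - 1)).eval (θ x) * C x)
    (n : ℕ) : lam (κ * n + κ / 2) = c * mu n := by
  obtain ⟨X, hX⟩ := h.exists_isPhaseInverse hlam hlamrange (h₀ ▸ hθ₀)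
  have hnonneg (x : ℝ) (hx : θ x = 0) : lam 0 ≤ x := by
    have hC : C (c * x) = 0 := (mul_eq_zero_iff_left ha).1 <| by
      rw [hrenorm, hx, Polynomial.Chebyshev.U_eval_zero_of_odd ℝ
        (((Int.even_coe_nat κ).2 hκeven).sub_odd odd_one), zero_mul]
    obtain ⟨m, hm⟩ := hlamrange.symm.subset hC
    rw [h₀]
    exact nonneg_of_mul_nonneg_right (hm ▸ h₀ ▸ hlam.monotone m.zero_le) hc
  rw [hX.apply_eq_mul_apply_pi_div hκ hlam hlamrange h₀ ha hc hrenorm,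
    hX.eq_apply_of_range_eq hmu hmurange hnonneg]
  obtain ⟨k, rfl⟩ := hκeven
  congr 2
  rw [← two_mul, Nat.mul_div_cancel_left k two_pos]
  have hk : (k : ℝ) ≠ 0 := by
    rintro hk
    simp_all
  push_cast
  field_simp

end Oscillation

section Cantor

/-- The geometry of the first generation of a Cantor-type set in `[0, 1]`: `κ` cells
`[k (a + b), k (a + b) + a]` separated by gaps of length `b`. -/
structure IsCantorLayout (κ : ℕ) (a b : ℝ) : Prop where
  two_le : 2 ≤ κ
  a_pos : 0 < a
  b_pos : 0 < b
  length_eq : (κ - 1) * (a + b) + a = 1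

/-- A continuous function whose graph over `[0, 1]` consists of `κ` copies of itself over the cells
of a Cantor layout, each rescaled to height `κ⁻¹`, joined by constants over the gaps. -/
structure IsCantorFunction (κ : ℕ) (a b : ℝ) (P : ℝ → ℝ) : Prop extends IsCantorLayout κ a b where
  continuousOn : ContinuousOn P I
  map_zero : P 0 = 0
  map_one : P 1 = 1
  cell : ∀ k < κ, ∀ x ∈ I, κ * P (k * (a + b) + a * x) = k + P x
  gap : ∀ k, k + 1 < κ → ∀ x ∈ Icc (k * (a + b) + a) ((k + 1) * (a + b)), κ * P x = k + 1

/-- A measure that restricts on each cell of a Cantor layout to a copy of itself of mass `κ⁻¹`, and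
that vanishes on the gaps. It is also symmetric about `1 / 2`. -/
structure IsCantorMeasure (κ : ℕ) (a b : ℝ) (μ : Measure ℝ) : Prop extends
    IsCantorLayout κ a b where
  restrict_cell : ∀ k < κ, μ.restrict (Ioc (k * (a + b)) (k * (a + b) + a)) =
    (κ : ENNReal)⁻¹ • μ.map (fun x => k * (a + b) + a * x)
  gap_null : ∀ k, k + 1 < κ → μ (Ioc (k * (a + b) + a) ((k + 1) * (a + b))) = 0
  map_one_sub : μ.map (fun x => 1 - x) = μ

variable {κ k : ℕ} {a b x : ℝ} {P : ℝ → ℝ} {μ : Measure ℝ}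

theorem isCantorLayout_of_lt (hκ : 2 ≤ κ) (ha : 0 < a) (ha' : a < 1 / κ)
    (hb : b = (1 - κ * a) / (κ - 1)) : IsCantorLayout κ a b := by
  have hκ' : (1 : ℝ) < κ := by exact_mod_cast hκ
  have hκ₁ : (0 : ℝ) < κ - 1 := sub_pos.2 hκ'
  rw [lt_div_iff₀ (by linarith)] at ha'
  refine ⟨hκ, ha, hb ▸ div_pos (by linarith) hκ₁, ?_⟩
  rw [hb]
  field_simp
  ring

namespace IsCantorLayout

variable (h : IsCantorLayout κ a b)

include h

theorem mem_cell (hk : k < κ) (hx : x ∈ I) : k * (a + b) + a * x ∈ I := by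
  have ha := h.a_pos
  have hb := h.b_pos
  have hk' : (k : ℝ) ≤ κ - 1 := by
    rw [le_sub_iff_add_le]
    exact_mod_cast hk
  have hx₀ : 0 ≤ x := hx.1
  refine ⟨by positivity, ?_⟩
  calc k * (a + b) + a * x ≤ (κ - 1) * (a + b) + a * 1 := by gcongr; exact hx.2
    _ = 1 := by rw [mul_one, h.length_eq]

theorem exists_mem_cell_or_gap (hx : x ∈ I) :
    (∃ k < κ, ∃ t ∈ I, x = k * (a + b) + a * t) ∨
      ∃ k, k + 1 < κ ∧ x ∈ Icc (k * (a + b) + a) ((k + 1) * (a + b)) := by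
  have ha := h.a_pos
  have hb := h.b_pos
  have hlen := h.length_eq
  have hab : 0 < a + b := add_pos ha hb
  have hle := (le_div_iff₀ hab).1 (Nat.floor_le (div_nonneg hx.1 hab.le))
  have hlt := (div_lt_iff₀ hab).1 (Nat.lt_floor_add_one (x / (a + b)))
  set k := ⌊x / (a + b)⌋₊
  rcases le_or_gt x (k * (a + b) + a) with hxk | hxk
  · refine .inl ⟨k, ?_, (x - k * (a + b)) / a,
      ⟨div_nonneg (by linarith) ha.le, (div_le_one ha).2 (by linarith)⟩, by field_simp; ring⟩
    have : (k : ℝ) < κ := lt_of_mul_lt_mul_right (by linarith [hx.2]) hab.le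
    exact_mod_cast this
  · refine .inr ⟨k, ?_, hxk.le, hlt.le⟩
    have : (k + 1 : ℝ) < κ := by
      have hmul : k * (a + b) < (κ - 1) * (a + b) := by linarith [hx.2]
      linarith [lt_of_mul_lt_mul_right hmul hab.le]
    exact_mod_cast this

end IsCantorLayout

section CantorType

variable (h : IsCantorLayout κ a b) (hP : CantorType κ a b P)

include hP

theorem mul_apply_cell_of_cantorType (hk : k < κ) (hx : x ∈ I) :
    κ * P (k * (a + b) + a * x) = κ * P (k * (a + b)) + P x := by
  obtain ⟨-, hzero, -, -, hcell⟩ := hP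
  obtain ⟨c, hc⟩ := hcell k (by omega)
  have hc₀ := hc 0 unitInterval.zero_mem
  rw [mul_zero, add_zero, hzero] at hc₀
  linarith [hc x hx]

include h

theorem apply_gap_of_cantorType (hk : k + 1 < κ)
    (hx : x ∈ Icc (k * (a + b) + a) ((k + 1) * (a + b))) : P x = P (k * (a + b) + a) := by
  obtain ⟨hcont, -, -, hgap, -⟩ := hP
  obtain ⟨c, hc⟩ := hgap (k + 1) (by omega) (by omega)
  rw [Nat.cast_add_one, add_sub_cancel_right] at hc
  have hlt : k * (a + b) + a < (k + 1) * (a + b) := by linarith [h.b_pos]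
  have hsub : Icc (k * (a + b) + a) ((k + 1) * (a + b)) ⊆ I :=
    Icc_subset_Icc (by simpa using (h.mem_cell (Nat.lt_of_succ_lt hk) unitInterval.one_mem).1)
      (by simpa using (h.mem_cell hk unitInterval.zero_mem).2)
  have heq : EqOn P (fun _ => c) (Icc (k * (a + b) + a) ((k + 1) * (a + b))) :=
    EqOn.of_subset_closure hc (hcont.mono hsub) continuousOn_const Ioo_subset_Icc_self
      (closure_Ioo hlt.ne).superset
  exact (heq hx).trans (heq (left_mem_Icc.2 hlt.le)).symm

theorem mul_apply_cell_left_of_cantorType (hk : k < κ) : κ * P (k * (a + b)) = k := by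
  induction k with
  | zero => simp [hP.2.1]
  | succ k ih =>
    have hcell := mul_apply_cell_of_cantorType hP (Nat.lt_of_succ_lt hk) unitInterval.one_mem
    rw [mul_one, ih (Nat.lt_of_succ_lt hk), hP.2.2.1] at hcell
    rw [Nat.cast_add_one, apply_gap_of_cantorType h hP hk (right_mem_Icc.2 (by linarith [h.b_pos])),
      hcell]

theorem IsCantorLayout.isCantorFunction : IsCantorFunction κ a b P where
  toIsCantorLayout := h
  continuousOn := hP.1
  map_zero := hP.2.1
  map_one := hP.2.2.1
  cell k hk x hx := by
    rw [mul_apply_cell_of_cantorType hP hk hx, mul_apply_cell_left_of_cantorType h hP hk]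
  gap k hk x hx := by
    have hk' := Nat.lt_of_succ_lt hk
    have hcell := mul_apply_cell_of_cantorType hP hk' unitInterval.one_mem
    rw [mul_one, mul_apply_cell_left_of_cantorType h hP hk', hP.2.2.1] at hcell
    rw [apply_gap_of_cantorType h hP hk hx, hcell]

end CantorType

namespace IsCantorFunction

variable (h : IsCantorFunction κ a b P)

include h

theorem mul_add_apply_one_sub_cell (hk : k < κ) (hx : x ∈ I) :
    κ * (P (k * (a + b) + a * x) + P (1 - (k * (a + b) + a * x)) - 1) =
      P x + P (1 - x) - 1 := by
  have hreflect : 1 - (k * (a + b) + a * x) =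
      (κ - 1 - k : ℕ) * (a + b) + a * (1 - x) := by
    rw [Nat.sub_sub, Nat.cast_sub (by omega)]
    push_cast
    linear_combination -h.length_eq
  have hcell := h.cell k hk x hx
  have hcell' := h.cell (κ - 1 - k) (by omega) (1 - x) (Icc.one_sub_mem hx)
  rw [← hreflect, Nat.sub_sub, Nat.cast_sub (by omega)] at hcell'
  push_cast at hcell'
  linear_combination hcell + hcell'

theorem add_apply_one_sub_gap (hk : k + 1 < κ)
    (hx : x ∈ Icc (k * (a + b) + a) ((k + 1) * (a + b))) : P x + P (1 - x) - 1 = 0 := by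
  have hκ : (κ : ℝ) ≠ 0 := by have := h.two_le; positivity
  have hgap := h.gap k hk x hx
  have hcast : ((κ - 2 - k : ℕ) : ℝ) = κ - 2 - k := by
    rw [Nat.sub_sub, Nat.cast_sub (by omega)]
    push_cast
    ring
  have hgap' := h.gap (κ - 2 - k) (by omega) (1 - x) (by
    rw [hcast]
    constructor <;> linarith [hx.1, hx.2, h.length_eq])
  rw [hcast] at hgap'
  refine (mul_eq_zero_iff_left hκ).1 ?_
  linear_combination hgap + hgap'

-- A point where `|P x + P (1 - x) - 1|` is maximal lies over a point where it is `κ` times larger.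
theorem apply_one_sub (hx : x ∈ I) : P (1 - x) = 1 - P x := by
  have hcont : ContinuousOn (fun x => |P x + P (1 - x) - 1|) I :=
    ((h.continuousOn.add (h.continuousOn.comp (by fun_prop) fun x hx => Icc.one_sub_mem hx)).sub
      continuousOn_const).abs
  obtain ⟨z, hz, hmax⟩ := isCompact_Icc.exists_isMaxOn (nonempty_Icc.2 zero_le_one) hcont
  suffices hz₀ : |P z + P (1 - z) - 1| = 0 by
    have hx₀ : |P x + P (1 - x) - 1| ≤ 0 := (hmax hx).trans hz₀.le
    linarith [abs_nonpos_iff.1 hx₀]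
  rcases h.exists_mem_cell_or_gap hz with ⟨k, hk, t, ht, rfl⟩ | ⟨k, hk, hzk⟩
  · have hκ : (2 : ℝ) ≤ κ := by exact_mod_cast h.two_le
    have hscale := congrArg abs (h.mul_add_apply_one_sub_cell hk ht)
    rw [abs_mul, Nat.abs_cast] at hscale
    nlinarith [hscale.trans_le (hmax ht),
      abs_nonneg (P (k * (a + b) + a * t) + P (1 - (k * (a + b) + a * t)) - 1)]
  · rw [h.add_apply_one_sub_gap hk hzk, abs_zero]

end IsCantorFunction

section Cdf

open ProbabilityTheory

theorem isProbabilityMeasure_of_measure_Icc (hP₁ : P 1 = 1)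
    (hμ : ∀ x ∈ I, μ (Icc 0 x) = ENNReal.ofReal (P x)) (hμc : μ Iᶜ = 0) :
    IsProbabilityMeasure μ := by
  refine ⟨?_⟩
  rw [← measure_add_measure_compl (measurableSet_Icc (a := (0 : ℝ)) (b := 1)), hμc,
    hμ 1 unitInterval.one_mem, hP₁, ENNReal.ofReal_one, add_zero]

variable [IsProbabilityMeasure μ]

theorem cdf_eq_apply_projIcc (hP₀ : P 0 = 0) (hP : MonotoneOn P I)
    (hμ : ∀ x ∈ I, μ (Icc 0 x) = ENNReal.ofReal (P x)) (hμc : μ Iᶜ = 0) (x : ℝ) :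
    cdf μ x = P (projIcc 0 1 zero_le_one x) := by
  have hproj := (projIcc 0 1 zero_le_one x).2
  have hinter : μ (Iic x) = μ (Iic x ∩ I) := by
    rw [← measure_inter_add_sdiff (Iic x) (measurableSet_Icc (a := (0 : ℝ)) (b := 1)),
      measure_mono_null (fun _ hz => hz.2 : Iic x \ I ⊆ Iᶜ) hμc, add_zero]
  rw [cdf_eq_real, measureReal_def, hinter]
  rcases lt_or_ge x 0 with hx | hx
  · have hempty : Iic x ∩ I = ∅ :=
      eq_empty_of_forall_notMem fun z hz => (hx.trans_le hz.2.1).not_ge hz.1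
    rw [hempty, measure_empty, ENNReal.toReal_zero, projIcc_of_le_left _ hx.le, hP₀]
  · have hIcc : Iic x ∩ I = Icc 0 (projIcc 0 1 zero_le_one x : ℝ) := by
      rw [coe_projIcc, max_eq_right (le_min zero_le_one hx)]
      ext z
      simp only [mem_inter_iff, mem_Iic, mem_Icc, le_min_iff]
      tauto
    rw [hIcc, hμ _ hproj, ENNReal.toReal_ofReal]
    simpa only [hP₀] using hP unitInterval.zero_mem hproj hproj.1

theorem measure_Ioc_eq_cdf_sub (x y : ℝ) : μ (Ioc x y) = ENNReal.ofReal (cdf μ y - cdf μ x) := by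
  rw [← StieltjesFunction.measure_Ioc, measure_cdf]

theorem nullSingletonClass_of_continuous_cdf (h : Continuous (cdf μ)) : NullSingletonClass μ where
  measure_singleton x := by
    rw [← measure_cdf μ, StieltjesFunction.measure_singleton,
      h.continuousAt.continuousWithinAt.leftLim_eq, sub_self, ENNReal.ofReal_zero]

namespace IsCantorFunction

variable (h : IsCantorFunction κ a b P) (hcdf : ∀ x, cdf μ x = P (projIcc 0 1 zero_le_one x))

include h hcdf

theorem nullSingletonClass : NullSingletonClass μ :=
  nullSingletonClass_of_continuous_cdf <| by
    rw [funext hcdf]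
    exact h.continuousOn.comp_continuous (by fun_prop) fun x => (projIcc 0 1 zero_le_one x).2

theorem map_one_sub : μ.map (fun x => 1 - x) = μ := by
  have := h.nullSingletonClass hcdf
  have := Measure.isProbabilityMeasure_map (μ := μ) (f := fun x => 1 - x) (by fun_prop)
  refine Measure.eq_of_cdf _ _ (StieltjesFunction.ext fun x => ?_)
  have hreflect : μ.real ((fun x => 1 - x) ⁻¹' Iic x) = μ.real (Iic (1 - x))ᶜ := by
    rw [preimage_const_sub_Iic, compl_Iic, measureReal_congr Ioi_ae_eq_Ici]
  have hproj : (projIcc (0 : ℝ) 1 zero_le_one (1 - x) : ℝ) = 1 - projIcc 0 1 zero_le_one x := by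
    rw [← symm_projIcc, coe_symm_eq]
  rw [cdf_eq_real, map_measureReal_apply (by fun_prop) measurableSet_Iic, hreflect,
    probReal_compl_eq_one_sub measurableSet_Iic, ← cdf_eq_real, hcdf, hcdf, hproj,
    h.apply_one_sub (projIcc 0 1 zero_le_one x).2, sub_sub_cancel]

theorem restrict_cell (hk : k < κ) : μ.restrict (Ioc (k * (a + b)) (k * (a + b) + a)) =
    (κ : ENNReal)⁻¹ • μ.map (fun x => k * (a + b) + a * x) := by
  have ha := h.a_pos
  have hκ : 0 < κ := h.two_le.trans_lt' zero_lt_two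
  refine Measure.ext_of_Iic _ _ fun z => ?_
  obtain ⟨w, rfl⟩ : ∃ w, z = k * (a + b) + a * w := ⟨(z - k * (a + b)) / a, by field_simp; ring⟩
  have hpre : (fun x => k * (a + b) + a * x) ⁻¹' Iic (k * (a + b) + a * w) = Iic w := by
    ext x
    simp only [mem_preimage, mem_Iic, add_le_add_iff_left, mul_le_mul_iff_right₀ ha]
  have hproj := (projIcc 0 1 zero_le_one w).2
  have hinter : Iic (k * (a + b) + a * w) ∩ Ioc (k * (a + b)) (k * (a + b) + a) =
      Ioc (k * (a + b)) (k * (a + b) + a * projIcc 0 1 zero_le_one w) := by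
    rw [coe_projIcc, mul_max_of_nonneg _ _ ha.le, mul_min_of_nonneg _ _ ha.le]
    ext t
    grind
  have hleft : k * (a + b) ∈ I := by simpa using h.mem_cell hk unitInterval.zero_mem
  have hincr : κ * (P (k * (a + b) + a * projIcc 0 1 zero_le_one w) - P (k * (a + b))) =
      P (projIcc 0 1 zero_le_one w) := by
    have hcell := h.cell k hk 0 unitInterval.zero_mem
    rw [mul_zero, add_zero, h.map_zero] at hcell
    linear_combination h.cell k hk _ hproj - hcell
  rw [Measure.restrict_apply measurableSet_Iic, hinter, measure_Ioc_eq_cdf_sub,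
    Measure.smul_apply, Measure.map_apply (by fun_prop) measurableSet_Iic, hpre, ← ofReal_cdf,
    hcdf w, ← hincr, hcdf, hcdf, projIcc_of_mem _ (h.mem_cell hk hproj),
    projIcc_of_mem _ hleft, ENNReal.ofReal_mul κ.cast_nonneg, ENNReal.ofReal_natCast,
    smul_eq_mul, ← mul_assoc, ENNReal.inv_mul_cancel (by simpa using hκ.ne') (by simp), one_mul]

theorem gap_null (hk : k + 1 < κ) : μ (Ioc (k * (a + b) + a) ((k + 1) * (a + b))) = 0 := by
  have hle : k * (a + b) + a ≤ (k + 1) * (a + b) := by linarith [h.b_pos]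
  have hl : k * (a + b) + a ∈ I := by
    simpa using h.mem_cell (Nat.lt_of_succ_lt hk) unitInterval.one_mem
  have hr : (k + 1) * (a + b) ∈ I := by simpa using h.mem_cell hk unitInterval.zero_mem
  have hκ : (κ : ℝ) ≠ 0 := by have := h.two_le; positivity
  have hconst : P ((k + 1) * (a + b)) = P (k * (a + b) + a) :=
    mul_left_cancel₀ hκ <| (h.gap k hk _ (right_mem_Icc.2 hle)).trans
      (h.gap k hk _ (left_mem_Icc.2 hle)).symm
  rw [measure_Ioc_eq_cdf_sub, hcdf, hcdf, projIcc_of_mem _ hl, projIcc_of_mem _ hr, hconst,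
    sub_self, ENNReal.ofReal_zero]

theorem isCantorMeasure : IsCantorMeasure κ a b μ where
  toIsCantorLayout := h.toIsCantorLayout
  restrict_cell _ hk := h.restrict_cell hcdf hk
  gap_null _ hk := h.gap_null hcdf hk
  map_one_sub := h.map_one_sub hcdf

end IsCantorFunction

end Cdf

end Cantor

section Chebyshev

open Polynomial.Chebyshev

theorem pow_eq_chebyshev_U_smul_sub {R A : Type*} [CommRing R] [Ring A] [Algebra R A] {x : A}
    {t : R} (h : x * x = (2 * t) • x - 1) (n : ℕ) :
    x ^ n = (U R (n - 1)).eval t • x - (U R (n - 2)).eval t • 1 := by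
  induction n with
  | zero => simp
  | succ n ih =>
    have hrec : (U R n).eval t = 2 * t * (U R (n - 1)).eval t - (U R (n - 2)).eval t := by
      simp [U_eq R n]
    rw [pow_succ, ih, sub_mul, smul_mul_assoc, h, smul_mul_assoc, one_mul, Nat.cast_add_one,
      add_sub_cancel_right, show (n + 1 - 2 : ℤ) = n - 1 by ring, hrec]
    module

theorem matrix_pow_eq_chebyshev_U_smul_sub {R : Type*} [CommRing R] {M : Matrix (Fin 2) (Fin 2) R}
    {t : R} (hdet : M.det = 1) (htrace : M.trace = 2 * t) (n : ℕ) :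
    M ^ n = (U R (n - 1)).eval t • M - (U R (n - 2)).eval t • 1 := by
  nontriviality R
  refine pow_eq_chebyshev_U_smul_sub ?_ n
  have hcayley := M.aeval_self_charpoly
  rw [M.charpoly_fin_two, hdet, htrace] at hcayley
  simp only [map_add, map_sub, map_mul, map_pow, map_one, Polynomial.aeval_X, Polynomial.aeval_C,
    Algebra.algebraMap_eq_smul_one, smul_mul_assoc, one_mul] at hcayley
  rw [← sq, mul_smul, ← sub_eq_zero, ← hcayley]
  abel

end Chebyshev

section Reflection

variable {μ : Measure ℝ} {ν : ℝ} {y g : ℝ → ℝ}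

theorem integral_comp_one_sub_eq [NullSingletonClass μ] (hμ : μ.map (fun x => 1 - x) = μ)
    (f : ℝ → ℝ) {x : ℝ} (hx : 0 ≤ x) :
    ∫ t in (0 : ℝ)..x, f (1 - t) ∂μ = ∫ t in (1 - x)..1, f t ∂μ := by
  have hpres : MeasurePreserving (fun x => 1 - x) μ μ := ⟨by fun_prop, hμ⟩
  have hpre : (fun x => 1 - x) ⁻¹' Ico (1 - x) 1 = Ioc 0 x := by simp
  rw [intervalIntegral.integral_of_le hx, intervalIntegral.integral_of_le (sub_le_self 1 hx),
    ← hpre, ← integral_Ico_eq_integral_Ioc (x := 1 - x)]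
  exact hpres.setIntegral_preimage_emb (measurableEmbedding_subLeft 1) f _

namespace IsSolution

theorem fst_eq_add (h : IsSolution μ ν y g) {s t : ℝ} (hs : s ∈ I) (ht : t ∈ I) :
    y t = y s + ∫ x in s..t, g x := by
  rw [h.fst_eq t ht, h.fst_eq s hs, ← intervalIntegral.integral_add_adjacent_intervals
    (intervalIntegrable_of_continuousOn_unitInterval h.continuousOn_snd unitInterval.zero_mem hs)
    (intervalIntegrable_of_continuousOn_unitInterval h.continuousOn_snd hs ht)]
  ring

variable [IsLocallyFiniteMeasure μ]

theorem snd_eq_sub (h : IsSolution μ ν y g) {s t : ℝ} (hs : s ∈ I) (ht : t ∈ I) :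
    g t = g s - ν * ∫ x in s..t, y x ∂μ := by
  rw [h.snd_eq t ht, h.snd_eq s hs, ← intervalIntegral.integral_add_adjacent_intervals
    (intervalIntegrable_of_continuousOn_unitInterval h.continuousOn_fst unitInterval.zero_mem hs)
    (intervalIntegrable_of_continuousOn_unitInterval h.continuousOn_fst hs ht)]
  ring

variable [NullSingletonClass μ]

theorem reflect (h : IsSolution μ ν y g) (hμ : μ.map (fun x => 1 - x) = μ) :
    IsSolution μ ν (fun x => y (1 - x)) (fun x => -g (1 - x)) := by
  have hmaps : MapsTo (fun x : ℝ => 1 - x) I I := fun x hx => Icc.one_sub_mem hx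
  have hcont : ContinuousOn (fun x : ℝ => 1 - x) I := by fun_prop
  refine ⟨h.continuousOn_fst.comp hcont hmaps, (h.continuousOn_snd.comp hcont hmaps).neg,
    fun x hx => ?_, fun x hx => ?_⟩
  · rw [intervalIntegral.integral_neg, intervalIntegral.integral_comp_sub_left, sub_zero,
      h.fst_eq_add (Icc.one_sub_mem hx) unitInterval.one_mem]
    ring
  · rw [integral_comp_one_sub_eq hμ y hx.1, sub_zero,
      h.snd_eq_sub (Icc.one_sub_mem hx) unitInterval.one_mem]
    ring

end IsSolution

theorem transferMatrix_zero_zero_eq_one_one [IsLocallyFiniteMeasure μ] [NullSingletonClass μ]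
    (hμ : μ.map (fun x => 1 - x) = μ) (ν : ℝ) :
    transferMatrix μ ν 0 0 = transferMatrix μ ν 1 1 := by
  have hreflect := ((isSolution_solution (μ := μ) 1 0 ν).reflect hμ).transferMatrix_mulVec
  have hdet := det_transferMatrix (μ := μ) ν
  rw [Matrix.det_fin_two] at hdet
  have hfst := congrFun hreflect 0
  have hsnd := congrFun hreflect 1
  simp only [Matrix.mulVec, dotProduct, Fin.sum_univ_two, Matrix.cons_val_zero, Matrix.cons_val_one,
    sub_zero, sub_self, solution_zero_right, quasiDeriv_zero_right, neg_zero] at hfst hsnd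
  simp only [transferMatrix, Matrix.of_apply, Matrix.cons_val', Matrix.cons_val_zero,
    Matrix.cons_val_one, Matrix.cons_val_fin_one] at hdet hfst hsnd ⊢
  linear_combination -solution μ 1 0 ν 1 * hdet + quasiDeriv μ 0 1 ν 1 * hfst -
    solution μ 0 1 ν 1 * hsnd

end Reflection

section SelfSimilarity

open Polynomial.Chebyshev

theorem shear_mulVec {R : Type*} [CommRing R] (τ u v : R) :
    !![1, τ; 0, 1].mulVec ![u, v] = ![u + τ * v, v] := by
  ext i
  fin_cases i <;> simp [Matrix.mulVec, dotProduct]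

namespace IsCantorMeasure

variable {κ k : ℕ} {a b l : ℝ} {μ : Measure ℝ} {y g : ℝ → ℝ}

variable (h : IsCantorMeasure κ a b μ)

include h

theorem integral_cell (hk : k < κ) (f : ℝ → ℝ) {x : ℝ} (hx : x ∈ I) :
    ∫ t in (k * (a + b))..(k * (a + b) + a * x), f t ∂μ =
      (κ : ℝ)⁻¹ * ∫ t in (0 : ℝ)..x, f (k * (a + b) + a * t) ∂μ := by
  have ha := h.a_pos
  have hax : 0 ≤ a * x := mul_nonneg ha.le hx.1
  have hax' : a * x ≤ a := mul_le_of_le_one_right ha.le hx.2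
  have hpre : (fun t => k * (a + b) + a * t) ⁻¹' Ioc (k * (a + b)) (k * (a + b) + a * x) =
      Ioc 0 x := by
    ext t
    simp only [mem_preimage, mem_Ioc, lt_add_iff_pos_right, add_le_add_iff_left,
      mul_pos_iff_of_pos_left ha, mul_le_mul_iff_right₀ ha]
  have hemb : MeasurableEmbedding (fun t => k * (a + b) + a * t) :=
    (measurableEmbedding_addLeft (k * (a + b))).comp (measurableEmbedding_mulLeft₀ ha.ne')
  have hsub : Ioc (k * (a + b)) (k * (a + b) + a * x) ⊆ Ioc (k * (a + b)) (k * (a + b) + a) :=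
    Ioc_subset_Ioc_right (by linarith)
  rw [intervalIntegral.integral_of_le (by linarith), intervalIntegral.integral_of_le hx.1,
    ← inter_eq_left.2 hsub, ← Measure.restrict_restrict measurableSet_Ioc,
    h.restrict_cell k hk, Measure.restrict_smul, integral_smul_measure, hemb.setIntegral_map, hpre,
    ENNReal.toReal_inv, ENNReal.toReal_natCast, smul_eq_mul]

variable [IsLocallyFiniteMeasure μ]

theorem isSolution_cell (hk : k < κ) (hs : IsSolution μ l y g) :
    IsSolution μ (a * l / κ) (fun x => y (k * (a + b) + a * x))
      (fun x => a * g (k * (a + b) + a * x)) := by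
  have hmaps : MapsTo (fun x => k * (a + b) + a * x) I I := fun x hx => h.mem_cell hk hx
  have hcont : ContinuousOn (fun x => k * (a + b) + a * x) I := by fun_prop
  refine ⟨hs.continuousOn_fst.comp hcont hmaps,
    continuousOn_const.mul (hs.continuousOn_snd.comp hcont hmaps), fun x hx => ?_, fun x hx => ?_⟩
  · rw [hs.fst_eq_add (h.mem_cell hk unitInterval.zero_mem) (h.mem_cell hk hx),
      intervalIntegral.integral_const_mul, intervalIntegral.mul_integral_comp_add_mul]
  · rw [hs.snd_eq_sub (h.mem_cell hk unitInterval.zero_mem) (h.mem_cell hk hx), mul_zero, add_zero,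
      h.integral_cell hk y hx]
    ring

theorem snd_gap (hk : k + 1 < κ) (hs : IsSolution μ l y g) {x : ℝ}
    (hx : x ∈ Icc (k * (a + b) + a) ((k + 1) * (a + b))) : g x = g (k * (a + b) + a) := by
  have hl : k * (a + b) + a ∈ I := by
    simpa using h.mem_cell (Nat.lt_of_succ_lt hk) unitInterval.one_mem
  have hr : (k + 1) * (a + b) ∈ I := by simpa using h.mem_cell hk unitInterval.zero_mem
  rw [hs.snd_eq_sub hl ⟨hl.1.trans hx.1, hx.2.trans hr.2⟩, intervalIntegral.integral_of_le hx.1,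
    setIntegral_measure_zero _ (measure_mono_null (Ioc_subset_Ioc_right hx.2) (h.gap_null k hk)),
    mul_zero, sub_zero]

theorem fst_gap (hk : k + 1 < κ) (hs : IsSolution μ l y g) :
    y ((k + 1) * (a + b)) = y (k * (a + b) + a) + b * g (k * (a + b) + a) := by
  have hle : k * (a + b) + a ≤ (k + 1) * (a + b) := by linarith [h.b_pos]
  have hl : k * (a + b) + a ∈ I := by
    simpa using h.mem_cell (Nat.lt_of_succ_lt hk) unitInterval.one_mem
  have hr : (k + 1) * (a + b) ∈ I := by simpa using h.mem_cell hk unitInterval.zero_mem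
  rw [hs.fst_eq_add hl hr, intervalIntegral.integral_congr (g := fun _ => g (k * (a + b) + a))
    fun x hx => h.snd_gap hk hs (by rwa [uIcc_of_le hle] at hx), intervalIntegral.integral_const,
    smul_eq_mul]
  ring

variable [NullSingletonClass μ]

theorem transferMatrix_mulVec_cell (hk : k < κ) (hs : IsSolution μ l y g) :
    (transferMatrix μ (a * l / κ)).mulVec ![y (k * (a + b)), a * g (k * (a + b))] =
      ![y (k * (a + b) + a), a * g (k * (a + b) + a)] := by
  simpa using (h.isSolution_cell hk hs).transferMatrix_mulVec

theorem monodromy_pow_mulVec_cell_left (hk : k < κ) (hs : IsSolution μ l y g) :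
    (monodromy μ (b / a) (a * l / κ) ^ k).mulVec ![y 0, a * g 0] =
      ![y (k * (a + b)), a * g (k * (a + b))] := by
  induction k with
  | zero => simp
  | succ k ih =>
    have hk' := Nat.lt_of_succ_lt hk
    rw [pow_succ', ← Matrix.mulVec_mulVec, ih hk', monodromy, ← Matrix.mulVec_mulVec,
      h.transferMatrix_mulVec_cell hk' hs, Nat.cast_add_one, h.fst_gap hk hs,
      h.snd_gap hk hs (right_mem_Icc.2 (by linarith [h.b_pos])), shear_mulVec, ← mul_assoc,
      div_mul_cancel₀ _ h.a_pos.ne']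

theorem monodromy_pow_mulVec_one (hs : IsSolution μ l y g) :
    (monodromy μ (b / a) (a * l / κ) ^ κ).mulVec ![y 0, a * g 0] =
      ![y 1 + b * g 1, a * g 1] := by
  have hκ := h.two_le
  have hlast : ((κ - 1 : ℕ) : ℝ) * (a + b) + a = 1 := by
    rw [Nat.cast_pred (by omega), h.length_eq]
  have hκ₁ : κ - 1 < κ := by omega
  rw [← mul_pow_sub_one (by omega), ← Matrix.mulVec_mulVec, h.monodromy_pow_mulVec_cell_left hκ₁ hs,
    monodromy, ← Matrix.mulVec_mulVec, h.transferMatrix_mulVec_cell hκ₁ hs, hlast,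
    shear_mulVec, ← mul_assoc, div_mul_cancel₀ _ h.a_pos.ne']

theorem mul_transferMatrix_one_zero (l : ℝ) :
    a * transferMatrix μ l 1 0 =
      (U ℝ (κ - 1)).eval (discriminant μ (b / a) (a * l / κ)) *
        transferMatrix μ (a * l / κ) 1 0 := by
  have htrace : (monodromy μ (b / a) (a * l / κ)).trace =
      2 * discriminant μ (b / a) (a * l / κ) := by
    rw [discriminant, mul_div_cancel₀ _ two_ne_zero]
  have hsnd := congrFun (h.monodromy_pow_mulVec_one (isSolution_solution (μ := μ) 1 0 l)) 1
  rw [matrix_pow_eq_chebyshev_U_smul_sub (det_monodromy _ _) htrace, solution_zero_right,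
    quasiDeriv_zero_right, mul_zero] at hsnd
  calc a * transferMatrix μ l 1 0 = a * quasiDeriv μ 1 0 l 1 := by simp [transferMatrix]
    _ = _ := hsnd.symm
    _ = _ := by
      rw [Matrix.mulVec, dotProduct, Fin.sum_univ_two, Matrix.sub_apply, Matrix.smul_apply,
        monodromy_one_zero]
      simp

end IsCantorMeasure

end SelfSimilarity

section Eigenvalues

variable {μ : Measure ℝ} [NullSingletonClass μ] {γ₀ γ₁ ν : ℝ}

theorem isEigen_iff_exists_isSolution :
    IsEigen μ γ₀ γ₁ ν ↔ ∃ y g, IsSolution μ ν y g ∧ (∃ x ∈ I, y x ≠ 0) ∧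
      g 0 - γ₀ * y 0 = 0 ∧ g 1 + γ₁ * y 1 = 0 := by
  have hIcc (y : ℝ → ℝ) {x : ℝ} (hx : x ∈ I) : ∫ t in Icc 0 x, y t ∂μ = ∫ t in 0..x, y t ∂μ := by
    rw [integral_Icc_eq_integral_Ioc, intervalIntegral.integral_of_le hx.1]
  constructor
  · rintro ⟨y, g, hy, hg, hne, hfst, hsnd, hbdry⟩
    exact ⟨y, g, ⟨hy, hg, hfst, fun x hx => by rw [hsnd x hx, hIcc y hx]⟩, hne, hbdry⟩
  · rintro ⟨y, g, hs, hne, hbdry⟩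
    exact ⟨y, g, hs.continuousOn_fst, hs.continuousOn_snd, hne, hs.fst_eq,
      fun x hx => by rw [hs.snd_eq x hx, hIcc y hx], hbdry⟩

variable [IsLocallyFiniteMeasure μ]

theorem isEigen_zero_left_iff :
    IsEigen μ 0 γ₁ ν ↔ transferMatrix μ ν 1 0 + γ₁ * transferMatrix μ ν 0 0 = 0 := by
  rw [isEigen_iff_exists_isSolution]
  constructor
  · rintro ⟨y, g, hs, ⟨x, hx, hyx⟩, hleft, hright⟩
    rw [zero_mul, sub_zero] at hleft
    rw [hs.eqOn_quasiDeriv unitInterval.one_mem, hs.eqOn_solution unitInterval.one_mem, hleft,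
      solution_eq_linear_combination _ _ unitInterval.one_mem,
      quasiDeriv_eq_linear_combination _ _ unitInterval.one_mem] at hright
    have hy₀ : y 0 ≠ 0 := fun hy₀ => hyx <| by
      rw [hs.eqOn_solution hx, hy₀, hleft, solution_eq_linear_combination _ _ hx]
      ring
    refine (mul_eq_zero_iff_left hy₀).1 ?_
    simp only [transferMatrix, Matrix.of_apply, Matrix.cons_val', Matrix.cons_val_zero,
      Matrix.cons_val_one, Matrix.cons_val_fin_one]
    linear_combination hright
  · intro hν
    refine ⟨_, _, isSolution_solution 1 0 ν, ⟨0, unitInterval.zero_mem, ?_⟩, ?_, ?_⟩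
    · rw [solution_zero_right]
      exact one_ne_zero
    · rw [quasiDeriv_zero_right, zero_mul, sub_zero]
    · simpa [transferMatrix] using hν

theorem isEigen_neumann_iff : IsEigen μ 0 0 ν ↔ transferMatrix μ ν 1 0 = 0 := by
  rw [isEigen_zero_left_iff, zero_mul, add_zero]

theorem isEigen_robin_iff {τ : ℝ} (hμ : μ.map (fun x => 1 - x) = μ) (hτ : τ ≠ 0) :
    IsEigen μ 0 (2 / τ) ν ↔ discriminant μ τ ν = 0 := by
  have hscale : transferMatrix μ ν 1 0 + 2 / τ * transferMatrix μ ν 0 0 =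
      2 / τ * discriminant μ τ ν := by
    rw [discriminant_eq, ← transferMatrix_zero_zero_eq_one_one hμ]
    field_simp
    ring
  rw [isEigen_zero_left_iff, hscale, mul_eq_zero_iff_left (div_ne_zero two_ne_zero hτ)]

theorem isHillPair_transferMatrix_discriminant (hμ : μ.map (fun x => 1 - x) = μ)
    (hpos : μ (Ioc 0 1) ≠ 0) (τ : ℝ) :
    IsHillPair (fun ν => transferMatrix μ ν 1 0) (discriminant μ τ) where
  differentiable_fst ν := (hasDerivAt_transferMatrix 1 0 ν).differentiableAt
  differentiable_snd ν := (hasDerivAt_discriminant τ ν).differentiableAt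
  sq_eq_one {ν} hν := by
    have hdet := det_transferMatrix (μ := μ) ν
    rw [Matrix.det_fin_two, hν, ← transferMatrix_zero_zero_eq_one_one hμ] at hdet
    rw [discriminant_eq, hν, ← transferMatrix_zero_zero_eq_one_one hμ]
    linear_combination hdet
  mul_deriv_neg {ν} hν := by
    have hdet := det_transferMatrix (μ := μ) ν
    rw [Matrix.det_fin_two, hν, ← transferMatrix_zero_zero_eq_one_one hμ] at hdet
    rw [(hasDerivAt_transferMatrix 1 0 ν).deriv, discriminant_eq, Matrix.mul_apply,
      Fin.sum_univ_two, hν, ← transferMatrix_zero_zero_eq_one_one hμ]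
    linear_combination crossGram_self_one_zero_neg hpos ν + crossGram μ ν ν 1 0 * hdet
  mul_deriv_pos := transferMatrix_mul_deriv_discriminant_pos hpos

theorem discriminant_zero_right (τ : ℝ) : discriminant μ τ 0 = 1 := by
  rw [discriminant_eq, transferMatrix_zero]
  simp

theorem apply_zero_eq_zero_of_range_eq_neumann {lam : ℕ → ℝ} (hlam : StrictMono lam)
    (hlamrange : range lam = {ν | transferMatrix μ ν 1 0 = 0}) (hpos : μ (Ioc 0 1) ≠ 0) :
    lam 0 = 0 := by
  obtain ⟨n, hn⟩ : (0 : ℝ) ∈ range lam := by simp [hlamrange, transferMatrix_zero]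
  have hmem : lam 0 ∈ {ν | transferMatrix μ ν 1 0 = 0} := hlamrange ▸ mem_range_self 0
  exact le_antisymm (hn ▸ hlam.monotone n.zero_le)
    (nonneg_of_transferMatrix_one_zero_eq_zero hpos hmem)

end Eigenvalues

theorem IsCantorMeasure.neumann_apply_add_half_eq_mul {κ : ℕ} {a b : ℝ} {μ : Measure ℝ}
    [IsLocallyFiniteMeasure μ] [NullSingletonClass μ] (h : IsCantorMeasure κ a b μ)
    (hpos : μ (Ioc 0 1) ≠ 0) (hκ : Even κ) {lam mu : ℕ → ℝ} (hlam : StrictMono lam)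
    (hlamrange : range lam = {ν | IsEigen μ 0 0 ν}) (hmu : StrictMono mu)
    (hmurange : range mu = {ν | IsEigen μ 0 (2 * a / b) ν}) (n : ℕ) :
    lam (κ * n + κ / 2) = κ / a * mu n := by
  have ha := h.a_pos
  have hb := h.b_pos
  have hκ₀ : 0 < κ := h.two_le.trans_lt' zero_lt_two
  simp only [isEigen_neumann_iff] at hlamrange
  rw [← div_div_eq_mul_div] at hmurange
  simp only [isEigen_robin_iff h.map_one_sub (div_pos hb ha).ne'] at hmurange
  refine (isHillPair_transferMatrix_discriminant h.map_one_sub hpos (b / a)).apply_add_half_eq_mul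
    hlam hlamrange (apply_zero_eq_zero_of_range_eq_neumann hlam hlamrange hpos)
    (discriminant_zero_right _) hmu hmurange hκ₀.ne' hκ ha.ne' (by positivity) (fun x => ?_) n
  rw [h.mul_transferMatrix_one_zero, show a * (κ / a * x) / κ = x by field_simp]

end KreinString

theorem mixed_problem_spectral_periodicity (κ : ℕ) (a b : ℝ) (hκ : 2 ≤ κ)
    (hκeven : Even κ)
    (ha : 0 < a) (ha' : a < 1 / κ) (hb : b = (1 - κ * a) / (κ - 1))
    (P : ℝ → ℝ) (hP : CantorType κ a b P) (hPmono : MonotoneOn P (Set.Icc 0 1))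
    (μ : Measure ℝ)
    (hμ : ∀ x ∈ Set.Icc (0 : ℝ) 1, μ (Set.Icc 0 x) = ENNReal.ofReal (P x))
    (hμc : μ (Set.Icc (0 : ℝ) 1)ᶜ = 0)
    (lam : ℕ → ℝ) (hlam : StrictMono lam)
    (hlamrange : Set.range lam = {l : ℝ | IsEigen μ 0 0 l})
    (mu : ℕ → ℝ) (hmu : StrictMono mu)
    (hmurange : Set.range mu = {l : ℝ | IsEigen μ 0 (2 * a / b) l}) :
    ∀ n : ℕ, lam (κ * n + κ / 2) = (κ / a) * mu n := by
  have hcantor := (KreinString.isCantorLayout_of_lt hκ ha ha' hb).isCantorFunction hP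
  have := KreinString.isProbabilityMeasure_of_measure_Icc hcantor.map_one hμ hμc
  have hcdf := KreinString.cdf_eq_apply_projIcc hcantor.map_zero hPmono hμ hμc
  have := hcantor.nullSingletonClass hcdf
  have hpos : μ (Set.Ioc 0 1) ≠ 0 := by
    rw [← measure_congr Ioc_ae_eq_Icc.symm, hμ 1 unitInterval.one_mem, hcantor.map_one]
    simp
  exact (hcantor.isCantorMeasure hcdf).neumann_apply_add_half_eq_mul hpos hκeven hlam hlamrange
    hmu hmurange
end
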